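/- Let α,β>−1 and let w be an even weight on (−π,π) belonging to A_1^{α,β}. Then the maximal operator ℍ*^{α,β}f(θ)=sup_{t>0}|ℍ_t^{α,β}f(θ)| is of weak type (1,1) with respect to w dμ_{α,β}: there exists a constant C such that for all f∈L¹(w dμ_{α,β}) and all λ>0, ∫_{{θ∈(−π,π): ℍ*^{α,β}f(θ)>λ}} w dμ_{α,β} ≤ (C/λ)∫_{(−π,π)} |f| w dμ_{α,β}. -/

import Mathlib

open MeasureTheory Real Set
open scoped ENNReal

noncomputable section

/-- The classical Jacobi polynomial `P_n^{α,β}`. -/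
def jacobiP (α β : ℝ) (n : ℕ) (x : ℝ) : ℝ :=
  ∑ m ∈ Finset.range (n + 1),
    (Real.Gamma (α + n + 1) * Real.Gamma (α + β + n + m + 1)) /
      ((m.factorial : ℝ) * ((n - m).factorial : ℝ) * Real.Gamma (α + β + n + 1) *
        Real.Gamma (α + m + 1)) * ((x - 1) / 2) ^ m

/-- `Ψ^{α,β}(θ) = |sin(θ/2)|^{α+1/2} (cos(θ/2))^{β+1/2}`. -/
def jPsi (α β θ : ℝ) : ℝ := |Real.sin (θ / 2)| ^ (α + 1 / 2) * Real.cos (θ / 2) ^ (β + 1 / 2)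

/-- The measure `μ_{α,β}` on `(−π, π)`, with density `(Ψ^{α,β})²` w.r.t. Lebesgue measure. -/
def jacobiMeasure (α β : ℝ) : Measure ℝ :=
  (volume.restrict (Ioo (-π) π)).withDensity fun θ => ENNReal.ofReal (jPsi α β θ ^ 2)

/-- The restriction `μ⁺_{α,β}` of `μ_{α,β}` to `(0, π)`. -/
def jacobiMeasurePlus (α β : ℝ) : Measure ℝ := (jacobiMeasure α β).restrict (Ioo 0 π)

/-- The normalizing constant `c_n^{α,β}` making `𝒫_n^{α,β}` have unit `L²(μ⁺)` norm. -/
def cJ (α β : ℝ) (n : ℕ) : ℝ :=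
  (∫ θ, jacobiP α β n (Real.cos θ) ^ 2 ∂(jacobiMeasurePlus α β)) ^ (-(1 / 2) : ℝ)

/-- The normalized trigonometric Jacobi polynomial `𝒫_n^{α,β}(θ)`. -/
def trigP (α β : ℝ) (n : ℕ) (θ : ℝ) : ℝ := cJ α β n * jacobiP α β n (Real.cos θ)

/-- The eigenvalue `λ_n^{α,β} = (n + (α+β+1)/2)²`. -/
def jLam (α β : ℝ) (n : ℕ) : ℝ := ((n : ℝ) + (α + β + 1) / 2) ^ 2

/-- The symmetrized system `Φ_n^{α,β}`. -/
def symPhi (α β : ℝ) (n : ℕ) (θ : ℝ) : ℝ :=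
  if Even n then (Real.sqrt 2)⁻¹ * trigP α β (n / 2) θ
  else (Real.sqrt 2)⁻¹ * (Real.sin θ / 2) * trigP (α + 1) (β + 1) ((n - 1) / 2) θ

/-- The Jacobi functions `φ_n^{α,β} = Ψ^{α,β} 𝒫_n^{α,β}`. -/
def phiFun (α β : ℝ) (n : ℕ) (θ : ℝ) : ℝ := jPsi α β θ * trigP α β n θ

/-- The symmetrized Jacobi function system `Θ_n^{α,β}`. -/
def jTheta (α β : ℝ) (n : ℕ) (θ : ℝ) : ℝ :=
  if Even n then (Real.sqrt 2)⁻¹ * phiFun α β (n / 2) θ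
  else (Real.sqrt 2)⁻¹ * Real.sign θ * phiFun (α + 1) (β + 1) ((n - 1) / 2) θ

/-- The symmetrized Jacobi–Poisson semigroup `ℍ_t^{α,β}f(θ)` (polynomial setting). -/
def symH (α β : ℝ) (f : ℝ → ℝ) (t θ : ℝ) : ℝ :=
  ∑' n : ℕ, Real.exp (-t * Real.sqrt (jLam α β ((n + 1) / 2))) *
    (∫ φ, f φ * symPhi α β n φ ∂(jacobiMeasure α β)) * symPhi α β n θ

/-- The symmetrized Jacobi–Poisson semigroup `H̄_t^{α,β}f(θ)` (function setting). -/
def symHbar (α β : ℝ) (f : ℝ → ℝ) (t θ : ℝ) : ℝ :=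
  ∑' n : ℕ, Real.exp (-t * Real.sqrt (jLam α β ((n + 1) / 2))) *
    (∫ φ in Ioo (-π) π, f φ * jTheta α β n φ) * jTheta α β n θ

/-- The non-symmetrized Jacobi–Poisson semigroup `ℋ_t^{α,β}f(θ)` (polynomial setting). -/
def jacH (α β : ℝ) (f : ℝ → ℝ) (t θ : ℝ) : ℝ :=
  ∑' n : ℕ, Real.exp (-t * Real.sqrt (jLam α β n)) *
    (∫ φ, f φ * trigP α β n φ ∂(jacobiMeasurePlus α β)) * trigP α β n θ

/-- The non-symmetrized Jacobi–Poisson semigroup `𝓗̄_t^{α,β}f(θ)` (function setting). -/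
def jacHbar (α β : ℝ) (f : ℝ → ℝ) (t θ : ℝ) : ℝ :=
  ∑' n : ℕ, Real.exp (-t * Real.sqrt (jLam α β n)) *
    (∫ φ in Ioo 0 π, f φ * phiFun α β n φ) * phiFun α β n θ

/-- The symmetrized derivative `𝔻_{α,β}`. -/
def symD (α β : ℝ) (f : ℝ → ℝ) : ℝ → ℝ := fun θ =>
  deriv f θ + (α - β + (α + β + 1) * Real.cos θ) / Real.sin θ * ((f θ - f (-θ)) / 2)

/-- The symmetrized derivative `D̄_{α,β}` (function setting). -/
def symDbar (α β : ℝ) (f : ℝ → ℝ) : ℝ → ℝ := fun θ =>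
  deriv f θ -
    ((2 * α + 1) / 4 * (Real.cos (θ / 2) / Real.sin (θ / 2)) -
      (2 * β + 1) / 4 * Real.tan (θ / 2)) * f (-θ)

/-- The derivative `D_{α,β}` (non-symmetrized function setting). -/
def jacD (α β : ℝ) (f : ℝ → ℝ) : ℝ → ℝ := fun θ =>
  deriv f θ - (2 * α + 1) / 4 * (Real.cos (θ / 2) / Real.sin (θ / 2)) * f θ +
    (2 * β + 1) / 4 * Real.tan (θ / 2) * f θ

/-- `δ*_{α,β} = −d/dθ − (α+1/2)cot(θ/2) + (β+1/2)tan(θ/2)`. -/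
def delStar (α β : ℝ) (f : ℝ → ℝ) : ℝ → ℝ := fun θ =>
  -deriv f θ - (α + 1 / 2) * (Real.cos (θ / 2) / Real.sin (θ / 2)) * f θ +
    (β + 1 / 2) * Real.tan (θ / 2) * f θ

/-- `δ_N^even`: `N` alternating factors, rightmost (first applied) one being `δ = d/dθ`. -/
def deltaEven (α β : ℝ) : ℕ → (ℝ → ℝ) → ℝ → ℝ
  | 0 => fun f => f
  | N + 1 => fun f => (if N % 2 = 0 then deriv else delStar α β) (deltaEven α β N f)

/-- `δ_N^odd`: `N` alternating factors, rightmost (first applied) one being `δ*_{α,β}`. -/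
def deltaOdd (α β : ℝ) : ℕ → (ℝ → ℝ) → ℝ → ℝ
  | 0 => fun f => f
  | N + 1 => fun f => (if N % 2 = 0 then delStar α β else deriv) (deltaOdd α β N f)

/-- The Jacobi–Poisson kernel `H_t^{α,β}(θ,φ)` (even part of the symmetrized kernel). -/
def jHker (α β t θ φ : ℝ) : ℝ :=
  (1 / 2) * ∑' n : ℕ, Real.exp (-t * Real.sqrt (jLam α β n)) * trigP α β n θ * trigP α β n φ

/-- The kernel `H̃_t^{α,β}(θ,φ)` (odd part of the symmetrized kernel). -/
def jHtil (α β t θ φ : ℝ) : ℝ :=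
  (1 / 8) * Real.sin θ * Real.sin φ *
    ∑' n : ℕ, Real.exp (-t * Real.sqrt (jLam α β (n + 1))) *
      trigP (α + 1) (β + 1) n θ * trigP (α + 1) (β + 1) n φ

/-- `μ⁺_{α,β}(B(θ,r))` where `B(θ,r) = (θ−r, θ+r) ∩ (0,π)`. -/
def ballMeasure (α β θ r : ℝ) : ℝ≥0∞ := jacobiMeasurePlus α β (Ioo (θ - r) (θ + r))

/-- The Muckenhoupt class `A_p^{α,β}` (`1 < p < ∞`) on `(−π,π)` w.r.t. `μ_{α,β}`. -/
def IsApWeight (α β p : ℝ) (w : ℝ → ℝ) : Prop :=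
  (∀ θ, 0 ≤ w θ) ∧
    ∃ C : ℝ, ∀ a b : ℝ, -π ≤ a → a ≤ b → b ≤ π →
      (∫⁻ θ in Ioo a b, ENNReal.ofReal (w θ) ∂(jacobiMeasure α β)) *
          (∫⁻ θ in Ioo a b, ENNReal.ofReal (w θ ^ (-1 / (p - 1))) ∂(jacobiMeasure α β)) ^
            (p - 1) ≤
        ENNReal.ofReal C * jacobiMeasure α β (Ioo a b) ^ p

/-- The Muckenhoupt class `A_1^{α,β}` on `(−π,π)` w.r.t. `μ_{α,β}`. -/
def IsA1Weight (α β : ℝ) (w : ℝ → ℝ) : Prop :=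
  (∀ θ, 0 ≤ w θ) ∧
    ∃ C : ℝ, ∀ a b : ℝ, -π ≤ a → a ≤ b → b ≤ π →
      ∫⁻ θ in Ioo a b, ENNReal.ofReal (w θ) ∂(jacobiMeasure α β) ≤
        ENNReal.ofReal C *
          essInf (fun θ => ENNReal.ofReal (w θ)) ((jacobiMeasure α β).restrict (Ioo a b)) *
          jacobiMeasure α β (Ioo a b)

/-- The Muckenhoupt class `(A_p^{α,β})⁺` (`1 < p < ∞`) on `(0,π)` w.r.t. `μ⁺_{α,β}`. -/
def IsApWeightPlus (α β p : ℝ) (w : ℝ → ℝ) : Prop :=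
  (∀ θ, 0 ≤ w θ) ∧
    ∃ C : ℝ, ∀ a b : ℝ, 0 ≤ a → a ≤ b → b ≤ π →
      (∫⁻ θ in Ioo a b, ENNReal.ofReal (w θ) ∂(jacobiMeasurePlus α β)) *
          (∫⁻ θ in Ioo a b, ENNReal.ofReal (w θ ^ (-1 / (p - 1))) ∂(jacobiMeasurePlus α β)) ^
            (p - 1) ≤
        ENNReal.ofReal C * jacobiMeasurePlus α β (Ioo a b) ^ p

/-- The Muckenhoupt class `(A_1^{α,β})⁺` on `(0,π)` w.r.t. `μ⁺_{α,β}`. -/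
def IsA1WeightPlus (α β : ℝ) (w : ℝ → ℝ) : Prop :=
  (∀ θ, 0 ≤ w θ) ∧
    ∃ C : ℝ, ∀ a b : ℝ, 0 ≤ a → a ≤ b → b ≤ π →
      ∫⁻ θ in Ioo a b, ENNReal.ofReal (w θ) ∂(jacobiMeasurePlus α β) ≤
        ENNReal.ofReal C *
          essInf (fun θ => ENNReal.ofReal (w θ)) ((jacobiMeasurePlus α β).restrict (Ioo a b)) *
          jacobiMeasurePlus α β (Ioo a b)

/-- The double power weight `w_{r,s}(θ) = |sin(θ/2)|^r (cos(θ/2))^s`. -/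
def wrs (r s θ : ℝ) : ℝ := |Real.sin (θ / 2)| ^ r * Real.cos (θ / 2) ^ s


/-- The symmetrized Jacobi–Poisson semigroup maximal operator `ℍ*^{α,β}`. -/
def symHStar (α β : ℝ) (f : ℝ → ℝ) (θ : ℝ) : ℝ≥0∞ :=
  ⨆ (t : ℝ) (_ : 0 < t), ENNReal.ofReal |symH α β f t θ|

section

lemma jm_measurable_dens (α β : ℝ) : Measurable fun θ => ENNReal.ofReal (jPsi α β θ ^ 2) := by
  unfold jPsi; fun_prop

lemma jmPlus_eq (α β : ℝ) : jacobiMeasurePlus α β =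
    (volume.restrict (Ioo 0 π)).withDensity fun θ => ENNReal.ofReal (jPsi α β θ ^ 2) := by
  unfold jacobiMeasurePlus jacobiMeasure
  rw [restrict_withDensity measurableSet_Ioo, Measure.restrict_restrict measurableSet_Ioo]
  congr 2
  rw [Ioo_inter_Ioo]; congr 1
  · simp [Real.pi_pos.le]
  · simp

lemma jPsi_sq {α β θ : ℝ} (h : θ ∈ Ioo 0 π) : jPsi α β θ ^ 2 =
    Real.sin (θ / 2) ^ (2 * α + 1) * Real.cos (θ / 2) ^ (2 * β + 1) := by
  have hs : 0 < Real.sin (θ / 2) := Real.sin_pos_of_pos_of_lt_pi (by linarith [h.1]) (by linarith [h.2, Real.pi_pos])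
  have hc : 0 < Real.cos (θ / 2) := Real.cos_pos_of_mem_Ioo ⟨by linarith [h.1, Real.pi_pos], by linarith [h.2]⟩
  unfold jPsi
  rw [abs_of_pos hs, mul_pow, ← Real.rpow_natCast, ← Real.rpow_natCast, ← Real.rpow_mul hs.le, ← Real.rpow_mul hc.le]
  congr 2 <;> push_cast <;> ring

lemma sin_half_image : (fun θ : ℝ => Real.sin (θ / 2) ^ 2) '' Ioo 0 π = Ioo 0 1 := by
  ext x; constructor
  · rintro ⟨θ, h, rfl⟩
    have hs : 0 < Real.sin (θ / 2) := Real.sin_pos_of_pos_of_lt_pi (by linarith [h.1]) (by linarith [h.2, Real.pi_pos])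
    have hc : 0 < Real.cos (θ / 2) := Real.cos_pos_of_mem_Ioo ⟨by linarith [h.1, Real.pi_pos], by linarith [h.2]⟩
    have := Real.sin_sq_add_cos_sq (θ / 2)
    exact ⟨by positivity, by dsimp only; nlinarith⟩
  · rintro ⟨h0, h1⟩
    have hs0 : 0 < √x := Real.sqrt_pos.2 h0
    have hs1 : √x < 1 := by rw [Real.sqrt_lt' one_pos]; simpa using h1
    refine ⟨2 * Real.arcsin (√x), ⟨?_, ?_⟩, ?_⟩
    · have := Real.arcsin_pos.2 hs0; linarith
    · have := Real.arcsin_lt_pi_div_two.2 hs1; linarith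
    · simp only [mul_div_cancel_left₀ _ (two_ne_zero' ℝ)]
      rw [Real.sin_arcsin (by linarith) hs1.le, Real.sq_sqrt h0.le]

lemma beta_lint {u v : ℝ} (hu : 0 < u) (hv : 0 < v) :
    ∫⁻ x in Ioo (0:ℝ) 1, ENNReal.ofReal (x ^ (u - 1) * (1 - x) ^ (v - 1)) =
      ENNReal.ofReal (Real.Gamma u * Real.Gamma v / Real.Gamma (u + v)) := by
  have h1 := ProbabilityTheory.lintegral_betaPDF_eq_one hu hv
  rw [ProbabilityTheory.lintegral_betaPDF] at h1
  have hb := ProbabilityTheory.beta_pos hu hv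
  have h2 : ∀ x : ℝ, ENNReal.ofReal (1 / ProbabilityTheory.beta u v * x ^ (u - 1) * (1 - x) ^ (v - 1))
      = ENNReal.ofReal (1 / ProbabilityTheory.beta u v) * ENNReal.ofReal (x ^ (u - 1) * (1 - x) ^ (v - 1)) := by
    intro x; rw [← ENNReal.ofReal_mul (by positivity), mul_assoc]
  simp_rw [h2] at h1
  rw [lintegral_const_mul _ (by fun_prop)] at h1
  change _ = ENNReal.ofReal (ProbabilityTheory.beta u v)
  have h3 : ENNReal.ofReal (1 / ProbabilityTheory.beta u v) * ENNReal.ofReal (ProbabilityTheory.beta u v) = 1 := by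
    rw [← ENNReal.ofReal_mul (by positivity)]; rw [one_div, inv_mul_cancel₀ hb.ne']; simp
  have h4 : ENNReal.ofReal (1 / ProbabilityTheory.beta u v) ≠ 0 := by
    simp only [ne_eq, ENNReal.ofReal_eq_zero, not_le]; positivity
  exact (ENNReal.mul_right_inj h4 ENNReal.ofReal_ne_top).1 (h1.trans h3.symm)

lemma moment_lint {α β : ℝ} (hα : -1 < α) (hβ : -1 < β) (p q : ℕ) :
    ∫⁻ θ, ENNReal.ofReal ((Real.sin (θ / 2) ^ 2) ^ p * (1 - Real.sin (θ / 2) ^ 2) ^ q) ∂(jacobiMeasurePlus α β)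
      = ENNReal.ofReal (Real.Gamma (α + 1 + p) * Real.Gamma (β + 1 + q) / Real.Gamma (α + β + 2 + p + q)) := by
  have hp : (0:ℝ) ≤ p := p.cast_nonneg
  have hq : (0:ℝ) ≤ q := q.cast_nonneg
  have h := beta_lint (u := α + 1 + p) (v := β + 1 + q) (by linarith) (by linarith)
  rw [show α + β + 2 + p + q = α + 1 + p + (β + 1 + q) by ring, ← h, ← sin_half_image,
    lintegral_image_eq_lintegral_abs_deriv_mul (f' := fun θ => Real.sin (θ / 2) * Real.cos (θ / 2)) measurableSet_Ioo,
    jmPlus_eq, lintegral_withDensity_eq_lintegral_mul _ (jm_measurable_dens α β) (by fun_prop)]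
  · refine setLIntegral_congr_fun measurableSet_Ioo ?_
    intro θ hθ
    have hs : 0 < Real.sin (θ / 2) := Real.sin_pos_of_pos_of_lt_pi (by linarith [hθ.1]) (by linarith [hθ.2, Real.pi_pos])
    have hc : 0 < Real.cos (θ / 2) := Real.cos_pos_of_mem_Ioo ⟨by linarith [hθ.1, Real.pi_pos], by linarith [hθ.2]⟩
    simp only [Pi.mul_apply]
    rw [jPsi_sq hθ, ← ENNReal.ofReal_mul (by positivity), ← ENNReal.ofReal_mul (by positivity), abs_of_pos (by positivity)]
    congr 1
    rw [show 1 - Real.sin (θ / 2) ^ 2 = Real.cos (θ/2) ^ 2 by rw [Real.cos_sq']]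
    generalize Real.sin (θ / 2) = s at *
    generalize Real.cos (θ / 2) = c at *
    rw [← Real.rpow_natCast (s ^ 2), ← Real.rpow_natCast (c ^ 2), ← Real.rpow_natCast s 2, ← Real.rpow_natCast c 2,
      ← Real.rpow_mul hs.le, ← Real.rpow_mul hs.le, ← Real.rpow_mul hc.le, ← Real.rpow_mul hc.le]
    have e1 : ∀ (x : ℝ) (hx : 0 < x) (a : ℝ) (r : ℕ), x ^ (2 * a + 1) * x ^ (((2:ℕ):ℝ) * r) = x * x ^ (((2:ℕ):ℝ) * (a + 1 + r - 1)) := by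
      intro x hx a r
      rw [← Real.rpow_add hx]
      nth_rw 2 [← Real.rpow_one x]
      rw [← Real.rpow_add hx]; congr 1; push_cast; ring
    linear_combination (c ^ (2 * β + 1) * c ^ (((2:ℕ):ℝ) * q)) * e1 s hs α p + (s * s ^ (((2:ℕ):ℝ) * (α + 1 + p - 1))) * e1 c hc β q
  · intro θ _
    have := ((Real.hasDerivAt_sin (θ / 2)).comp θ ((hasDerivAt_id θ).div_const 2)).pow 2
    refine HasDerivAt.hasDerivWithinAt ?_
    convert! this using 1
    simp; ring
  · intro x hx y hy hxy
    have hs : 0 < Real.sin (x / 2) := Real.sin_pos_of_pos_of_lt_pi (by linarith [hx.1]) (by linarith [hx.2, Real.pi_pos])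
    have hs' : 0 < Real.sin (y / 2) := Real.sin_pos_of_pos_of_lt_pi (by linarith [hy.1]) (by linarith [hy.2, Real.pi_pos])
    have h2 : Real.sin (x / 2) = Real.sin (y / 2) := by
      rwa [← sq_eq_sq₀ hs.le hs'.le]
    have := Real.injOn_sin ⟨by linarith [hx.1, Real.pi_pos], by linarith [hx.2]⟩ ⟨by linarith [hy.1, Real.pi_pos], by linarith [hy.2]⟩ h2
    linarith

/-- Gamma-type factor for the moments. -/
def jmom (α β : ℝ) (p q : ℕ) : ℝ :=
  Real.Gamma (α + 1 + p) * Real.Gamma (β + 1 + q) / Real.Gamma (α + β + 2 + p + q)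

lemma jmom_pos {α β : ℝ} (hα : -1 < α) (hβ : -1 < β) (p q : ℕ) : 0 < jmom α β p q := by
  have hp : (0:ℝ) ≤ p := p.cast_nonneg
  have hq : (0:ℝ) ≤ q := q.cast_nonneg
  exact div_pos (mul_pos (Real.Gamma_pos_of_pos (by linarith)) (Real.Gamma_pos_of_pos (by linarith)))
    (Real.Gamma_pos_of_pos (by linarith))

instance jmPlus_finite_fact {α β : ℝ} [h : Fact (-1 < α)] [h' : Fact (-1 < β)] :
    IsFiniteMeasure (jacobiMeasurePlus α β) := by
  have := moment_lint h.out h'.out 0 0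
  simp at this
  exact ⟨by rw [this]; exact ENNReal.ofReal_lt_top⟩

lemma moment_int {α β : ℝ} (hα : -1 < α) (hβ : -1 < β) (p q : ℕ) :
    ∫ θ, ((Real.sin (θ / 2) ^ 2) ^ p * (1 - Real.sin (θ / 2) ^ 2) ^ q) ∂(jacobiMeasurePlus α β)
      = jmom α β p q := by
  have hn : ∀ θ : ℝ, 0 ≤ (Real.sin (θ / 2) ^ 2) ^ p * (1 - Real.sin (θ / 2) ^ 2) ^ q := by
    intro θ
    rw [← Real.cos_sq']; positivity
  rw [integral_eq_lintegral_of_nonneg_ae (Filter.Eventually.of_forall hn) (by fun_prop), moment_lint hα hβ,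
    ENNReal.toReal_ofReal]
  · rfl
  · exact (jmom_pos hα hβ p q).le
end

section
set_option linter.unusedSectionVars false

open Polynomial in
lemma jpoly_integrable {α β : ℝ} [h : Fact (-1 < α)] [h' : Fact (-1 < β)] (p : ℝ[X]) :
    Integrable (fun θ => p.eval (Real.sin (θ / 2) ^ 2)) (jacobiMeasurePlus α β) := by
  obtain ⟨C, hC⟩ := (isCompact_Icc (a := (0:ℝ)) (b := 1)).exists_bound_of_continuousOn p.continuous.continuousOn
  refine Integrable.of_bound (C := C) ?_ (Filter.Eventually.of_forall fun θ => hC _ ⟨by positivity, Real.sin_sq_le_one _⟩)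
  exact (p.continuous.comp (by fun_prop)).aestronglyMeasurable

open Polynomial in
/-- Integration of polynomials in `sin²(θ/2)` against `μ⁺`. -/
def jL (α β : ℝ) [h : Fact (-1 < α)] [h' : Fact (-1 < β)] : ℝ[X] →ₗ[ℝ] ℝ where
  toFun p := ∫ θ, p.eval (Real.sin (θ / 2) ^ 2) ∂(jacobiMeasurePlus α β)
  map_add' p q := by
    simp only [eval_add]
    exact integral_add (jpoly_integrable p) (jpoly_integrable q)
  map_smul' c p := by
    simp only [eval_smul, smul_eq_mul, RingHom.id_apply]
    exact integral_const_mul _ _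

section
open Polynomial
variable {α β : ℝ} [hα : Fact (-1 < α)] [hβ : Fact (-1 < β)]

lemma jL_apply (p : ℝ[X]) : jL α β p = ∫ θ, p.eval (Real.sin (θ / 2) ^ 2) ∂(jacobiMeasurePlus α β) := rfl

lemma jL_mom (p q : ℕ) : jL α β (X ^ p * (1 - X) ^ q) = jmom α β p q := by
  rw [jL_apply, ← moment_int hα.out hβ.out]; simp

lemma jL_posdef {p : ℝ[X]} (h : jL α β (p * p) = 0) : p = 0 := by
  by_contra hp
  rw [jL_apply, integral_eq_zero_iff_of_nonneg_ae
    (Filter.Eventually.of_forall fun θ => by simp [mul_self_nonneg]) (jpoly_integrable _)] at h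
  have h1 : ∀ᵐ θ ∂(jacobiMeasurePlus α β), p.eval (Real.sin (θ / 2) ^ 2) ≠ 0 := by
    have hac : jacobiMeasurePlus α β ≪ volume.restrict (Ioo 0 π) := by
      rw [jmPlus_eq]; exact withDensity_absolutelyContinuous _ _
    suffices hh : ∀ᵐ θ ∂(volume.restrict (Ioo 0 π)), p.eval (Real.sin (θ / 2) ^ 2) ≠ 0 from hac.ae_le hh
    rw [ae_restrict_iff' measurableSet_Ioo]
    have hf : ((fun θ : ℝ => Real.sin (θ / 2) ^ 2) ⁻¹' {x | p.eval x = 0} ∩ Ioo 0 π).Finite := by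
      have hfin : {x : ℝ | p.eval x = 0}.Finite := by
        have := Polynomial.finite_setOfPred_isRoot hp
        exact this
      refine Set.Finite.of_finite_image (f := fun θ : ℝ => Real.sin (θ / 2) ^ 2) (hfin.subset ?_) ?_
      · rintro _ ⟨θ, h, rfl⟩; exact h.1
      · rintro x ⟨-, hx⟩ y ⟨-, hy⟩ hxy
        have hs : 0 < Real.sin (x / 2) := Real.sin_pos_of_pos_of_lt_pi (by linarith [hx.1]) (by linarith [hx.2, Real.pi_pos])
        have hs' : 0 < Real.sin (y / 2) := Real.sin_pos_of_pos_of_lt_pi (by linarith [hy.1]) (by linarith [hy.2, Real.pi_pos])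
        have h2 : Real.sin (x / 2) = Real.sin (y / 2) := by
          rwa [← sq_eq_sq₀ hs.le hs'.le]
        have := Real.injOn_sin ⟨by linarith [hx.1, Real.pi_pos], by linarith [hx.2]⟩ ⟨by linarith [hy.1, Real.pi_pos], by linarith [hy.2]⟩ h2
        linarith
    have := hf.measure_zero volume
    rw [ae_iff]
    convert! this using 2
    ext θ; simp; tauto
  have h2 : ∀ᵐ θ ∂(jacobiMeasurePlus α β), False := by
    filter_upwards [h, h1] with θ a b
    apply b
    simpa using a
  rw [Filter.eventually_false_iff_eq_bot, ae_eq_bot] at h2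
  have := jL_mom (α := α) (β := β) 0 0
  rw [jL_apply, h2] at this
  simp at this
  exact (jmom_pos hα.out hβ.out 0 0).ne this

lemma Gamma_asc {s : ℝ} (hs : 0 < s) (j : ℕ) : Real.Gamma (s + j) = Real.Gamma s * (ascPochhammer ℝ j).eval s := by
  induction j with
  | zero => simp
  | succ j ih =>
    rw [ascPochhammer_succ_eval]
    push_cast
    rw [← add_assoc, Real.Gamma_add_one (by positivity), ih]; ring

lemma alt_sum_poly {P : ℝ[X]} {n : ℕ} (h : P.natDegree < n) :
    ∑ m ∈ Finset.range (n + 1), (-1 : ℝ) ^ m * n.choose m * P.eval (m : ℝ) = 0 := by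
  have h1 := congrFun (Polynomial.fwdDiff_iter_eq_zero_of_degree_lt h) 0
  rw [fwdDiff_iter_eq_sum_shift] at h1
  simp only [zero_add, nsmul_eq_mul, mul_one, Pi.zero_apply, zsmul_eq_mul, Int.cast_mul, Int.cast_pow, Int.cast_neg,
    Int.cast_one, Int.cast_natCast] at h1
  have h2 : ∀ m ∈ Finset.range (n + 1), (-1 : ℝ) ^ m * n.choose m * P.eval (m : ℝ)
      = (-1) ^ n * ((-1) ^ (n - m) * n.choose m * P.eval (m : ℝ)) := by
    intro m hm
    have hm' : m ≤ n := by simpa [Nat.lt_succ_iff] using hm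
    have : (-1 : ℝ) ^ m = (-1) ^ n * (-1) ^ (n - m) := by
      obtain ⟨k, rfl⟩ := Nat.exists_eq_add_of_le hm'
      rw [Nat.add_sub_cancel_left, pow_add, mul_assoc, ← mul_pow]; simp
    rw [this]; ring
  rw [Finset.sum_congr rfl h2, ← Finset.mul_sum, h1, mul_zero]

/-- Coefficients of the Jacobi polynomial in the variable `sin²(θ/2)`. -/
def jcoef (α β : ℝ) (n m : ℕ) : ℝ :=
  if n = 0 then 1 else (-1) ^ m * ((Real.Gamma (α + n + 1) * Real.Gamma (α + β + n + m + 1)) /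
      ((m.factorial : ℝ) * ((n - m).factorial : ℝ) * Real.Gamma (α + β + n + 1) *
        Real.Gamma (α + m + 1)))

/-- Jacobi polynomial in the variable `sin²(θ/2)`. -/
def jpoly (α β : ℝ) (n : ℕ) : ℝ[X] := ∑ m ∈ Finset.range (n + 1), C (jcoef α β n m) * X ^ m

lemma jpoly_eval (n : ℕ) (hn : n ≠ 0) (θ : ℝ) :
    jacobiP α β n (Real.cos θ) = (jpoly α β n).eval (Real.sin (θ / 2) ^ 2) := by
  unfold jacobiP jpoly
  rw [eval_finsetSum]
  refine Finset.sum_congr rfl fun m _ => ?_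
  simp only [jcoef, hn, if_false, eval_mul, eval_C, eval_pow, eval_X]
  have : (Real.cos θ - 1) / 2 = -1 * Real.sin (θ / 2) ^ 2 := by
    have := Real.cos_sq (θ/2)
    have h2 := Real.sin_sq_add_cos_sq (θ/2)
    rw [mul_div_cancel₀ _ two_ne_zero] at this
    linarith
  rw [this, mul_pow]; ring

lemma jpoly_mem (n : ℕ) : jpoly α β n ∈ degreeLT ℝ (n + 1) := by
  unfold jpoly
  refine Submodule.sum_mem _ fun m hm => ?_
  rw [mem_degreeLT]
  refine (degree_C_mul_X_pow_le m _).trans_lt ?_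
  exact_mod_cast Finset.mem_range.1 hm

lemma jpoly_coeff (n : ℕ) : (jpoly α β n).coeff n = jcoef α β n n := by
  unfold jpoly
  rw [finsetSum_coeff, Finset.sum_eq_single n]
  · simp
  · intro m _ hm; rw [coeff_C_mul, coeff_X_pow, if_neg (Ne.symm hm), mul_zero]
  · simp

lemma jcoef_ne (n m : ℕ) : jcoef α β n m ≠ 0 := by
  have h1 := hα.out
  have h2 := hβ.out
  unfold jcoef
  split_ifs with hn
  · simp
  have hn : (1:ℝ) ≤ n := by exact_mod_cast Nat.one_le_iff_ne_zero.2 hn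
  have hm : (0:ℝ) ≤ m := m.cast_nonneg
  have g1 := Real.Gamma_pos_of_pos (show 0 < α + n + 1 by linarith)
  have g2 := Real.Gamma_pos_of_pos (show 0 < α + β + n + m + 1 by linarith)
  have g3 := Real.Gamma_pos_of_pos (show 0 < α + β + n + 1 by linarith)
  have g4 := Real.Gamma_pos_of_pos (show 0 < α + m + 1 by linarith)
  have := Nat.factorial_pos m
  have := Nat.factorial_pos (n - m)
  positivity

lemma jpoly_ne (n : ℕ) : jpoly α β n ≠ 0 := by
  intro h
  have := jpoly_coeff (α := α) (β := β) n
  rw [h] at this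
  exact jcoef_ne n n (by simpa using this.symm)

lemma jpoly_orth_aux {n k : ℕ} (h : k < n) : jL α β (jpoly α β n * (1 - X) ^ k) = 0 := by
  have h1 := hα.out
  have h2 := hβ.out
  have hn : n ≠ 0 := by omega
  have hn1 : (1:ℝ) ≤ n := by exact_mod_cast Nat.one_le_iff_ne_zero.2 hn
  unfold jpoly
  rw [Finset.sum_mul, map_sum]
  set P : ℝ[X] := (ascPochhammer ℝ (n - 1 - k)).comp (X + C (α + β + 2 + k)) with hP
  have hdeg : P.natDegree < n := by
    rw [hP, natDegree_comp, natDegree_X_add_C, ascPochhammer_natDegree]; omega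
  have h0 := alt_sum_poly hdeg
  have key : ∀ m ∈ Finset.range (n + 1), jL α β (C (jcoef α β n m) * X ^ m * (1 - X) ^ k)
      = (Real.Gamma (α + n + 1) / Real.Gamma (α + β + n + 1) * Real.Gamma (β + 1 + k) / n.factorial) *
        ((-1 : ℝ) ^ m * n.choose m * P.eval (m : ℝ)) := by
    intro m hm
    have hm' : m ≤ n := by simpa [Nat.lt_succ_iff] using hm
    have hm0 : (0:ℝ) ≤ m := m.cast_nonneg
    have hk0 : (0:ℝ) ≤ k := k.cast_nonneg
    rw [mul_assoc, C_mul', map_smul, jL_mom, jmom, smul_eq_mul, jcoef, if_neg hn]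
    have e1 : α + β + n + m + 1 = α + β + 2 + m + k + ((n - 1 - k : ℕ) : ℝ) := by
      rw [Nat.cast_sub (by omega), Nat.cast_sub (by omega)]; push_cast; ring
    rw [e1, Gamma_asc (by linarith)]
    have e2 : P.eval (m : ℝ) = (ascPochhammer ℝ (n - 1 - k)).eval (α + β + 2 + m + k) := by
      rw [hP, eval_comp]; congr 1; simp; ring
    rw [e2, Nat.cast_choose ℝ hm', show α + m + 1 = α + 1 + m by ring]
    have g3 := Real.Gamma_pos_of_pos (show 0 < α + β + n + 1 by linarith)
    have g4 := Real.Gamma_pos_of_pos (show 0 < α + 1 + m by linarith)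
    have g5 := Real.Gamma_pos_of_pos (show 0 < α + β + 2 + m + k by linarith)
    have := Nat.factorial_pos m
    have := Nat.factorial_pos n
    have := Nat.factorial_pos (n - m)
    field_simp
  rw [Finset.sum_congr rfl key, ← Finset.mul_sum, h0, mul_zero]

lemma jpoly_orth {n : ℕ} {q : ℝ[X]} (h : q ∈ degreeLT ℝ n) : jL α β (jpoly α β n * q) = 0 := by
  rcases Nat.eq_zero_or_pos n with rfl | hn
  · have : q = 0 := by simpa [mem_degreeLT] using h
    simp [this]
  have hq : q = (q.comp (1 - X)).comp (1 - X) := by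
    rw [comp_assoc]; simp
  have hd : (q.comp (1 - X)).natDegree < n := by
    refine lt_of_le_of_lt natDegree_comp_le ?_
    have h1 : (1 - X : ℝ[X]).natDegree ≤ 1 := by
      refine (natDegree_sub_le _ _).trans ?_; simp
    have h2 : q.natDegree < n := by
      rw [mem_degreeLT] at h
      by_cases h0 : q = 0
      · simpa [h0] using hn
      · exact (natDegree_lt_iff_degree_lt h0).2 h
    calc _ ≤ q.natDegree * 1 := Nat.mul_le_mul_left _ h1
      _ < n := by omega
  rw [hq, comp, eval₂_eq_sum_range, Finset.mul_sum, map_sum]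
  refine Finset.sum_eq_zero fun k hk => ?_
  rw [mul_left_comm, C_mul', map_smul, jpoly_orth_aux, smul_zero]
  have := Finset.mem_range.1 hk
  omega

end
end

section
set_option linter.unusedSectionVars false
section
open Polynomial
variable {α β : ℝ} [hα : Fact (-1 < α)] [hβ : Fact (-1 < β)]

lemma bern_sum (i N : ℕ) :
    ∑ mn ∈ Finset.HasAntidiagonal.antidiagonal N, C ((mn.1.descFactorial i : ℝ) / (mn.1.factorial * mn.2.factorial)) *
      ((X : ℝ[X]) ^ mn.1 * (1 - X) ^ mn.2) = C ((N.descFactorial i : ℝ) / N.factorial) * X ^ i := by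
  induction i generalizing N with
  | zero =>
    have h := (Commute.all (X : ℝ[X]) (1 - X)).add_pow' N
    rw [add_sub_cancel, one_pow] at h
    simp only [Nat.descFactorial_zero, Nat.cast_one, pow_zero, mul_one]
    conv_rhs => rw [← mul_one (C _), h, Finset.mul_sum]
    refine Finset.sum_congr rfl fun mn hmn => ?_
    have hle : mn.1 ≤ N := by have := Finset.HasAntidiagonal.mem_antidiagonal.1 hmn; omega
    have hs : N - mn.1 = mn.2 := by have := Finset.HasAntidiagonal.mem_antidiagonal.1 hmn; omega
    rw [nsmul_eq_mul, ← mul_assoc (C _) ((Nat.choose _ _ : ℕ) : ℝ[X])]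
    congr 1
    rw [← C_eq_natCast, ← C_mul, Nat.cast_choose ℝ hle, hs]
    congr 1
    have := Nat.factorial_pos N
    field_simp
  | succ i ih =>
    cases N with
    | zero => simp
    | succ N =>
      rw [Finset.Nat.antidiagonal_succ, Finset.sum_cons]
      simp only [Nat.zero_descFactorial_succ, Nat.cast_zero, zero_div, C_0, zero_mul, zero_add,
        Finset.sum_map]
      have : C (((N+1).descFactorial (i+1) : ℝ) / (N+1).factorial) * X ^ (i+1) =
          X * (C ((N.descFactorial i : ℝ) / N.factorial) * (X : ℝ[X]) ^ i) := by
        rw [Nat.succ_descFactorial_succ, Nat.factorial_succ]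
        push_cast
        rw [mul_div_mul_left _ _ (by positivity), pow_succ]; ring
      rw [this, ← ih, Finset.mul_sum]
      refine Finset.sum_congr rfl fun mn _ => ?_
      change C (((mn.1+1).descFactorial (i+1) : ℝ) / ((mn.1+1).factorial * mn.2.factorial)) *
        (X ^ (mn.1+1) * (1 - X) ^ mn.2) = _
      rw [Nat.succ_descFactorial_succ, Nat.factorial_succ]
      push_cast
      rw [mul_assoc, mul_div_mul_left _ _ (by positivity), pow_succ]; ring

lemma desc_succ_cast (m i : ℕ) : (m.descFactorial (i + 1) : ℝ) = ((m : ℝ) - i) * m.descFactorial i := by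
  rw [Nat.descFactorial_succ]
  rcases le_or_gt i m with h | h
  · push_cast [Nat.cast_sub h]; ring
  · simp [Nat.descFactorial_of_lt h]

lemma asc_desc (a : ℝ) (j : ℕ) : ∃ d : ℕ → ℝ, d j = 1 ∧ ∀ m : ℕ,
    (ascPochhammer ℝ j).eval (a + m) = ∑ i ∈ Finset.range (j + 1), d i * m.descFactorial i := by
  induction j with
  | zero => exact ⟨fun _ => 1, rfl, fun m => by simp⟩
  | succ j ih =>
    obtain ⟨d, hd, h⟩ := ih
    refine ⟨fun i => (if i = 0 then 0 else d (i - 1)) + (if i ≤ j then (a + j + i) * d i else 0), by simp [hd], fun m => ?_⟩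
    rw [ascPochhammer_succ_eval, h m, Finset.sum_mul]
    rw [Finset.sum_congr rfl (fun i _ => add_mul (if i = 0 then 0 else d (i - 1)) (if i ≤ j then (a + j + i) * d i else 0)
      (m.descFactorial i : ℝ)), Finset.sum_add_distrib]
    rw [Finset.sum_range_succ' (fun i => (if i = 0 then 0 else d (i - 1)) * (m.descFactorial i : ℝ)),
      Finset.sum_range_succ (fun i => (if i ≤ j then (a + j + i) * d i else 0) * (m.descFactorial i : ℝ))]
    simp only [Nat.add_eq_zero_iff, one_ne_zero, and_false, if_false, Nat.add_sub_cancel, if_true, zero_mul, add_zero,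
      show ¬ (j + 1 ≤ j) by omega]
    rw [← Finset.sum_add_distrib]
    refine Finset.sum_congr rfl fun i hi => ?_
    rw [if_pos (by simpa [Nat.lt_succ_iff] using hi), desc_succ_cast]
    ring

/-- kernel coefficients -/
def jk (α β : ℝ) (m n : ℕ) : ℝ :=
  1 / (m.factorial * n.factorial * Real.Gamma (α + 1 + m) * Real.Gamma (β + 1 + n))

/-- the operators `T_N` on polynomials. -/
def jT (α β : ℝ) [h : Fact (-1 < α)] [h' : Fact (-1 < β)] (N : ℕ) : ℝ[X] →ₗ[ℝ] ℝ[X] :=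
  ∑ mn ∈ Finset.HasAntidiagonal.antidiagonal N, (LinearMap.toSpanSingleton ℝ ℝ[X]
    (C (jk α β mn.1 mn.2) * (X ^ mn.1 * (1 - X) ^ mn.2))) ∘ₗ (jL α β) ∘ₗ
      (LinearMap.mulLeft ℝ (X ^ mn.1 * (1 - X) ^ mn.2))

lemma jT_apply (N : ℕ) (p : ℝ[X]) : jT α β N p = ∑ mn ∈ Finset.HasAntidiagonal.antidiagonal N,
    jL α β (X ^ mn.1 * (1 - X) ^ mn.2 * p) • (C (jk α β mn.1 mn.2) * (X ^ mn.1 * (1 - X) ^ mn.2)) := by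
  simp [jT, LinearMap.sum_apply, mul_assoc]

lemma jT_symm (N : ℕ) (p q : ℝ[X]) : jL α β (jT α β N p * q) = jL α β (p * jT α β N q) := by
  rw [jT_apply, jT_apply, Finset.sum_mul, Finset.mul_sum, map_sum, map_sum]
  refine Finset.sum_congr rfl fun mn _ => ?_
  rw [smul_mul_assoc, mul_smul_comm, map_smul, map_smul, C_mul', smul_mul_assoc, mul_smul_comm, map_smul, map_smul,
    mul_comm p]
  simp only [smul_eq_mul]; ring

/-- eigenvalues of `T_N`. -/
def jrho (α β : ℝ) (N j : ℕ) : ℝ := (N.descFactorial j : ℝ) / N.factorial / Real.Gamma (α + β + 2 + N + j)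

lemma jT_X (N j : ℕ) : jT α β N (X ^ j) - C (jrho α β N j) * X ^ j ∈ degreeLT ℝ j := by
  have h1 := hα.out
  have h2 := hβ.out
  obtain ⟨d, hd, h⟩ := asc_desc (α + 1) j
  have key : jT α β N (X ^ j) = ∑ i ∈ Finset.range (j + 1), C (d i / Real.Gamma (α + β + 2 + N + j)) *
      (C ((N.descFactorial i : ℝ) / N.factorial) * X ^ i) := by
    simp_rw [← bern_sum, Finset.mul_sum]
    rw [Finset.sum_comm, jT_apply]
    refine Finset.sum_congr rfl fun mn hmn => ?_
    have hN : (N : ℝ) = mn.1 + mn.2 := by exact_mod_cast (Finset.HasAntidiagonal.mem_antidiagonal.1 hmn).symm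
    simp_rw [← mul_assoc, ← C_mul]
    simp_rw [mul_assoc _ (X ^ mn.1)]
    rw [← Finset.sum_mul, ← map_sum C, show X ^ mn.1 * (1 - X) ^ mn.2 * X ^ j = (X : ℝ[X]) ^ (mn.1 + j) * (1 - X) ^ mn.2 by
      rw [pow_add]; ring, jL_mom, smul_eq_C_mul, ← mul_assoc, ← C_mul]
    congr 2
    unfold jmom jk
    have hm0 : (0:ℝ) ≤ mn.1 := mn.1.cast_nonneg
    have hn0 : (0:ℝ) ≤ mn.2 := mn.2.cast_nonneg
    have hj0 : (0:ℝ) ≤ j := j.cast_nonneg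
    push_cast
    rw [← add_assoc (α + 1), Gamma_asc (by linarith) j, h]
    have g4 := Real.Gamma_pos_of_pos (show 0 < α + 1 + mn.1 by linarith)
    have g5 := Real.Gamma_pos_of_pos (show 0 < β + 1 + mn.2 by linarith)
    have g6 := Real.Gamma_pos_of_pos (show 0 < α + β + 2 + N + j by rw [hN]; linarith)
    rw [show α + β + 2 + (mn.1 + j : ℝ) + mn.2 = α + β + 2 + N + j by rw [hN]; ring]
    have := Nat.factorial_pos mn.1
    have := Nat.factorial_pos mn.2
    rw [Finset.mul_sum, Finset.sum_mul, Finset.sum_div, Finset.sum_mul]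
    refine Finset.sum_congr rfl fun i _ => ?_
    field_simp
  rw [key, Finset.sum_range_succ, hd]
  have : C (1 / Real.Gamma (α + β + 2 + N + j)) * (C ((N.descFactorial j : ℝ) / N.factorial) * X ^ j) =
      C (jrho α β N j) * X ^ j := by
    rw [← mul_assoc, ← C_mul, jrho]; congr 2; ring
  rw [this, add_sub_cancel_right]
  refine Submodule.sum_mem _ fun i hi => ?_
  rw [← mul_assoc, ← C_mul, mem_degreeLT]
  refine (degree_C_mul_X_pow_le _ _).trans_lt ?_
  exact_mod_cast Finset.mem_range.1 hi

lemma degLT_mono {i j : ℕ} (h : i ≤ j) {p : ℝ[X]} (hp : p ∈ degreeLT ℝ i) : p ∈ degreeLT ℝ j := by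
  rw [mem_degreeLT] at *
  exact hp.trans_le (by exact_mod_cast h)

lemma Cmul_mem {j : ℕ} {p : ℝ[X]} (c : ℝ) (hp : p ∈ degreeLT ℝ j) : C c * p ∈ degreeLT ℝ j := by
  rw [C_mul']; exact Submodule.smul_mem _ _ hp

lemma Xpow_mem (j : ℕ) : (X : ℝ[X]) ^ j ∈ degreeLT ℝ (j + 1) := by
  rw [mem_degreeLT, degree_X_pow]; exact_mod_cast Nat.lt_succ_self j

lemma lead_split {j : ℕ} {p : ℝ[X]} (hp : p ∈ degreeLT ℝ (j + 1)) :
    p - C (p.coeff j) * X ^ j ∈ degreeLT ℝ j := by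
  rw [mem_degreeLT, degree_lt_iff_coeff_zero] at *
  intro m hm
  rw [coeff_sub, coeff_C_mul, coeff_X_pow]
  rcases eq_or_lt_of_le hm with rfl | h
  · simp
  · rw [if_neg h.ne', hp m h]; simp

lemma jT_mem (N j : ℕ) {p : ℝ[X]} (hp : p ∈ degreeLT ℝ j) : jT α β N p ∈ degreeLT ℝ j := by
  induction j generalizing p with
  | zero =>
    have : p = 0 := by simpa [mem_degreeLT] using hp
    simp [this]
  | succ j ih =>
    have h1 := lead_split hp
    have h2 := ih h1
    have h3 := jT_X (α := α) (β := β) N j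
    have : jT α β N p = jT α β N (p - C (p.coeff j) * X ^ j) + C (p.coeff j) * (jT α β N (X ^ j) - C (jrho α β N j) * X ^ j)
        + C (p.coeff j) * (C (jrho α β N j) * X ^ j) := by
      rw [map_sub, C_mul', C_mul', C_mul', map_smul, smul_sub, C_mul']; abel
    rw [this]
    exact Submodule.add_mem _ (Submodule.add_mem _ (degLT_mono (Nat.le_succ j) h2)
      (degLT_mono (Nat.le_succ j) (Cmul_mem _ h3))) (Cmul_mem _ (Cmul_mem _ (Xpow_mem j)))

lemma jT_lead (N j : ℕ) {p : ℝ[X]} (hp : p ∈ degreeLT ℝ (j + 1)) :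
    jT α β N p - C (jrho α β N j) * p ∈ degreeLT ℝ j := by
  have h1 := lead_split hp
  have h2 := jT_mem (α := α) (β := β) N j h1
  have h3 := jT_X (α := α) (β := β) N j
  have : jT α β N p - C (jrho α β N j) * p = jT α β N (p - C (p.coeff j) * X ^ j)
      - C (jrho α β N j) * (p - C (p.coeff j) * X ^ j)
      + C (p.coeff j) * (jT α β N (X ^ j) - C (jrho α β N j) * X ^ j) := by
    rw [map_sub, C_mul', C_mul', C_mul', C_mul', C_mul', map_smul, smul_sub, smul_sub, smul_comm]; abel
  rw [this]
  exact Submodule.add_mem _ (Submodule.sub_mem _ h2 (Cmul_mem _ h1)) (Cmul_mem _ h3)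

lemma jT_jpoly (N j : ℕ) : jT α β N (jpoly α β j) = C (jrho α β N j) * jpoly α β j := by
  rw [← sub_eq_zero]
  have h := jT_lead (α := α) (β := β) N j (jpoly_mem (α := α) (β := β) j)
  set r := jT α β N (jpoly α β j) - C (jrho α β N j) * jpoly α β j with hr
  refine jL_posdef (α := α) (β := β) ?_
  nth_rw 1 [hr]
  rw [sub_mul, map_sub, jT_symm, jpoly_orth (jT_mem N j h), C_mul', smul_mul_assoc, map_smul, jpoly_orth h]
  simp

/-- normalizing constants -/
def jc (α β : ℝ) [h : Fact (-1 < α)] [h' : Fact (-1 < β)] (n : ℕ) : ℝ :=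
  (jL α β (jpoly α β n * jpoly α β n)) ^ (-(1 / 2) : ℝ)

/-- orthonormal polynomials -/
def jq (α β : ℝ) [h : Fact (-1 < α)] [h' : Fact (-1 < β)] (n : ℕ) : ℝ[X] := C (jc α β n) * jpoly α β n

lemma jL_sq_pos (n : ℕ) : 0 < jL α β (jpoly α β n * jpoly α β n) := by
  refine lt_of_le_of_ne ?_ fun h => jpoly_ne (α := α) (β := β) n (jL_posdef h.symm)
  rw [jL_apply]
  exact integral_nonneg fun θ => by simp [mul_self_nonneg]

lemma jc_sq (n : ℕ) : jc α β n * jc α β n * jL α β (jpoly α β n * jpoly α β n) = 1 := by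
  have := jL_sq_pos (α := α) (β := β) n
  unfold jc
  rw [← Real.rpow_add this]
  nth_rw 2 [← Real.rpow_one (jL α β (jpoly α β n * jpoly α β n))]
  rw [← Real.rpow_add this]; norm_num

lemma jc_pos (n : ℕ) : 0 < jc α β n := Real.rpow_pos_of_pos (jL_sq_pos n) _

lemma jq_mem (n : ℕ) : jq α β n ∈ degreeLT ℝ (n + 1) := Cmul_mem _ (jpoly_mem n)

lemma jT_jq (N j : ℕ) : jT α β N (jq α β j) = C (jrho α β N j) * jq α β j := by
  unfold jq
  rw [C_mul', map_smul, jT_jpoly, C_mul', C_mul', smul_comm]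

lemma jq_orth {n : ℕ} {q : ℝ[X]} (h : q ∈ degreeLT ℝ n) : jL α β (jq α β n * q) = 0 := by
  unfold jq; rw [C_mul', smul_mul_assoc, map_smul, jpoly_orth h, smul_zero]

lemma jq_on (n m : ℕ) : jL α β (jq α β n * jq α β m) = if n = m then 1 else 0 := by
  split_ifs with h
  · subst h
    unfold jq
    rw [C_mul', smul_mul_smul_comm, map_smul, smul_eq_mul, jc_sq]
  · rcases lt_or_gt_of_ne h with h | h
    · rw [mul_comm]; exact jq_orth (degLT_mono h (jq_mem n))
    · exact jq_orth (degLT_mono h (jq_mem m))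

lemma jq_coeff_ne (n : ℕ) : (jq α β n).coeff n ≠ 0 := by
  unfold jq
  rw [coeff_C_mul, jpoly_coeff]
  exact mul_ne_zero (jc_pos n).ne' (jcoef_ne n n)

lemma orth_all (N : ℕ) (p : ℝ[X]) (h : ∀ j < N, jL α β (p * jq α β j) = 0) {q : ℝ[X]} (hq : q ∈ degreeLT ℝ N) :
    jL α β (p * q) = 0 := by
  induction N generalizing q with
  | zero =>
    have : q = 0 := by simpa [mem_degreeLT] using hq
    simp [this]
  | succ N ih =>
    set c := q.coeff N / (jq α β N).coeff N with hc
    have h1 : q - C c * jq α β N ∈ degreeLT ℝ N := by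
      have hm : q - C c * jq α β N ∈ degreeLT ℝ (N + 1) := Submodule.sub_mem _ hq (Cmul_mem _ (jq_mem N))
      have := lead_split hm
      rw [coeff_sub, coeff_C_mul, hc, div_mul_cancel₀ _ (jq_coeff_ne N)] at this
      simpa using this
    have h2 := ih (fun j hj => h j (by omega)) h1
    rw [mul_sub, map_sub, C_mul', mul_smul_comm, map_smul, h N (by omega)] at h2
    simpa using h2

/-- the finite kernel -/
def jQ (α β : ℝ) (N : ℕ) (x y : ℝ) : ℝ :=
  ∑ mn ∈ Finset.HasAntidiagonal.antidiagonal N, jk α β mn.1 mn.2 * ((x * y) ^ mn.1 * ((1 - x) * (1 - y)) ^ mn.2)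

lemma jQ_eq (N : ℕ) (x y : ℝ) : jQ α β N x y =
    ∑ n ∈ Finset.range (N + 1), jrho α β N n * (jq α β n).eval x * (jq α β n).eval y := by
  set R : ℝ[X] := (∑ mn ∈ Finset.HasAntidiagonal.antidiagonal N, C (jk α β mn.1 mn.2 * (x ^ mn.1 * (1 - x) ^ mn.2)) *
    (X ^ mn.1 * (1 - X) ^ mn.2)) with hR
  set S : ℝ[X] := ∑ n ∈ Finset.range (N + 1), C (jrho α β N n * (jq α β n).eval x) * jq α β n with hS
  have hRS : R - S = 0 := by
    have hm : R - S ∈ degreeLT ℝ (N + 1) := by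
      refine Submodule.sub_mem _ (Submodule.sum_mem _ fun mn hmn => Cmul_mem _ ?_)
        (Submodule.sum_mem _ fun n hn => Cmul_mem _ (degLT_mono (Finset.mem_range.1 hn) (jq_mem n)))
      rw [mem_degreeLT]
      have h1 : (1 - X : ℝ[X]).degree ≤ 1 := by
        refine (degree_sub_le _ _).trans ?_; simp
      have h2 : ((1 - X : ℝ[X]) ^ mn.2).degree ≤ (mn.2 : WithBot ℕ) := by
        refine (degree_pow_le _ _).trans ?_
        calc _ ≤ mn.2 • (1 : WithBot ℕ) := nsmul_le_nsmul_right h1 _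
          _ = _ := by simp
      have h3 : ((X : ℝ[X]) ^ mn.1 * (1 - X) ^ mn.2).degree ≤ ((mn.1 + mn.2 : ℕ) : WithBot ℕ) := by
        rw [degree_mul, degree_X_pow]; push_cast; gcongr
      rw [Finset.HasAntidiagonal.mem_antidiagonal.1 hmn] at h3
      exact h3.trans_lt (by exact_mod_cast Nat.lt_succ_self N)
    refine jL_posdef (α := α) (β := β) (orth_all (N + 1) _ (fun j hj => ?_) hm)
    rw [sub_mul, map_sub, sub_eq_zero]
    have e1 : jL α β (R * jq α β j) = (jT α β N (jq α β j)).eval x := by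
      rw [hR, Finset.sum_mul, map_sum, jT_apply, eval_finsetSum]
      refine Finset.sum_congr rfl fun mn _ => ?_
      rw [mul_assoc, C_mul', map_smul]; simp; ring
    have e2 : jL α β (S * jq α β j) = jrho α β N j * (jq α β j).eval x := by
      rw [hS, Finset.sum_mul, map_sum, Finset.sum_eq_single j]
      · rw [mul_assoc, C_mul', map_smul, jq_on]; simp
      · intro b _ hb
        rw [mul_assoc, C_mul', map_smul, jq_on, if_neg hb]; simp
      · intro hb; exact absurd (Finset.mem_range.2 hj) hb
    rw [e1, e2, jT_jq]; simp
  have := congrArg (eval y) (sub_eq_zero.1 hRS)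
  rw [hR, hS, eval_finsetSum, eval_finsetSum] at this
  simp only [eval_mul, eval_C, eval_pow, eval_X, eval_sub, eval_one] at this
  rw [← this, jQ]
  refine Finset.sum_congr rfl fun mn _ => ?_
  rw [mul_pow, mul_pow]; ring
end
end

section

lemma ps_summable (K : ℕ) {ρ : ℝ} (h0 : 0 ≤ ρ) (h1 : ρ < 1) :
    Summable fun l : ℕ => ((l:ℝ) + 1) ^ (K + 1) * ρ ^ l := by
  rcases h0.eq_or_lt with rfl | h0
  · refine summable_of_ne_finset_zero (s := {0}) fun b hb => ?_
    rw [zero_pow (by simpa using hb), mul_zero]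
  have h := summable_pow_mul_geometric_of_norm_lt_one (K + 1) (r := ρ) (by rwa [Real.norm_of_nonneg h0.le])
  have h' := ((summable_nat_add_iff 1).2 h).mul_left (ρ⁻¹)
  refine h'.congr fun l => ?_
  push_cast; rw [pow_succ ρ]; field_simp

lemma ps_hasDeriv {a : ℕ → ℝ} {K : ℕ} (ha : ∀ l, |a l| ≤ ((l:ℝ) + 1) ^ K) {u : ℝ} (h0 : 0 ≤ u) (h1 : u < 1) :
    ∃ D, HasDerivAt (fun u => ∑' l, a l * u ^ l) D u ∧ HasSum (fun l => a l * u ^ l) (∑' l, a l * u ^ l) ∧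
      HasSum (fun l : ℕ => (l:ℝ) * a l * u ^ l) (u * D) := by
  obtain ⟨ρ, hρ1, hρ2⟩ := exists_between h1
  have hρ0 : 0 < ρ := h0.trans_lt hρ1
  have hs := (ps_summable K hρ0.le hρ2).mul_left ρ⁻¹
  have hb : ∀ l : ℕ, ∀ y ∈ Metric.ball (0:ℝ) ρ, ‖a l * ((l:ℝ) * y ^ (l - 1))‖ ≤ ρ⁻¹ * (((l:ℝ) + 1) ^ (K + 1) * ρ ^ l) := by
    intro l y hy
    rw [mem_ball_zero_iff, Real.norm_eq_abs] at hy
    rcases l with _ | l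
    · simp; positivity
    rw [norm_mul, norm_mul, norm_pow, Real.norm_eq_abs, Real.norm_eq_abs, Real.norm_eq_abs, Nat.add_sub_cancel]
    rw [abs_of_nonneg (by positivity : (0:ℝ) ≤ ((l+1:ℕ):ℝ))]
    have e : ρ⁻¹ * ((((l+1:ℕ):ℝ) + 1) ^ (K + 1) * ρ ^ (l+1)) = ((((l+1:ℕ):ℝ) + 1) ^ K) * ((((l+1:ℕ):ℝ)+1) * ρ ^ l) := by
      rw [pow_succ, pow_succ]; field_simp
    rw [e]
    gcongr
    · exact ha _
    · linarith
  have hz : Summable fun l => a l * (0:ℝ) ^ l := summable_of_ne_finset_zero (s := {0}) fun b hb => by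
    rw [zero_pow (by simpa using hb), mul_zero]
  have hu : u ∈ Metric.ball (0:ℝ) ρ := by simpa [abs_of_nonneg h0] using hρ1
  have hd : ∀ (l : ℕ), ∀ y ∈ Metric.ball (0:ℝ) ρ, HasDerivAt (fun u => a l * u ^ l) (a l * ((l:ℝ) * y ^ (l - 1))) y := by
    intro l y _
    exact (hasDerivAt_pow l y).const_mul _
  have h := hasDerivAt_tsum_of_isPreconnected hs Metric.isOpen_ball (convex_ball (0:ℝ) ρ).isPreconnected hd hb
    (Metric.mem_ball_self hρ0) hz hu
  have hsum := summable_of_summable_hasDerivAt_of_isPreconnected hs Metric.isOpen_ball (convex_ball (0:ℝ) ρ).isPreconnected hd hb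
    (Metric.mem_ball_self hρ0) hz hu
  refine ⟨_, h, hsum.hasSum, ?_⟩
  have hs2 : Summable fun l : ℕ => a l * ((l:ℝ) * u ^ (l - 1)) :=
    Summable.of_norm_bounded hs (fun l => hb l u hu)
  refine (hs2.hasSum.mul_left u).congr_fun ?_
  intro l
  rcases l with _ | l
  · simp
  · rw [Nat.add_sub_cancel, pow_succ]; ring

/-- coefficients. -/
def ca (c : ℝ) (l : ℕ) : ℝ := Real.Gamma (c + 2 * l) / (l.factorial * Real.Gamma (c + l) * 4 ^ l)

lemma ca_pos {c : ℝ} (hc : 0 < c) (l : ℕ) : 0 < ca c l := by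
  have h1 := Real.Gamma_pos_of_pos (show 0 < c + 2 * l by positivity)
  have h2 := Real.Gamma_pos_of_pos (show 0 < c + l by positivity)
  have := Nat.factorial_pos l
  unfold ca; positivity

lemma ca_zero {c : ℝ} (hc : 0 < c) : ca c 0 = 1 := by
  have h2 := Real.Gamma_pos_of_pos hc
  simp [ca, h2.ne']

lemma ca_succ {c : ℝ} (hc : 0 < c) (l : ℕ) :
    ca c (l + 1) * (4 * (l + 1) * (c + l)) = (c + 2 * l + 1) * (c + 2 * l) * ca c l := by
  have h1 := Real.Gamma_pos_of_pos (show 0 < c + 2 * l by positivity)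
  have h2 := Real.Gamma_pos_of_pos (show 0 < c + l by positivity)
  have := Nat.factorial_pos l
  unfold ca
  push_cast
  rw [show c + 2 * ((l:ℝ) + 1) = (c + 2 * l + 1) + 1 by ring, Real.Gamma_add_one (by positivity), Real.Gamma_add_one (by positivity),
    show c + ((l:ℝ) + 1) = c + l + 1 by ring, Real.Gamma_add_one (by positivity), Nat.factorial_succ, pow_succ]
  push_cast
  have : c + l ≠ 0 := by positivity
  field_simp

lemma ca_bound {c : ℝ} (hc : 0 < c) : ∃ K : ℕ, ∀ l, |ca c l| ≤ ((l:ℝ) + 1) ^ K := by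
  obtain ⟨K, hK⟩ := exists_nat_ge c
  refine ⟨K, fun l => ?_⟩
  rw [abs_of_pos (ca_pos hc l)]
  induction l with
  | zero => simp [ca_zero hc]
  | succ l ih =>
    have h := ca_succ hc l
    have hp := ca_pos hc l
    have h3 : 1 + (K:ℝ) * (1 / (l + 1)) ≤ (1 + 1 / ((l:ℝ) + 1)) ^ K :=
      one_add_mul_le_pow (by have : (0:ℝ) ≤ 1 / ((l:ℝ)+1) := by positivity
                             linarith) K
    have h4 : ca c (l + 1) ≤ (1 + K * (1 / (l + 1))) * ca c l := by
      have : ca c (l + 1) = (c + 2 * l + 1) * (c + 2 * l) / (4 * (l + 1) * (c + l)) * ca c l := by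
        have : 4 * ((l:ℝ) + 1) * (c + l) ≠ 0 := by positivity
        field_simp; linarith
      rw [this]
      gcongr
      rw [div_le_iff₀ (by positivity)]
      have : (1 + (K:ℝ) * (1 / (l + 1))) * (4 * (l + 1) * (c + l)) = 4 * (c + l) * (l + 1 + K) := by field_simp
      rw [this]
      have hl : (0:ℝ) ≤ l := l.cast_nonneg
      nlinarith [mul_nonneg hc.le hl, mul_le_mul_of_nonneg_left hK hc.le, mul_le_mul_of_nonneg_left hK hl]
    calc ca c (l + 1) ≤ (1 + K * (1 / (l + 1))) * ca c l := h4
      _ ≤ (1 + 1 / ((l:ℝ) + 1)) ^ K * ((l:ℝ) + 1) ^ K := by gcongr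
      _ = _ := by
        rw [← mul_pow]; push_cast; congr 1; field_simp

/-- companion coefficients. -/
def cb (c : ℝ) (l : ℕ) : ℝ := if l = 0 then 1 else (c - 1) * ca c l / (c + 2 * l - 1)

lemma cb_eq {c : ℝ} (hc : 0 < c) (l : ℕ) : cb c l * (c + 2 * l - 1) = (c - 1) * ca c l := by
  unfold cb
  rcases l with _ | l
  · simp [ca_zero hc]
  · rw [if_neg (by simp)]
    have : c + 2 * ((l+1 : ℕ):ℝ) - 1 ≠ 0 := by push_cast; have : (0:ℝ) ≤ l := l.cast_nonneg
                                               linarith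
    field_simp

lemma cb_abs {c : ℝ} (hc : 0 < c) (l : ℕ) : |cb c l| ≤ |ca c l| := by
  rcases l with _ | l
  · simp [ca_zero hc, cb]
  · unfold cb
    rw [if_neg (by simp)]
    have hl : (0:ℝ) ≤ l := l.cast_nonneg
    have : 0 < c + 2 * ((l+1 : ℕ):ℝ) - 1 := by push_cast; linarith
    rw [abs_div, abs_mul, abs_of_pos this, div_le_iff₀ this, mul_comm]
    gcongr
    push_cast
    rw [abs_le]; constructor <;> linarith

lemma cab_rel {c : ℝ} (hc : 0 < c) (l : ℕ) : (1 - c - 2 * ((l+1:ℕ):ℝ)) * ca c (l+1) + (c + 2 * l) * ca c l = (1 - c) * cb c (l + 1) := by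
  have hl : (0:ℝ) ≤ l := l.cast_nonneg
  have h0 : 0 < c + 2 * ((l+1 : ℕ):ℝ) - 1 := by push_cast; linarith
  have h1 := cb_eq hc (l + 1)
  have h2 := ca_succ hc l
  have h3 : cb c (l+1) = (c - 1) * ca c (l+1) / (c + 2 * ((l+1 : ℕ):ℝ) - 1) := by
    field_simp; linarith
  rw [h3]
  field_simp
  push_cast at *
  nlinarith

lemma gen_E {c : ℝ} (hc : 0 < c) {τ : ℝ} (hτ : 0 < τ) :
    HasSum (fun l : ℕ => ca c l * (Real.sinh τ * Real.cosh τ ^ (-c - 2 * l))) (2 ^ (c - 1) * Real.exp (-(c - 1) * τ)) := by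
  obtain ⟨K, hK⟩ := ca_bound hc
  have hKb : ∀ l, |cb c l| ≤ ((l:ℝ) + 1) ^ K := fun l => (cb_abs hc l).trans (hK l)
  set F : ℝ → ℝ := fun u => ∑' l, ca c l * u ^ l with hF
  set G : ℝ → ℝ := fun u => ∑' l, cb c l * u ^ l with hG
  set U : ℝ → ℝ := fun τ => (Real.cosh τ ^ 2)⁻¹ with hU
  have hU0 : ∀ τ, 0 < U τ := fun τ => by have := Real.cosh_pos τ; simp only [hU]; positivity
  have hU1 : ∀ τ, 0 < τ → U τ < 1 := fun τ h => by
    have := Real.one_lt_cosh.2 h.ne'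
    exact inv_lt_one_of_one_lt₀ (by nlinarith)
  have key : ∀ u, 0 ≤ u → u < 1 → ∃ D D', HasDerivAt F D u ∧ HasDerivAt G D' u ∧
      F u - c * (1 - u) * F u - 2 * (1 - u) * (u * D) = (1 - c) * G u ∧ (1 - c) * G u - 2 * (u * D') = (1 - c) * F u := by
    intro u h0 h1
    obtain ⟨D, hD1, hD2, hD3⟩ := ps_hasDeriv hK h0 h1
    obtain ⟨D', hD1', hD2', hD3'⟩ := ps_hasDeriv hKb h0 h1
    refine ⟨D, D', hD1, hD1', ?_, ?_⟩
    · have e1 : HasSum (fun l : ℕ => (1 - c - 2 * l) * ca c l * u ^ l) ((1 - c) * F u - 2 * (u * D)) := by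
        refine ((hD2.mul_left (1 - c)).sub (hD3.mul_left 2)).congr_fun fun l => ?_
        ring
      have e2 : HasSum (fun l : ℕ => (c + 2 * l) * ca c l * u ^ (l + 1)) (u * (c * F u + 2 * (u * D))) := by
        refine (((hD2.mul_left c).add (hD3.mul_left 2)).mul_left u).congr_fun fun l => ?_
        ring
      have e3 : HasSum (fun l : ℕ => (1 - c - 2 * ((l+1:ℕ):ℝ)) * ca c (l+1) * u ^ (l+1)) ((1 - c) * F u - 2 * (u * D) - (1 - c)) := by
        have := (hasSum_nat_add_iff' 1).2 e1
        simpa [ca_zero hc] using this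
      have e4 : HasSum (fun l : ℕ => (1 - c) * cb c (l+1) * u ^ (l+1)) ((1 - c) * G u - (1 - c)) := by
        have := (hasSum_nat_add_iff' 1).2 (hD2'.mul_left (1 - c))
        simpa [show cb c 0 = 1 by simp [cb], mul_assoc] using this
      have e5 := (e3.add e2).congr_fun (g := fun l : ℕ => (1 - c) * cb c (l+1) * u ^ (l+1)) (fun l => by
        rw [← cab_rel hc l]; ring)
      have := e5.unique e4
      linarith
    · have e1 : HasSum (fun l : ℕ => (1 - c) * ca c l * u ^ l) ((1 - c) * G u - 2 * (u * D')) := by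
        refine ((hD2'.mul_left (1 - c)).sub (hD3'.mul_left 2)).congr_fun fun l => ?_
        have := cb_eq hc l
        linear_combination (u^l) * this
      have e2 := e1.unique ((hD2.mul_left (1-c)).congr_fun fun l => by ring)
      linarith
  have hE : ∀ τ, 0 < τ → HasDerivAt (fun τ => Real.sinh τ * Real.cosh τ ^ (-c) * F (U τ))
      (-(c - 1) * (Real.cosh τ ^ (1 - c) * G (U τ))) τ ∧
      HasDerivAt (fun τ => Real.cosh τ ^ (1 - c) * G (U τ)) (-(c - 1) * (Real.sinh τ * Real.cosh τ ^ (-c) * F (U τ))) τ := by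
    intro τ hτ
    obtain ⟨D, D', h1, h2, h3, h4⟩ := key (U τ) (hU0 τ).le (hU1 τ hτ)
    have hC := Real.cosh_pos τ
    have hdU : HasDerivAt U (-(2 * Real.cosh τ * Real.sinh τ) / (Real.cosh τ ^ 2) ^ 2) τ := by
      have := ((Real.hasDerivAt_cosh τ).pow 2).inv (by simp [hC.ne'])
      convert! this using 1
      simp
    have hp : ∀ p : ℝ, HasDerivAt (fun τ => Real.cosh τ ^ p) (Real.sinh τ * p * Real.cosh τ ^ (p - 1)) τ :=
      fun p => (Real.hasDerivAt_cosh τ).rpow_const (Or.inl hC.ne')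
    have hcs := Real.cosh_sq τ
    have e1 : Real.cosh τ ^ (1 - c) = Real.cosh τ ^ (-c) * Real.cosh τ := by
      rw [show 1 - c = -c + 1 by ring, Real.rpow_add_one hC.ne']
    have e2 : Real.cosh τ ^ (-c - 1) = Real.cosh τ ^ (-c) / Real.cosh τ := Real.rpow_sub_one hC.ne' _
    have hUe : U τ * Real.cosh τ ^ 2 = 1 := by simp only [hU]; field_simp
    have hSe : Real.sinh τ ^ 2 = (1 - U τ) * Real.cosh τ ^ 2 := by linear_combination -hcs + hUe
    have hUe' : (Real.cosh τ ^ 2)⁻¹ = U τ := rfl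
    have hq : -(2 * Real.cosh τ * Real.sinh τ) / (Real.cosh τ ^ 2) ^ 2 = -2 * Real.sinh τ / Real.cosh τ * U τ := by
      rw [← hUe']; field_simp
    rw [hq] at hdU
    constructor
    · have := ((Real.hasDerivAt_sinh τ).mul (hp (-c))).mul (h1.comp τ hdU)
      convert! this using 1
      simp only [Function.comp, Pi.mul_apply]
      rw [e1, e2]
      have : (Real.cosh τ * Real.cosh τ ^ (-c) + Real.sinh τ * (Real.sinh τ * -c * (Real.cosh τ ^ (-c) / Real.cosh τ))) * F (U τ) +
          Real.sinh τ * Real.cosh τ ^ (-c) * (D * (-2 * Real.sinh τ / Real.cosh τ * U τ)) =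
          Real.cosh τ ^ (-c) / Real.cosh τ * ((Real.cosh τ ^ 2 - c * Real.sinh τ ^ 2) * F (U τ) - 2 * Real.sinh τ ^ 2 * (U τ * D)) := by
        field_simp; ring
      rw [this, hSe]
      have : (Real.cosh τ ^ 2 - c * ((1 - U τ) * Real.cosh τ ^ 2)) * F (U τ) - 2 * ((1 - U τ) * Real.cosh τ ^ 2) * (U τ * D)
        = Real.cosh τ ^ 2 * ((1 - c) * G (U τ)) := by rw [← h3]; ring
      rw [this]
      field_simp; ring
    · have := (hp (1 - c)).mul (h2.comp τ hdU)
      convert! this using 1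
      simp only [Function.comp]
      rw [show 1 - c - 1 = -c by ring, e1]
      have : Real.sinh τ * (1 - c) * Real.cosh τ ^ (-c) * G (U τ) +
        Real.cosh τ ^ (-c) * Real.cosh τ * (D' * (-2 * Real.sinh τ / Real.cosh τ * U τ)) =
        Real.sinh τ * Real.cosh τ ^ (-c) * ((1 - c) * G (U τ) - 2 * (U τ * D')) := by field_simp; ring
      rw [this, h4]; ring
  set E : ℝ → ℝ := fun τ => Real.sinh τ * Real.cosh τ ^ (-c) * F (U τ) with hEdef
  set V : ℝ → ℝ := fun τ => Real.cosh τ ^ (1 - c) * G (U τ) with hVdef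
  have hexp : ∀ (k τ : ℝ), HasDerivAt (fun τ => Real.exp (k * τ)) (Real.exp (k * τ) * k) τ := by
    intro k τ
    have := ((hasDerivAt_id τ).const_mul k).exp
    simpa using this
  have hconst : ∀ f : ℝ → ℝ, (∀ τ, 0 < τ → HasDerivAt f 0 τ) → ∀ L, Filter.Tendsto f Filter.atTop (nhds L) → ∀ τ, 0 < τ → f τ = L := by
    intro f hf L hL τ hτ
    have : ∀ σ ∈ Ioi (0:ℝ), f σ = f τ := fun σ hσ =>
      (convex_Ioi (0:ℝ)).is_const_of_fderivWithin_eq_zero (𝕜 := ℝ) (f := f) (fun x hx => (hf x hx).differentiableAt.differentiableWithinAt)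
        (fun x hx => by
          rw [fderivWithin_of_isOpen isOpen_Ioi hx]
          have := (hf x hx).hasFDerivAt.fderiv
          rw [this]; ext; simp) hσ hτ
    have h2 : Filter.Tendsto f Filter.atTop (nhds (f τ)) :=
      tendsto_const_nhds.congr' (by
        filter_upwards [Filter.eventually_gt_atTop 0] with σ hσ using (this σ hσ).symm)
    exact tendsto_nhds_unique h2 hL
  have hx : Filter.Tendsto (fun τ : ℝ => Real.exp (-2 * τ)) Filter.atTop (nhds 0) :=
    Real.tendsto_exp_atBot.comp (Filter.tendsto_id.const_mul_atTop_of_neg (by norm_num))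
  have hqq : ∀ τ : ℝ, Real.exp τ / Real.cosh τ = 2 / (1 + Real.exp (-2 * τ)) := by
    intro τ
    have e : Real.exp (-2 * τ) = Real.exp (-τ) * Real.exp (-τ) := by rw [← Real.exp_add]; congr 1; ring
    have e' : Real.exp τ * Real.exp (-τ) = 1 := by rw [← Real.exp_add]; simp
    rw [Real.cosh_eq, e, div_eq_div_iff (by positivity) (by positivity)]
    linear_combination Real.exp (-τ) * e'
  have hq : Filter.Tendsto (fun τ : ℝ => Real.exp τ / Real.cosh τ) Filter.atTop (nhds 2) := by
    simp_rw [hqq]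
    have := (tendsto_const_nhds (x := (2:ℝ))).div ((tendsto_const_nhds (x := (1:ℝ))).add hx) (by norm_num)
    simp only [add_zero, div_one] at this
    exact this
  have hth : ∀ τ : ℝ, Real.sinh τ = Real.cosh τ * (Real.exp τ / Real.cosh τ - 1) := by
    intro τ
    have := (Real.cosh_pos τ).ne'
    field_simp
    rw [Real.sinh_eq, Real.cosh_eq]; ring
  have hUq : ∀ τ : ℝ, U τ = (Real.exp τ / Real.cosh τ) ^ 2 * Real.exp (-2 * τ) := by
    intro τ
    have e : Real.exp (-2 * τ) * Real.exp τ ^ 2 = 1 := by rw [← Real.exp_nat_mul, ← Real.exp_add]; simp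
    have := (Real.cosh_pos τ).ne'
    simp only [hU, div_pow]; rw [div_mul_eq_mul_div, mul_comm, e, one_div]
  have hUlim : Filter.Tendsto U Filter.atTop (nhds 0) := by
    have : U = fun τ => (Real.exp τ / Real.cosh τ) ^ 2 * Real.exp (-2 * τ) := funext hUq
    rw [this]
    simpa using (hq.pow 2).mul hx
  have hrp : ∀ τ : ℝ, Real.cosh τ ^ (1 - c) = (Real.exp τ / Real.cosh τ) ^ (c - 1) * Real.exp ((1 - c) * τ) := by
    intro τ
    have := Real.cosh_pos τ
    rw [Real.div_rpow (Real.exp_pos τ).le this.le, ← Real.exp_mul, show 1 - c = -(c - 1) by ring, Real.rpow_neg this.le,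
      div_mul_eq_mul_div, ← Real.exp_add, mul_comm τ, ← add_mul]
    simp
  have hC1 : ∀ τ : ℝ, Real.cosh τ ^ (-c) * Real.cosh τ = Real.cosh τ ^ (1 - c) := by
    intro τ
    rw [← Real.rpow_add_one (Real.cosh_pos τ).ne']; congr 1; ring
  have hFc : Filter.Tendsto (fun τ => F (U τ)) Filter.atTop (nhds 1) ∧ Filter.Tendsto (fun τ => G (U τ)) Filter.atTop (nhds 1) ∧
      ∃ M, ∀ᶠ τ in Filter.atTop, |F (U τ) - G (U τ)| ≤ M * U τ ∧ |F (U τ)| ≤ M := by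
    obtain ⟨D, D', h1, h2, -, -⟩ := key 0 le_rfl one_pos
    have hF0 : F 0 = 1 := by
      simp only [hF]; rw [tsum_eq_single 0 (fun b hb => by rw [zero_pow hb, mul_zero])]; simp [ca_zero hc]
    have hG0 : G 0 = 1 := by
      simp only [hG]; rw [tsum_eq_single 0 (fun b hb => by rw [zero_pow hb, mul_zero])]; simp [cb]
    have t1 : Filter.Tendsto (fun τ => F (U τ)) Filter.atTop (nhds 1) := by
      rw [← hF0]; exact h1.continuousAt.tendsto.comp hUlim
    have t2 : Filter.Tendsto (fun τ => G (U τ)) Filter.atTop (nhds 1) := by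
      rw [← hG0]; exact h2.continuousAt.tendsto.comp hUlim
    refine ⟨t1, t2, ?_⟩
    have hO := ((h1.sub h2).isBigO_sub.comp_tendsto hUlim).bound
    obtain ⟨M, hM⟩ := hO
    refine ⟨max M 2, ?_⟩
    filter_upwards [hM, t1.eventually (Metric.ball_mem_nhds 1 one_pos)] with τ hτ h2
    constructor
    · simp only [Function.comp, Pi.sub_apply, hF0, hG0, sub_self, sub_zero, Real.norm_eq_abs] at hτ
      rw [abs_of_pos (hU0 τ)] at hτ
      exact hτ.trans (mul_le_mul_of_nonneg_right (le_max_left _ _) (hU0 τ).le)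
    · refine le_trans ?_ (le_max_right M 2)
      rw [Real.dist_eq, abs_lt] at h2
      rw [abs_le]; constructor <;> linarith
  have hA := hconst (fun τ => (E τ + V τ) * Real.exp ((c - 1) * τ)) (fun τ hτ => by
    have := (((hE τ hτ).1.add (hE τ hτ).2).mul (hexp (c - 1) τ))
    convert! this using 1
    simp only [Pi.add_apply]; ring) (2 ^ (c - 1) * 2) (by
      have hl := (hq.rpow_const (p := c - 1) (Or.inl (by norm_num))).mul (((hq.sub_const 1).mul hFc.1).add hFc.2.1)
      refine (hl.congr fun τ => ?_).trans (by norm_num)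
      simp only [hEdef, hVdef]
      rw [hth τ, mul_right_comm (Real.cosh τ), mul_comm (Real.cosh τ), hC1, hrp]
      have : Real.exp ((1 - c) * τ) * Real.exp ((c - 1) * τ) = 1 := by rw [← Real.exp_add, ← add_mul]; simp
      linear_combination (-(Real.exp τ / Real.cosh τ) ^ (c - 1) * ((Real.exp τ / Real.cosh τ - 1) * F (U τ) + G (U τ))) * this) τ hτ
  have hW := hconst (fun τ => (E τ - V τ) * Real.exp (-(c - 1) * τ)) (fun τ hτ => by
    have := (((hE τ hτ).1.sub (hE τ hτ).2).mul (hexp (-(c - 1)) τ))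
    convert! this using 1
    simp only [Pi.sub_apply]; ring) 0 (by
      obtain ⟨M, hM⟩ := hFc.2.2
      have hx2 : Filter.Tendsto (fun τ : ℝ => Real.exp (-(2 * c) * τ)) Filter.atTop (nhds 0) :=
        Real.tendsto_exp_atBot.comp (Filter.tendsto_id.const_mul_atTop_of_neg (by linarith))
      have hl := (((hq.rpow_const (p := c - 1) (Or.inl (by norm_num))).mul (hq.pow 2)).mul hx2).mul_const (2 * M)
      rw [mul_zero, zero_mul] at hl
      refine squeeze_zero_norm' ?_ hl
      filter_upwards [hM, Filter.eventually_gt_atTop 0] with τ h1 h0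
      simp only [hEdef, hVdef]
      rw [show Real.sinh τ * Real.cosh τ ^ (-c) = Real.cosh τ ^ (1 - c) * (Real.exp τ / Real.cosh τ - 1) by
        rw [hth τ, ← hC1]; ring, hrp]
      have hqp : 0 < Real.exp τ / Real.cosh τ := div_pos (Real.exp_pos τ) (Real.cosh_pos τ)
      set q := Real.exp τ / Real.cosh τ with hqd
      have e3 : Real.exp ((1 - c) * τ) * Real.exp (-(c - 1) * τ) * Real.exp (-2 * τ) = Real.exp (-(2 * c) * τ) := by
        rw [← Real.exp_add, ← Real.exp_add]; congr 1; ring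
      have hth2 : |1 - (q - 1)| ≤ U τ := by
        have h5 := hth τ
        rw [← hqd] at h5
        have h6 := Real.cosh_sq τ
        have h7 : U τ * Real.cosh τ ^ 2 = 1 := by
          have := (Real.cosh_pos τ).ne'
          simp only [hU]; field_simp
        have hq1 : 0 < q - 1 := by
          by_contra hcon
          have := Real.sinh_pos_iff.2 h0
          rw [h5] at this
          nlinarith [Real.cosh_pos τ]
        have h8 : U τ = 1 - (q - 1) ^ 2 := by
          have := (Real.cosh_pos τ).ne'
          have h9 : Real.cosh τ ^ 2 ≠ 0 := by positivity
          apply mul_right_cancel₀ h9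
          rw [h7, h5] at *
          nlinarith
        have hq2 : q - 1 ≤ 1 := by nlinarith [hU0 τ]
        rw [abs_of_nonneg (by linarith), h8]; nlinarith
      have hB : |(q - 1) * F (U τ) - G (U τ)| ≤ 2 * M * U τ := by
        have : (q - 1) * F (U τ) - G (U τ) = (F (U τ) - G (U τ)) - (1 - (q - 1)) * F (U τ) := by ring
        rw [this]
        calc _ ≤ |F (U τ) - G (U τ)| + |(1 - (q - 1)) * F (U τ)| := abs_sub _ _
          _ ≤ M * U τ + U τ * M := by rw [abs_mul]; exact add_le_add h1.1 (mul_le_mul hth2 h1.2 (abs_nonneg _) (hU0 τ).le)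
          _ = _ := by ring
      have hpos : 0 ≤ q ^ (c - 1) * (Real.exp ((1 - c) * τ) * Real.exp (-(c - 1) * τ)) := by positivity
      calc ‖(q ^ (c - 1) * Real.exp ((1 - c) * τ) * (q - 1) * F (U τ) - q ^ (c - 1) * Real.exp ((1 - c) * τ) * G (U τ)) * Real.exp (-(c - 1) * τ)‖
          = q ^ (c - 1) * (Real.exp ((1 - c) * τ) * Real.exp (-(c - 1) * τ)) * |(q - 1) * F (U τ) - G (U τ)| := by
            rw [← abs_of_nonneg hpos, ← abs_mul, Real.norm_eq_abs]; congr 1; ring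
        _ ≤ q ^ (c - 1) * (Real.exp ((1 - c) * τ) * Real.exp (-(c - 1) * τ)) * (2 * M * U τ) := by gcongr
        _ = _ := by rw [hUq τ, ← hqd, ← e3]; ring) τ hτ
  have hEV : E τ = V τ := by
    have := (Real.exp_pos (-(c - 1) * τ)).ne'
    have h := (mul_eq_zero.1 hW).resolve_right this
    linarith
  have hfin : E τ = 2 ^ (c - 1) * Real.exp (-(c - 1) * τ) := by
    simp only [← hEV] at hA
    have h1 : Real.exp ((c - 1) * τ) * Real.exp (-(c - 1) * τ) = 1 := by rw [← Real.exp_add]; simp; ring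
    linear_combination (Real.exp (-(c - 1) * τ) / 2) * hA - E τ * h1
  obtain ⟨D, -, hD2, -⟩ := ps_hasDeriv hK (hU0 τ).le (hU1 τ hτ)
  have := hD2.mul_left (Real.sinh τ * Real.cosh τ ^ (-c))
  rw [← hfin]
  refine this.congr_fun fun l => ?_
  have hC := Real.cosh_pos τ
  rw [Real.rpow_sub hC, Real.rpow_mul hC.le, Real.rpow_natCast, Real.rpow_two]
  simp only [hU, inv_pow]
  field_simp
end

section

lemma gamma_ratio_tendsto {s : ℝ} (hs : 0 < s) :
    Filter.Tendsto (fun n : ℕ => (n.factorial : ℝ) * ((n:ℝ) + 1) ^ (s - 1) / Real.Gamma (s + n)) Filter.atTop (nhds 1) := by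
  have h := Real.GammaSeq_tendsto_Gamma s
  have hprod : ∀ n : ℕ, ∏ j ∈ Finset.range (n + 1), (s + j) = (s + n) * Real.Gamma (s + n) / Real.Gamma s := by
    intro n
    have hg := Real.Gamma_pos_of_pos hs
    induction n with
    | zero => simp; field_simp
    | succ n ih =>
      rw [Finset.prod_range_succ, ih]
      push_cast
      rw [← add_assoc, Real.Gamma_add_one (by positivity)]; ring
  have hg := Real.Gamma_pos_of_pos hs
  have h2 : Filter.Tendsto (fun n : ℕ => (1:ℝ) / (n:ℝ)) Filter.atTop (nhds 0) := tendsto_one_div_atTop_nhds_zero_nat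
  have h3 : Filter.Tendsto (fun n : ℕ => (s * (1 / (n:ℝ)) + 1) * (1 + 1 / (n:ℝ)) ^ (s - 1)) Filter.atTop (nhds 1) := by
    have a1 := (h2.const_mul s).add_const 1
    have a2 := (h2.const_add 1).rpow_const (p := s - 1) (Or.inl (by norm_num))
    simpa using a1.mul a2
  have h4 := (h.mul h3).div_const (Real.Gamma s)
  rw [mul_one, div_self hg.ne'] at h4
  refine h4.congr' ?_
  filter_upwards [Filter.eventually_ge_atTop 1] with n hn
  have hn0 : (0:ℝ) < n := by exact_mod_cast hn
  have hgn := Real.Gamma_pos_of_pos (show 0 < s + n by positivity)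
  rw [Real.GammaSeq, hprod]
  have e : (1 + 1 / (n:ℝ)) ^ (s - 1) = ((n:ℝ) + 1) ^ (s - 1) / ((n:ℝ) ^ s / n) := by
    rw [← Real.rpow_sub_one hn0.ne', ← Real.div_rpow (by positivity) hn0.le]; congr 1; field_simp
  rw [e]
  have : (n:ℝ) ^ s ≠ 0 := by positivity
  field_simp

lemma gamma_ratio {s : ℝ} (hs : 0 < s) : ∃ C : ℝ, 0 < C ∧ ∀ n : ℕ,
    (n.factorial : ℝ) * ((n:ℝ) + 1) ^ (s - 1) ≤ C * Real.Gamma (s + n) ∧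
    Real.Gamma (s + n) ≤ C * ((n.factorial : ℝ) * ((n:ℝ) + 1) ^ (s - 1)) := by
  have h := gamma_ratio_tendsto hs
  obtain ⟨A, hA⟩ := h.bddAbove_range
  obtain ⟨B, hB⟩ := (h.inv₀ one_ne_zero).bddAbove_range
  have hg : ∀ n : ℕ, 0 < Real.Gamma (s + n) := fun n => Real.Gamma_pos_of_pos (by positivity)
  have hf : ∀ n : ℕ, (0:ℝ) < n.factorial * ((n:ℝ) + 1) ^ (s - 1) := fun n => by
    have := Nat.factorial_pos n
    positivity
  refine ⟨max (max A B) 1, by positivity, fun n => ?_⟩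
  have h1 := hA (mem_range_self n)
  have h2 := hB (mem_range_self n)
  rw [div_le_iff₀ (hg n)] at h1
  rw [inv_div, div_le_iff₀ (hf n)] at h2
  constructor
  · exact h1.trans (mul_le_mul_of_nonneg_right ((le_max_left A B).trans (le_max_left _ _)) (hg n).le)
  · exact h2.trans (mul_le_mul_of_nonneg_right ((le_max_right A B).trans (le_max_left _ _)) (hf n).le)

lemma exp_sum1 {x : ℝ} (hx : 0 ≤ x) (n : ℕ) : ∑ k ∈ Finset.range n, x ^ k / k.factorial * ((k:ℝ) + 1) ≤ (1 + x) * Real.exp x := by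
  have h1 := Real.sum_le_exp_of_nonneg hx n
  have h2 : ∑ k ∈ Finset.range n, x ^ k / k.factorial * (k:ℝ) ≤ x * Real.exp x := by
    rcases n with _ | n
    · simp; positivity
    rw [Finset.sum_range_succ']
    have h3 := Real.sum_le_exp_of_nonneg hx n
    simp only [Nat.cast_zero, mul_zero, add_zero]
    calc _ = x * ∑ k ∈ Finset.range n, x ^ k / k.factorial := by
          rw [Finset.mul_sum]
          refine Finset.sum_congr rfl fun k _ => ?_
          rw [Nat.factorial_succ, pow_succ]; push_cast
          have := Nat.factorial_pos k
          field_simp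
      _ ≤ _ := by gcongr
  simp_rw [mul_add, mul_one, Finset.sum_add_distrib]
  linarith

lemma exp_sum2 {x : ℝ} (hx : 0 ≤ x) (n j : ℕ) : (1 + x) ^ j * ∑ k ∈ Finset.range n, x ^ k / (k + j).factorial ≤ 2 ^ (j + 1) * Real.exp x := by
  have hS : 0 ≤ ∑ k ∈ Finset.range n, x ^ k / ((k + j).factorial : ℝ) := Finset.sum_nonneg fun k _ => by positivity
  have h1 : ∑ k ∈ Finset.range n, x ^ k / ((k + j).factorial : ℝ) ≤ Real.exp x := by
    refine le_trans (Finset.sum_le_sum fun k _ => ?_) (Real.sum_le_exp_of_nonneg hx n)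
    have := Nat.factorial_pos k
    have := Nat.factorial_le (Nat.le_add_right k j)
    gcongr
  have h2 : x ^ j * ∑ k ∈ Finset.range n, x ^ k / ((k + j).factorial : ℝ) ≤ Real.exp x := by
    rw [Finset.mul_sum]
    have := Real.sum_le_exp_of_nonneg hx (n + j)
    refine le_trans ?_ this
    rw [add_comm n j, Finset.sum_range_add]
    refine le_trans (le_of_eq ?_) (le_add_of_nonneg_left (Finset.sum_nonneg fun k _ => by positivity))
    refine Finset.sum_congr rfl fun k _ => ?_
    rw [add_comm k j, pow_add]; ring
  have h3 : (1 + x) ^ j ≤ 2 ^ j * (1 + x ^ j) := by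
    rcases le_total x 1 with h | h
    · calc (1 + x) ^ j ≤ 2 ^ j := by gcongr; linarith
        _ ≤ _ := by have : 0 ≤ x ^ j := by positivity
                    nlinarith [show (0:ℝ) < 2 ^ j by positivity]
    · calc (1 + x) ^ j ≤ (2 * x) ^ j := by gcongr; linarith
        _ = 2 ^ j * x ^ j := mul_pow _ _ _
        _ ≤ _ := by gcongr; linarith
  calc _ ≤ 2 ^ j * (1 + x ^ j) * ∑ k ∈ Finset.range n, x ^ k / ((k + j).factorial : ℝ) := by gcongr
    _ ≤ 2 ^ j * (Real.exp x + Real.exp x) := by rw [mul_assoc]; gcongr; linarith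
    _ = _ := by ring

lemma exp_sum {e : ℝ} (he : e ≤ 1) : ∃ C : ℝ, 0 < C ∧ ∀ x : ℝ, 0 ≤ x → ∀ n : ℕ,
    ∑ k ∈ Finset.range n, x ^ k / k.factorial * ((k:ℝ) + 1) ^ e ≤ C * (Real.exp x * (1 + x) ^ e) := by
  obtain ⟨j', hj'⟩ := exists_nat_ge (-e)
  obtain ⟨j, hj, hj1⟩ : ∃ j : ℕ, -e ≤ j ∧ 1 ≤ j := ⟨j' + 1, by push_cast; linarith, by omega⟩
  refine ⟨1 + (j:ℝ) ^ j * 2 ^ (j + 1), by positivity, fun x hx n => ?_⟩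
  have hp : ∀ k : ℕ, x ^ k / k.factorial * ((k:ℝ) + 1) ^ e ≤ (1 + x) ^ (e - 1) * (x ^ k / k.factorial * ((k:ℝ) + 1)) +
      (1 + x) ^ e * ((j:ℝ) ^ j * ((1 + x) ^ j * (x ^ k / (k + j).factorial))) := by
    intro k
    have hk := Nat.factorial_pos k
    have hkj := Nat.factorial_pos (k + j)
    rcases le_total (k:ℝ) x with h | h
    · refine le_trans ?_ (le_add_of_nonneg_left (by positivity))
      have e1 : ((k:ℝ) + 1) ^ e * ((k:ℝ) + 1) ^ j ≤ (1 + x) ^ e * (1 + x) ^ j := by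
        rw [← Real.rpow_natCast, ← Real.rpow_natCast, ← Real.rpow_add (by positivity), ← Real.rpow_add (by positivity)]
        exact Real.rpow_le_rpow (by positivity) (by linarith) (by linarith)
      have e2 : ((k + j).factorial : ℝ) ≤ k.factorial * ((j:ℝ) ^ j * ((k:ℝ) + 1) ^ j) := by
        rw [← Nat.factorial_mul_ascFactorial]
        push_cast
        gcongr
        rw [← mul_pow]
        have := Nat.ascFactorial_le_pow_add k j
        calc (((k + 1).ascFactorial j : ℕ) : ℝ) ≤ (((k + j) ^ j : ℕ) : ℝ) := by exact_mod_cast this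
          _ ≤ _ := by
            push_cast
            gcongr
            have : (1:ℝ) ≤ j := by exact_mod_cast hj1
            nlinarith [k.cast_nonneg (α := ℝ)]
      have e3 : x ^ k / (k.factorial : ℝ) ≤ (j:ℝ) ^ j * ((k:ℝ) + 1) ^ j * (x ^ k / ((k + j).factorial : ℝ)) := by
        rw [mul_div_assoc', div_le_div_iff₀ (by positivity) (by positivity)]
        calc x ^ k * ((k + j).factorial : ℝ) ≤ x ^ k * (k.factorial * ((j:ℝ) ^ j * ((k:ℝ) + 1) ^ j)) := by gcongr
          _ = _ := by ring
      calc x ^ k / k.factorial * ((k:ℝ) + 1) ^ e ≤ (j:ℝ) ^ j * ((k:ℝ) + 1) ^ j * (x ^ k / ((k + j).factorial : ℝ)) * ((k:ℝ) + 1) ^ e := by gcongr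
        _ = (((k:ℝ) + 1) ^ e * ((k:ℝ) + 1) ^ j) * ((j:ℝ) ^ j * (x ^ k / ((k + j).factorial : ℝ))) := by ring
        _ ≤ ((1 + x) ^ e * (1 + x) ^ j) * ((j:ℝ) ^ j * (x ^ k / ((k + j).factorial : ℝ))) := by gcongr
        _ = _ := by ring
    · refine le_trans ?_ (le_add_of_nonneg_right (by positivity))
      have e1 : ((k:ℝ) + 1) ^ e = ((k:ℝ) + 1) ^ (e - 1) * ((k:ℝ) + 1) := by
        rw [← Real.rpow_add_one (by positivity)]; congr 1; ring
      have e2 : ((k:ℝ) + 1) ^ (e - 1) ≤ (1 + x) ^ (e - 1) :=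
        Real.rpow_le_rpow_of_nonpos (by positivity) (by linarith) (by linarith)
      calc _ = ((k:ℝ) + 1) ^ (e - 1) * (x ^ k / k.factorial * ((k:ℝ) + 1)) := by rw [e1]; ring
        _ ≤ _ := by gcongr
  calc _ ≤ ∑ k ∈ Finset.range n, ((1 + x) ^ (e - 1) * (x ^ k / k.factorial * ((k:ℝ) + 1)) +
      (1 + x) ^ e * ((j:ℝ) ^ j * ((1 + x) ^ j * (x ^ k / (k + j).factorial)))) := Finset.sum_le_sum fun k _ => hp k
    _ = (1 + x) ^ (e - 1) * ∑ k ∈ Finset.range n, (x ^ k / k.factorial * ((k:ℝ) + 1)) +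
      (1 + x) ^ e * ((j:ℝ) ^ j * ((1 + x) ^ j * ∑ k ∈ Finset.range n, (x ^ k / (k + j).factorial))) := by
        simp_rw [Finset.sum_add_distrib, Finset.mul_sum]
    _ ≤ (1 + x) ^ (e - 1) * ((1 + x) * Real.exp x) + (1 + x) ^ e * ((j:ℝ) ^ j * (2 ^ (j + 1) * Real.exp x)) := by
        exact add_le_add (mul_le_mul_of_nonneg_left (exp_sum1 hx n) (by positivity))
          (mul_le_mul_of_nonneg_left (mul_le_mul_of_nonneg_left (exp_sum2 hx n j) (by positivity)) (by positivity))
    _ = _ := by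
        have : (1 + x) ^ e = (1 + x) ^ (e - 1) * (1 + x) := by
          rw [← Real.rpow_add_one (by positivity)]; congr 1; ring
        rw [this]; ring

lemma bessel_coef {α : ℝ} (hα : -1 < α) : ∃ C : ℝ, 0 < C ∧ ∀ m : ℕ,
    1 / (4 ^ m * m.factorial * Real.Gamma (α + 1 + m)) ≤ C * (((2 * m : ℕ):ℝ) + 1) ^ (-α - 1 / 2) / (2 * m).factorial := by
  obtain ⟨C1, hC1, h1⟩ := gamma_ratio (s := 1 / 2) (by norm_num)
  obtain ⟨C2, hC2, h2⟩ := gamma_ratio (s := α + 1) (by linarith)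
  obtain ⟨C3, hC3, h3⟩ : ∃ C3 : ℝ, 0 < C3 ∧ ∀ m : ℕ, ((m:ℝ) + 1) ^ (-α - 1 / 2) ≤ C3 * (((2 * m : ℕ):ℝ) + 1) ^ (-α - 1 / 2) := by
    rcases le_total 0 (-α - 1 / 2) with h | h
    · refine ⟨1, one_pos, fun m => ?_⟩
      rw [one_mul]
      push_cast
      exact Real.rpow_le_rpow (by positivity) (by linarith [m.cast_nonneg (α := ℝ)]) h
    · refine ⟨(1 / 2) ^ (-α - 1 / 2), by positivity, fun m => ?_⟩
      rw [← Real.mul_rpow (by positivity) (by positivity)]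
      push_cast
      exact Real.rpow_le_rpow_of_nonpos (by positivity) (by linarith [m.cast_nonneg (α := ℝ)]) h
  refine ⟨C1 * C2 * C3, by positivity, fun m => ?_⟩
  have hg := Real.Gamma_pos_of_pos (show 0 < α + 1 + m by have := m.cast_nonneg (α := ℝ); linarith)
  have hd := Real.Gamma_mul_Gamma_add_half ((m:ℝ) + 1 / 2)
  rw [show (m:ℝ) + 1 / 2 + 1 / 2 = m + 1 by ring, show 2 * ((m:ℝ) + 1 / 2) = ((2 * m : ℕ):ℝ) + 1 by push_cast; ring,
    Real.Gamma_nat_eq_factorial, Real.Gamma_nat_eq_factorial, show 1 - (((2 * m : ℕ):ℝ) + 1) = -((2 * m : ℕ):ℝ) by ring,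
    Real.rpow_neg (by norm_num), Real.rpow_natCast, pow_mul] at hd
  norm_num at hd
  have a1 := (h1 m).2
  have a2 := (h2 m).1
  rw [show (1:ℝ) / 2 + m = m + 1 / 2 by ring] at a1
  have hm := Nat.factorial_pos m
  have h2m := Nat.factorial_pos (2 * m)
  have hsq : (1:ℝ) ≤ √π := by rw [Real.one_le_sqrt]; linarith [Real.pi_gt_three]
  have hgh := Real.Gamma_pos_of_pos (show 0 < (m:ℝ) + 1 / 2 by positivity)
  have b1 : ((2 * m).factorial : ℝ) ≤ 4 ^ m * m.factorial * Real.Gamma (m + 1 / 2) := by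
    have : ((2 * m).factorial : ℝ) * √π = 4 ^ m * m.factorial * Real.Gamma (m + 1 / 2) := by
      have h4 : (0:ℝ) < 4 ^ m := by positivity
      generalize Real.Gamma ((m:ℝ) + 1 / 2) = G at hd ⊢
      field_simp at hd; linarith
    rw [← this]
    exact le_mul_of_one_le_right (by positivity) hsq
  rw [div_le_div_iff₀ (by positivity) (by positivity), one_mul]
  have key : Real.Gamma (m + 1 / 2) ≤ C1 * C2 * C3 * (((2 * m : ℕ):ℝ) + 1) ^ (-α - 1 / 2) * Real.Gamma (α + 1 + m) := by
    calc Real.Gamma (m + 1 / 2) ≤ C1 * (m.factorial * ((m:ℝ) + 1) ^ ((1:ℝ) / 2 - 1)) := a1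
      _ = C1 * ((m.factorial * ((m:ℝ) + 1) ^ (α + 1 - 1)) * ((m:ℝ) + 1) ^ (-α - 1 / 2)) := by
        rw [mul_assoc (m.factorial : ℝ), ← Real.rpow_add (by positivity)]; congr 3; ring
      _ ≤ C1 * ((C2 * Real.Gamma (α + 1 + m)) * (C3 * (((2 * m : ℕ):ℝ) + 1) ^ (-α - 1 / 2))) := by
        gcongr
        exact h3 m
      _ = _ := by ring
  calc ((2 * m).factorial : ℝ) ≤ 4 ^ m * m.factorial * Real.Gamma (m + 1 / 2) := b1
    _ ≤ 4 ^ m * m.factorial * (C1 * C2 * C3 * (((2 * m : ℕ):ℝ) + 1) ^ (-α - 1 / 2) * Real.Gamma (α + 1 + m)) := by gcongr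
    _ = _ := by ring

lemma bessel_bound {α : ℝ} (hα : -1 < α) : ∃ C : ℝ, 0 < C ∧ ∀ x : ℝ, 0 ≤ x → ∀ M : ℕ,
    ∑ m ∈ Finset.range M, (x / 2) ^ (2 * m) / (m.factorial * Real.Gamma (α + 1 + m)) ≤
      C * (Real.exp x * (1 + x) ^ (-α - 1 / 2)) := by
  obtain ⟨C1, hC1, h1⟩ := bessel_coef hα
  obtain ⟨C2, hC2, h2⟩ := exp_sum (e := -α - 1 / 2) (by linarith)
  refine ⟨C1 * C2, by positivity, fun x hx M => ?_⟩
  set g : ℕ → ℝ := fun k => x ^ k / k.factorial * ((k:ℝ) + 1) ^ (-α - 1 / 2) with hg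
  have hg0 : ∀ k, 0 ≤ g k := fun k => by simp only [hg]; positivity
  calc _ ≤ ∑ m ∈ Finset.range M, C1 * g (2 * m) := by
        refine Finset.sum_le_sum fun m _ => ?_
        have := h1 m
        calc _ = x ^ (2 * m) * (1 / (4 ^ m * m.factorial * Real.Gamma (α + 1 + m))) := by
              rw [div_pow, pow_mul 2 2 m]; norm_num; rw [div_div]; ring
          _ ≤ x ^ (2 * m) * (C1 * (((2 * m : ℕ):ℝ) + 1) ^ (-α - 1 / 2) / (2 * m).factorial) := by gcongr
          _ = _ := by simp only [hg]; ring
    _ = C1 * ∑ k ∈ (Finset.range M).image (fun m => 2 * m), g k := by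
        rw [← Finset.mul_sum, Finset.sum_image (fun a _ b _ h => by simpa using h)]
    _ ≤ C1 * ∑ k ∈ Finset.range (2 * M), g k := by
        refine mul_le_mul_of_nonneg_left (Finset.sum_le_sum_of_subset_of_nonneg ?_ fun k _ _ => hg0 k) hC1.le
        intro k hk
        simp only [Finset.mem_image, Finset.mem_range] at hk ⊢
        obtain ⟨m, hm, rfl⟩ := hk; omega
    _ ≤ C1 * (C2 * (Real.exp x * (1 + x) ^ (-α - 1 / 2))) := by gcongr; exact h2 x hx _
    _ = _ := by ring
end

section

lemma gint {a r : ℝ} (ha : 0 < a) (hr : 0 < r) :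
    IntegrableOn (fun s : ℝ => s ^ (a - 1) * Real.exp (-(r * s))) (Ioi 0) := by
  have := integrableOn_rpow_mul_exp_neg_mul_rpow (p := 1) (s := a - 1) (b := r) (by linarith) one_pos hr
  simpa [Real.rpow_one] using this

lemma one_add_rpow_le {e a δ s : ℝ} (he : e ≤ 1) (ha : 0 ≤ a) (hδ : 0 < δ) (hs : 0 < s) :
    (1 + s * a) ^ e ≤ ((δ + a) / δ) ^ e * (1 + (s * δ) ^ e) := by
  have hu : 0 < s * δ := by positivity
  have hr : 0 < (δ + a) / δ := by positivity
  rcases le_total 0 e with h | h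
  · calc (1 + s * a) ^ e ≤ ((δ + a) / δ * (1 + s * δ)) ^ e := by
          refine Real.rpow_le_rpow (by positivity) ?_ h
          have : (δ + a) / δ * (1 + s * δ) = 1 + s * a + (a / δ + s * δ) := by field_simp; ring
          rw [this]; have : 0 ≤ a / δ := by positivity
          linarith
      _ = ((δ + a) / δ) ^ e * (1 + s * δ) ^ e := Real.mul_rpow hr.le (by positivity)
      _ ≤ _ := by
          refine mul_le_mul_of_nonneg_left ?_ (by positivity)
          have := Real.rpow_add_le_add_rpow (p := e) zero_le_one hu.le h he
          rwa [Real.one_rpow] at this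
  · rcases le_total (s * δ) 1 with h1 | h1
    · calc (1 + s * a) ^ e ≤ ((δ + a) / δ * (s * δ)) ^ e := by
            refine Real.rpow_le_rpow_of_nonpos (by positivity) ?_ h
            have : (δ + a) / δ * (s * δ) = s * δ + s * a := by field_simp
            rw [this]; linarith
        _ = ((δ + a) / δ) ^ e * (s * δ) ^ e := Real.mul_rpow hr.le (by positivity)
        _ ≤ _ := by
          refine mul_le_mul_of_nonneg_left ?_ (by positivity)
          linarith
    · calc (1 + s * a) ^ e ≤ ((δ + a) / δ) ^ e := by
            refine Real.rpow_le_rpow_of_nonpos (by positivity) ?_ h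
            have : (δ + a) / δ = 1 + 1 / δ * a := by field_simp
            rw [this]
            have : 1 / δ ≤ s := by rw [div_le_iff₀ hδ]; exact h1
            nlinarith
        _ ≤ _ := by
          refine le_mul_of_one_le_right (by positivity) ?_
          have : 0 < (s * δ) ^ e := by positivity
          linarith

lemma antidiag_le {f g : ℕ → ℝ} (hf : ∀ n, 0 ≤ f n) (hg : ∀ n, 0 ≤ g n) (M : ℕ) :
    ∑ N ∈ Finset.range M, ∑ mn ∈ Finset.HasAntidiagonal.antidiagonal N, f mn.1 * g mn.2 ≤
      (∑ m ∈ Finset.range M, f m) * ∑ n ∈ Finset.range M, g n := by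
  rw [Finset.sum_mul_sum, ← Finset.sum_product']
  have h := Finset.sum_fiberwise_of_maps_to (s := (Finset.range M ×ˢ Finset.range M).filter fun p : ℕ × ℕ => p.1 + p.2 < M)
    (t := Finset.range M) (g := fun p => p.1 + p.2) (fun p hp => by simpa using (Finset.mem_filter.1 hp).2)
    (fun p : ℕ × ℕ => f p.1 * g p.2)
  calc _ = ∑ p ∈ (Finset.range M ×ˢ Finset.range M).filter fun p : ℕ × ℕ => p.1 + p.2 < M, f p.1 * g p.2 := by
        rw [← h]
        refine Finset.sum_congr rfl fun N hN => Finset.sum_congr ?_ fun _ _ => rfl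
        rw [Finset.mem_range] at hN
        ext p
        simp only [Finset.HasAntidiagonal.mem_antidiagonal, Finset.mem_filter, Finset.mem_product, Finset.mem_range]
        omega
    _ ≤ _ := Finset.sum_le_sum_of_subset_of_nonneg (Finset.filter_subset _ _) fun p _ _ => mul_nonneg (hf _) (hg _)

lemma int4 {μ : Measure ℝ} {f g h k : ℝ → ℝ} (hf : Integrable f μ) (hg : Integrable g μ) (hh : Integrable h μ) (hk : Integrable k μ) :
    ∫ x, (f x + g x + h x + k x) ∂μ = ∫ x, f x ∂μ + ∫ x, g x ∂μ + ∫ x, h x ∂μ + ∫ x, k x ∂μ := by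
  have h1 : Integrable (fun x => f x + g x) μ := hf.add hg
  have h2 : Integrable (fun x => f x + g x + h x) μ := h1.add hh
  rw [integral_add h2 hk, integral_add h1 hh, integral_add hf hg]

lemma laplace_int {γ e δ : ℝ} (hγ : 0 < γ + e) (hδ : 0 < δ) :
    IntegrableOn (fun s : ℝ => s ^ (γ - 1) * Real.exp (-(δ * s)) * (s * δ) ^ e) (Ioi 0) ∧
    ∫ s in Ioi (0:ℝ), s ^ (γ - 1) * Real.exp (-(δ * s)) * (s * δ) ^ e = δ ^ (-γ) * Real.Gamma (γ + e) := by
  have h : ∀ s ∈ Ioi (0:ℝ), s ^ (γ - 1) * Real.exp (-(δ * s)) * (s * δ) ^ e =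
      δ ^ e * (s ^ (γ + e - 1) * Real.exp (-(δ * s))) := by
    intro s hs
    have hs : 0 < s := hs
    rw [Real.mul_rpow hs.le hδ.le, show γ + e - 1 = (γ - 1) + e by ring, Real.rpow_add hs]; ring
  constructor
  · exact IntegrableOn.congr_fun ((gint hγ hδ).const_mul (δ ^ e)) (fun s hs => (h s hs).symm) measurableSet_Ioi
  · rw [setIntegral_congr_fun measurableSet_Ioi h, integral_const_mul, Real.integral_rpow_mul_exp_neg_mul_Ioi hγ hδ,
      one_div, Real.inv_rpow hδ.le, ← Real.rpow_neg hδ.le, ← mul_assoc, ← Real.rpow_add hδ]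
    congr 2; ring

lemma kernel_partial {α β : ℝ} (hα : -1 < α) (hβ : -1 < β) : ∃ K : ℝ, 0 < K ∧ ∀ a b δ : ℝ, 0 ≤ a → 0 ≤ b → 0 < δ →
    ∀ M : ℕ, ∑ N ∈ Finset.range M, Real.Gamma (α + β + 2 + 2 * N) / 4 ^ N * (a + b + δ) ^ (-(α + β + 2) - 2 * N) *
      (∑ mn ∈ Finset.HasAntidiagonal.antidiagonal N, jk α β mn.1 mn.2 * ((a ^ 2) ^ mn.1 * (b ^ 2) ^ mn.2)) ≤
      K * (δ⁻¹ * (δ + a) ^ (-α - 1 / 2) * (δ + b) ^ (-β - 1 / 2)) := by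
  obtain ⟨C1, hC1, h1⟩ := bessel_bound hα
  obtain ⟨C2, hC2, h2⟩ := bessel_bound hβ
  set γ := α + β + 2 with hγ
  set e1 := -α - 1 / 2 with he1
  set e2 := -β - 1 / 2 with he2
  have g0 : 0 < Real.Gamma γ := Real.Gamma_pos_of_pos (by linarith)
  have g1 : 0 < Real.Gamma (γ + e1) := Real.Gamma_pos_of_pos (by linarith)
  have g2 : 0 < Real.Gamma (γ + e2) := Real.Gamma_pos_of_pos (by linarith)
  have g3 : 0 < Real.Gamma (γ + (e1 + e2)) := Real.Gamma_pos_of_pos (by linarith)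
  refine ⟨C1 * C2 * (Real.Gamma γ + Real.Gamma (γ + e1) + Real.Gamma (γ + e2) + Real.Gamma (γ + (e1 + e2))), by positivity,
    fun a b δ ha hb hδ M => ?_⟩
  have hC : 0 < a + b + δ := by positivity
  have hcγ : ∀ N : ℕ, 0 < γ + 2 * N := fun N => by have := N.cast_nonneg (α := ℝ); linarith
  set q : ℕ → ℝ := fun N => ∑ mn ∈ Finset.HasAntidiagonal.antidiagonal N, jk α β mn.1 mn.2 * ((a ^ 2) ^ mn.1 * (b ^ 2) ^ mn.2) with hq
  have hG : ∀ m : ℕ, 0 < Real.Gamma (α + 1 + m) := fun m => Real.Gamma_pos_of_pos (by have := m.cast_nonneg (α := ℝ); linarith)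
  have hG' : ∀ m : ℕ, 0 < Real.Gamma (β + 1 + m) := fun m => Real.Gamma_pos_of_pos (by have := m.cast_nonneg (α := ℝ); linarith)
  have hF : ∀ m : ℕ, (0:ℝ) < m.factorial := fun m => by exact_mod_cast m.factorial_pos
  have hI : ∀ N : ℕ, IntegrableOn (fun s : ℝ => q N / 4 ^ N * (s ^ (γ + 2 * N - 1) * Real.exp (-((a + b + δ) * s)))) (Ioi 0) :=
    fun N => (gint (hcγ N) hC).const_mul _
  have e : ∑ N ∈ Finset.range M, Real.Gamma (γ + 2 * N) / 4 ^ N * (a + b + δ) ^ (-γ - 2 * N) * q N =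
      ∫ s in Ioi (0:ℝ), ∑ N ∈ Finset.range M, q N / 4 ^ N * (s ^ (γ + 2 * N - 1) * Real.exp (-((a + b + δ) * s))) := by
    rw [integral_finsetSum _ fun N _ => hI N]
    refine Finset.sum_congr rfl fun N _ => ?_
    rw [integral_const_mul, Real.integral_rpow_mul_exp_neg_mul_Ioi (hcγ N) hC, one_div, Real.inv_rpow hC.le, ← Real.rpow_neg hC.le,
      show -(γ + 2 * (N:ℝ)) = -γ - 2 * N by ring]
    ring
  rw [e]
  have L0 := laplace_int (γ := γ) (e := 0) (by linarith) hδ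
  have L1 := laplace_int (γ := γ) (e := e1) (by linarith) hδ
  have L2 := laplace_int (γ := γ) (e := e2) (by linarith) hδ
  have L3 := laplace_int (γ := γ) (e := e1 + e2) (by linarith) hδ
  set A := C1 * C2 * (((δ + a) / δ) ^ e1 * ((δ + b) / δ) ^ e2) with hA
  have hpt : ∀ s ∈ Ioi (0:ℝ), ∑ N ∈ Finset.range M, q N / 4 ^ N * (s ^ (γ + 2 * N - 1) * Real.exp (-((a + b + δ) * s))) ≤
      A * (s ^ (γ - 1) * Real.exp (-(δ * s)) * (s * δ) ^ (0:ℝ) + s ^ (γ - 1) * Real.exp (-(δ * s)) * (s * δ) ^ e1 +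
        s ^ (γ - 1) * Real.exp (-(δ * s)) * (s * δ) ^ e2 + s ^ (γ - 1) * Real.exp (-(δ * s)) * (s * δ) ^ (e1 + e2)) := by
    intro s hs
    have hs : 0 < s := hs
    have s1 : ∑ N ∈ Finset.range M, q N / 4 ^ N * (s ^ (γ + 2 * N - 1) * Real.exp (-((a + b + δ) * s))) =
        s ^ (γ - 1) * Real.exp (-((a + b + δ) * s)) * ∑ N ∈ Finset.range M, ∑ mn ∈ Finset.HasAntidiagonal.antidiagonal N,
          ((s * a / 2) ^ (2 * mn.1) / (mn.1.factorial * Real.Gamma (α + 1 + mn.1))) *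
          ((s * b / 2) ^ (2 * mn.2) / (mn.2.factorial * Real.Gamma (β + 1 + mn.2))) := by
      rw [Finset.mul_sum]
      refine Finset.sum_congr rfl fun N _ => ?_
      rw [show γ + 2 * (N:ℝ) - 1 = (γ - 1) + ((2 * N : ℕ):ℝ) by push_cast; ring, Real.rpow_add_natCast hs.ne']
      simp only [hq]
      rw [Finset.sum_div, Finset.sum_mul, Finset.mul_sum]
      refine Finset.sum_congr rfl fun mn hmn => ?_
      rw [Finset.HasAntidiagonal.mem_antidiagonal] at hmn
      rw [← hmn, jk]
      have := hG mn.1; have := hG' mn.2; have := hF mn.1; have := hF mn.2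
      rw [show s * a / 2 = s * (a * (1/2)) by ring, show s * b / 2 = s * (b * (1/2)) by ring]
      rw [show (4:ℝ) = 2 ^ 2 by norm_num]
      simp only [mul_pow, mul_add, pow_add, pow_mul, one_div, inv_pow]
      field_simp
    rw [s1]
    have s2 := antidiag_le (f := fun m => (s * a / 2) ^ (2 * m) / (m.factorial * Real.Gamma (α + 1 + m)))
      (g := fun m => (s * b / 2) ^ (2 * m) / (m.factorial * Real.Gamma (β + 1 + m)))
      (fun m => by have := hG m; have := hF m; positivity) (fun m => by have := hG' m; have := hF m; positivity) M
    have s3 := h1 (s * a) (by positivity) M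
    have s4 := h2 (s * b) (by positivity) M
    have s5 := one_add_rpow_le (e := e1) (by linarith) ha hδ hs
    have s6 := one_add_rpow_le (e := e2) (by linarith) hb hδ hs
    have p0 : 0 ≤ ∑ m ∈ Finset.range M, (s * b / 2) ^ (2 * m) / (m.factorial * Real.Gamma (β + 1 + m)) :=
      Finset.sum_nonneg fun m _ => by have := hG' m; have := hF m; positivity
    calc _ ≤ s ^ (γ - 1) * Real.exp (-((a + b + δ) * s)) * ((C1 * (Real.exp (s * a) * (1 + s * a) ^ e1)) * (C2 * (Real.exp (s * b) * (1 + s * b) ^ e2))) := by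
          refine mul_le_mul_of_nonneg_left (s2.trans (mul_le_mul s3 s4 p0 (by positivity))) (by positivity)
      _ ≤ s ^ (γ - 1) * Real.exp (-((a + b + δ) * s)) * ((C1 * (Real.exp (s * a) * (((δ + a) / δ) ^ e1 * (1 + (s * δ) ^ e1)))) *
          (C2 * (Real.exp (s * b) * (((δ + b) / δ) ^ e2 * (1 + (s * δ) ^ e2))))) := by
          gcongr
      _ = _ := by
          rw [Real.rpow_zero, Real.rpow_add (by positivity), show -((a + b + δ) * s) = -(s * a) + (-(s * b) + -(δ * s)) by ring, Real.exp_add, Real.exp_add,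
            Real.exp_neg (s * a), Real.exp_neg (s * b), hA]
          have := Real.exp_pos (s * a)
          have := Real.exp_pos (s * b)
          field_simp
          ring
  have hInt := (((L0.1.add L1.1).add L2.1).add L3.1).const_mul A
  have hle := setIntegral_mono_on (integrable_finsetSum _ fun N _ => hI N) hInt measurableSet_Ioi hpt
  refine hle.trans (le_of_eq ?_)
  simp only [Pi.add_apply] at *
  rw [integral_const_mul, int4 L0.1 L1.1 L2.1 L3.1,
    L0.2, L1.2, L2.2, L3.2, hA, Real.div_rpow (by positivity) hδ.le, Real.div_rpow (by positivity) hδ.le, add_zero]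
  have : δ⁻¹ = δ ^ (-γ) / (δ ^ e1 * δ ^ e2) := by
    rw [← Real.rpow_add hδ, ← Real.rpow_sub hδ, ← Real.rpow_neg_one]; congr 1; simp only [hγ, he1, he2]; ring
  rw [this]
  field_simp
end

section

section mercer
variable {α β : ℝ} [hα : Fact (-1 < α)] [hβ : Fact (-1 < β)]

/-- weights -/
def jw (α β t : ℝ) (N : ℕ) : ℝ :=
  Real.Gamma (α + β + 2 + 2 * N) / 4 ^ N * Real.cosh (t / 2) ^ (-(α + β + 2) - 2 * N)

lemma jw_pos {α β : ℝ} [hα : Fact (-1 < α)] [hβ : Fact (-1 < β)] (t : ℝ) (N : ℕ) : 0 < jw α β t N := by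
  have h1 := hα.out; have h2 := hβ.out
  have := Real.Gamma_pos_of_pos (show 0 < α + β + 2 + 2 * (N:ℝ) by have := N.cast_nonneg (α := ℝ); linarith)
  have := Real.cosh_pos (t / 2)
  unfold jw; positivity

lemma jrho_nonneg {α β : ℝ} [hα : Fact (-1 < α)] [hβ : Fact (-1 < β)] (N n : ℕ) : 0 ≤ jrho α β N n := by
  have h1 := hα.out; have h2 := hβ.out
  have := Real.Gamma_pos_of_pos (show 0 < α + β + 2 + N + (n:ℝ) by have := N.cast_nonneg (α := ℝ); have := n.cast_nonneg (α := ℝ); linarith)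
  unfold jrho; positivity

lemma jk_nonneg {α β : ℝ} [hα : Fact (-1 < α)] [hβ : Fact (-1 < β)] (m n : ℕ) : 0 ≤ jk α β m n := by
  have h1 := hα.out; have h2 := hβ.out
  have := Real.Gamma_pos_of_pos (show 0 < α + 1 + (m:ℝ) by have := m.cast_nonneg (α := ℝ); linarith)
  have := Real.Gamma_pos_of_pos (show 0 < β + 1 + (n:ℝ) by have := n.cast_nonneg (α := ℝ); linarith)
  unfold jk; positivity

lemma jrho_col {α β : ℝ} [hα : Fact (-1 < α)] [hβ : Fact (-1 < β)] {t : ℝ} (ht : 0 < t) (n : ℕ) :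
    HasSum (fun N : ℕ => if n ≤ N then Real.sinh (t / 2) * jw α β t N * jrho α β N n else 0)
      (2 ^ (α + β + 1) * Real.exp (-t * (n + (α + β + 1) / 2))) := by
  have h1 := hα.out; have h2 := hβ.out
  have hn := n.cast_nonneg (α := ℝ)
  have hc : 0 < α + β + 2 + 2 * (n:ℝ) := by linarith
  have h := (gen_E hc (half_pos ht)).mul_left ((4:ℝ) ^ n)⁻¹
  have hz : ∑ i ∈ Finset.range n, (if n ≤ i then Real.sinh (t / 2) * jw α β t i * jrho α β i n else 0) = 0 :=
    Finset.sum_eq_zero fun i hi => by rw [if_neg (by simpa using hi)]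
  have e : (2:ℝ) ^ (α + β + 1) * Real.exp (-t * (n + (α + β + 1) / 2)) =
      ((4:ℝ) ^ n)⁻¹ * (2 ^ (α + β + 2 + 2 * (n:ℝ) - 1) * Real.exp (-(α + β + 2 + 2 * (n:ℝ) - 1) * (t / 2))) := by
    rw [show α + β + 2 + 2 * (n:ℝ) - 1 = (α + β + 1) + ((2 * n : ℕ):ℝ) by push_cast; ring, Real.rpow_add_natCast (by norm_num), pow_mul]
    norm_num
    field_simp
    congr 1; ring
  rw [← hasSum_nat_add_iff' n, hz, sub_zero, e]
  refine h.congr_fun fun l => ?_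
  rw [if_pos (by omega), jw, jrho, ca]
  have hd : (((l + n).descFactorial n : ℕ) : ℝ) / ((l + n).factorial : ℝ) = 1 / l.factorial := by
    rw [div_eq_div_iff (by positivity) (by positivity), one_mul]
    have := Nat.factorial_mul_descFactorial (n := l + n) (k := n) (by omega)
    rw [Nat.add_sub_cancel] at this
    rw [mul_comm]; exact_mod_cast this
  rw [hd]
  have g1 := Real.Gamma_pos_of_pos (show 0 < α + β + 2 + 2 * (n:ℝ) + l by positivity)
  push_cast
  rw [show α + β + 2 + 2 * ((l:ℝ) + n) = α + β + 2 + 2 * n + 2 * l by ring,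
    show α + β + 2 + ((l:ℝ) + n) + n = α + β + 2 + 2 * n + l by ring,
    show -(α + β + 2) - 2 * ((l:ℝ) + n) = -(α + β + 2 + 2 * n) - 2 * l by ring, pow_add]
  field_simp

lemma jQ_nonneg (N : ℕ) {x y : ℝ} (hx : x ∈ Icc (0:ℝ) 1) (hy : y ∈ Icc (0:ℝ) 1) : 0 ≤ jQ α β N x y := by
  refine Finset.sum_nonneg fun mn _ => mul_nonneg (jk_nonneg _ _) ?_
  have := hx.1; have := hy.1
  have : 0 ≤ 1 - x := by linarith [hx.2]
  have : 0 ≤ 1 - y := by linarith [hy.2]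
  positivity

/-- the double family -/
def jF (α β : ℝ) [hα : Fact (-1 < α)] [hβ : Fact (-1 < β)] (t x y : ℝ) (p : ℕ × ℕ) : ℝ :=
  (if p.2 ≤ p.1 then Real.sinh (t / 2) * jw α β t p.1 * jrho α β p.1 p.2 else 0) *
    ((jq α β p.2).eval x * (jq α β p.2).eval y)

lemma jF_row (t x y : ℝ) (N : ℕ) : HasSum (fun n => jF α β t x y (N, n)) (Real.sinh (t / 2) * jw α β t N * jQ α β N x y) := by
  rw [jQ_eq, Finset.mul_sum]
  have : ∑ n ∈ Finset.range (N + 1), Real.sinh (t / 2) * jw α β t N * (jrho α β N n * (jq α β n).eval x * (jq α β n).eval y) =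
      ∑ n ∈ Finset.range (N + 1), jF α β t x y (N, n) := by
    refine Finset.sum_congr rfl fun n hn => ?_
    unfold jF
    rw [if_pos (by simpa [Nat.lt_succ_iff] using hn)]; ring
  rw [this]
  refine hasSum_sum_of_ne_finset_zero fun n hn => ?_
  unfold jF
  rw [if_neg (by simpa [Nat.lt_succ_iff] using hn), zero_mul]

lemma jF_col {t : ℝ} (ht : 0 < t) (x y : ℝ) (n : ℕ) : HasSum (fun N => jF α β t x y (N, n))
    (2 ^ (α + β + 1) * (Real.exp (-t * (n + (α + β + 1) / 2)) * (jq α β n).eval x * (jq α β n).eval y)) := by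
  have := (jrho_col (α := α) (β := β) ht n).mul_right ((jq α β n).eval x * (jq α β n).eval y)
  convert! this using 1; ring

lemma sk_nonneg {t : ℝ} (ht : 0 < t) (p : ℕ × ℕ) : 0 ≤ (if p.2 ≤ p.1 then Real.sinh (t / 2) * jw α β t p.1 * jrho α β p.1 p.2 else 0) := by
  split_ifs
  · exact mul_nonneg (mul_nonneg (Real.sinh_nonneg_iff.2 (by linarith)) (jw_pos t _).le) (jrho_nonneg _ _)
  · exact le_rfl

/-- main kernel size constant -/
lemma kpart : ∃ K : ℝ, 0 < K ∧ ∀ t a b x y : ℝ, 0 < t → 0 ≤ a → 0 ≤ b → x * y = a ^ 2 → (1 - x) * (1 - y) = b ^ 2 → 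
    0 < Real.cosh (t / 2) - a - b → ∀ M : ℕ, ∑ N ∈ Finset.range M, Real.sinh (t / 2) * jw α β t N * jQ α β N x y ≤
      K * (Real.sinh (t / 2) * ((Real.cosh (t / 2) - a - b)⁻¹ * (Real.cosh (t / 2) - a - b + a) ^ (-α - 1 / 2) *
        (Real.cosh (t / 2) - a - b + b) ^ (-β - 1 / 2))) := by
  obtain ⟨K, hK, h⟩ := kernel_partial hα.out hβ.out
  refine ⟨K, hK, fun t a b x y ht ha hb hx hy hd M => ?_⟩
  have := mul_le_mul_of_nonneg_left (h a b _ ha hb hd M) (Real.sinh_nonneg_iff.2 (half_pos ht).le)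
  rw [Finset.mul_sum] at this
  calc _ = _ := Finset.sum_congr rfl fun N _ => ?_
    _ ≤ _ := this
    _ = _ := by ring
  rw [jQ, hx, hy, jw, show a + b + (Real.cosh (t / 2) - a - b) = Real.cosh (t / 2) by ring]; ring

lemma one_lt_cosh_half {t : ℝ} (ht : 0 < t) : 1 < Real.cosh (t / 2) := Real.one_lt_cosh.2 (half_pos ht).ne'

lemma jF_diag {t : ℝ} (ht : 0 < t) {x : ℝ} (hx : x ∈ Icc (0:ℝ) 1) : Summable (jF α β t x x) := by
  have h0 : 0 ≤ jF α β t x x := fun p => mul_nonneg (sk_nonneg ht p) (mul_self_nonneg _)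
  rw [summable_prod_of_nonneg h0]
  refine ⟨fun N => (jF_row t x x N).summable, ?_⟩
  simp_rw [(jF_row t x x _).tsum_eq]
  obtain ⟨K, hK, h⟩ := kpart (α := α) (β := β)
  have hc := one_lt_cosh_half ht
  refine summable_of_sum_range_le (fun N => ?_) (h t x (1 - x) x x ht hx.1 (by linarith [hx.2]) (by ring) (by ring) (by linarith))
  exact mul_nonneg (mul_nonneg (Real.sinh_nonneg_iff.2 (by linarith)) (jw_pos t _).le) (jQ_nonneg _ hx hx)

lemma jF_summable {t : ℝ} (ht : 0 < t) {x y : ℝ} (hx : x ∈ Icc (0:ℝ) 1) (hy : y ∈ Icc (0:ℝ) 1) : Summable (jF α β t x y) := by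
  refine Summable.of_norm_bounded ((jF_diag (α := α) (β := β) ht hx).add (jF_diag (α := α) (β := β) ht hy)) fun p => ?_
  unfold jF
  rw [Real.norm_eq_abs, abs_mul, abs_of_nonneg (sk_nonneg ht p), ← mul_add, abs_mul]
  refine mul_le_mul_of_nonneg_left ?_ (sk_nonneg ht p)
  rw [← abs_mul_abs_self ((jq α β p.2).eval x), ← abs_mul_abs_self ((jq α β p.2).eval y)]
  nlinarith [sq_nonneg (|(jq α β p.2).eval x| - |(jq α β p.2).eval y|), abs_nonneg ((jq α β p.2).eval x), abs_nonneg ((jq α β p.2).eval y)]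

/-- Mercer formula with kernel bound -/
lemma mercer : ∃ K : ℝ, 0 < K ∧ ∀ t a b x y : ℝ, 0 < t → 0 ≤ a → 0 ≤ b → x ∈ Icc (0:ℝ) 1 → y ∈ Icc (0:ℝ) 1 → x * y = a ^ 2 → (1 - x) * (1 - y) = b ^ 2 → 
    0 < Real.cosh (t / 2) - a - b → ∃ A : ℝ, 
      HasSum (fun n : ℕ => Real.exp (-t * (n + (α + β + 1) / 2)) * (jq α β n).eval x * (jq α β n).eval y) A ∧ 0 ≤ A ∧ A ≤
      K * (Real.sinh (t / 2) * ((Real.cosh (t / 2) - a - b)⁻¹ * (Real.cosh (t / 2) - a - b + a) ^ (-α - 1 / 2) *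
        (Real.cosh (t / 2) - a - b + b) ^ (-β - 1 / 2))) := by
  obtain ⟨K, hK, h⟩ := kpart (α := α) (β := β)
  have h2 : (0:ℝ) < 2 ^ (α + β + 1) := by positivity
  refine ⟨(2 ^ (α + β + 1))⁻¹ * K, by positivity, fun t a b x y ht ha hb hx hy hxy hxy' hd => ?_⟩
  obtain ⟨B, hB⟩ := jF_summable (α := α) (β := β) ht hx hy
  have r1 := hB.prod_fiberwise fun N => jF_row t x y N
  have r2 := ((Equiv.prodComm ℕ ℕ).hasSum_iff.2 hB).prod_fiberwise fun n => jF_col ht x y n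
  refine ⟨(2 ^ (α + β + 1))⁻¹ * B, ?_, ?_, ?_⟩
  · have := r2.mul_left (2 ^ (α + β + 1))⁻¹
    simpa only [inv_mul_cancel_left₀ h2.ne'] using this
  · exact mul_nonneg (by positivity) (r1.nonneg fun N => mul_nonneg (mul_nonneg (Real.sinh_nonneg_iff.2 (by linarith)) (jw_pos t _).le) (jQ_nonneg _ hx hy))
  · rw [mul_assoc]
    refine mul_le_mul_of_nonneg_left ?_ (by positivity)
    exact le_of_tendsto' r1.tendsto_sum_nat fun M => h t a b x y ht ha hb hxy hxy' hd M

lemma rpow_between {u v w e : ℝ} (h0 : 0 < u) (h1 : u ≤ v) (h2 : v ≤ w) : v ^ e ≤ u ^ e + w ^ e := by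
  have : 0 < v := h0.trans_le h1
  have : 0 < w := this.trans_le h2
  have : 0 < u ^ e := by positivity
  have : 0 < w ^ e := by positivity
  rcases le_total 0 e with h | h
  · have := Real.rpow_le_rpow (by positivity) h2 h; linarith
  · have := Real.rpow_le_rpow_of_nonpos h0 h1 h; linarith

lemma jq_growth {s : ℝ} (hs : 0 < s) : ∃ M : ℝ, 0 < M ∧ ∀ (n : ℕ), ∀ x ∈ Icc (0:ℝ) 1, 
    |(jq α β n).eval x| ≤ M * Real.exp (s * (n + (α + β + 1) / 2)) := by
  obtain ⟨K, hK, h⟩ := mercer (α := α) (β := β)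
  set δ := Real.cosh (2 * s / 2) - 1 with hδ
  have hd : 0 < δ := by have := one_lt_cosh_half (t := 2 * s) (by linarith); linarith
  have hS : 0 < Real.sinh (2 * s / 2) := Real.sinh_pos_iff.2 (by linarith)
  set M := K * (Real.sinh (2 * s / 2) * (δ⁻¹ * (δ ^ (-α - 1 / 2) + (δ + 1) ^ (-α - 1 / 2)) * (δ ^ (-β - 1 / 2) + (δ + 1) ^ (-β - 1 / 2)))) with hM
  have hM0 : 0 < M := by positivity
  refine ⟨√M, Real.sqrt_pos.2 hM0, fun n x hx => ?_⟩
  obtain ⟨A, hA, h0, hAle⟩ := h (2 * s) x (1 - x) x x (by linarith) hx.1 (by linarith [hx.2]) hx hx (by ring) (by ring) (by linarith)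
  rw [show Real.cosh (2 * s / 2) - x - (1 - x) = δ by rw [hδ]; ring] at hAle
  have hle : A ≤ M := by
    refine hAle.trans ?_
    have h1 := rpow_between (e := -α - 1 / 2) hd (by linarith [hx.1] : δ ≤ δ + x) (by linarith [hx.2] : δ + x ≤ δ + 1)
    have h2 := rpow_between (e := -β - 1 / 2) hd (by linarith [hx.2] : δ ≤ δ + (1 - x)) (by linarith [hx.1] : δ + (1 - x) ≤ δ + 1)
    have : 0 < δ + x := by linarith [hx.1]
    have : 0 < δ + (1 - x) := by linarith [hx.2]
    rw [hM]
    gcongr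
  have hn := le_hasSum hA n fun j _ => by
    rw [mul_assoc]; exact mul_nonneg (Real.exp_pos _).le (mul_self_nonneg _)
  have : ((jq α β n).eval x) ^ 2 ≤ M * Real.exp (s * (n + (α + β + 1) / 2)) ^ 2 := by
    have e : Real.exp (-(2 * s) * (n + (α + β + 1) / 2)) * Real.exp (s * (n + (α + β + 1) / 2)) ^ 2 = 1 := by
      rw [← Real.exp_nat_mul, ← Real.exp_add, ← Real.exp_zero]; congr 1; push_cast; ring
    have hp := Real.exp_pos (s * (n + (α + β + 1) / 2))
    calc ((jq α β n).eval x) ^ 2 = (Real.exp (-(2 * s) * (n + (α + β + 1) / 2)) * (jq α β n).eval x * (jq α β n).eval x) * Real.exp (s * (n + (α + β + 1) / 2)) ^ 2 := by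
          linear_combination (-(jq α β n).eval x ^ 2) * e
      _ ≤ _ := mul_le_mul_of_nonneg_right (hn.trans hle) (by positivity)
  rw [← Real.sqrt_sq_eq_abs]
  refine (Real.sqrt_le_sqrt this).trans (le_of_eq ?_)
  rw [Real.sqrt_mul hM0.le, Real.sqrt_sq (Real.exp_pos _).le]

end mercer
end

section

set_option linter.unusedSectionVars false
section p8
variable {α β : ℝ} [hα : Fact (-1 < α)] [hβ : Fact (-1 < β)]

instance fact_succ {α : ℝ} [h : Fact (-1 < α)] : Fact (-1 < α + 1) := ⟨by have := h.out; linarith⟩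

lemma trigP_eq (n : ℕ) (hn : n ≠ 0) (θ : ℝ) : trigP α β n θ = (jq α β n).eval (Real.sin (θ / 2) ^ 2) := by
  unfold trigP jq
  rw [Polynomial.eval_mul, Polynomial.eval_C, jpoly_eval n hn]
  congr 1
  unfold cJ jc
  rw [jL_apply]
  congr 1
  refine integral_congr_ae (Filter.Eventually.of_forall fun φ => ?_)
  simp only [jpoly_eval n hn, Polynomial.eval_mul, sq]

lemma trigP_zero : ∃ ε : ℝ, 0 ≤ ε ∧ ε ≤ 1 ∧ (α + β + 1 ≠ 0 → ε = 1) ∧ ∀ θ, trigP α β 0 θ = ε * (jq α β 0).eval (Real.sin (θ / 2) ^ 2) := by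
  have h1 := hα.out; have h2 := hβ.out
  by_cases h : α + β + 1 = 0
  · refine ⟨0, le_rfl, zero_le_one, fun h' => absurd h h', fun θ => ?_⟩
    simp [trigP, jacobiP, h, Real.Gamma_zero]
  · refine ⟨1, zero_le_one, le_rfl, fun _ => rfl, fun θ => ?_⟩
    have hG : Real.Gamma (α + β + 1) ≠ 0 := by
      refine Real.Gamma_ne_zero fun m hm => ?_
      rcases m with _ | m
      · apply h; simpa using hm
      · push_cast at hm; have := m.cast_nonneg (α := ℝ); linarith
    have hG' : Real.Gamma (α + 1) ≠ 0 := (Real.Gamma_pos_of_pos (by linarith)).ne'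
    have hP : ∀ x, jacobiP α β 0 x = 1 := fun x => by
      simp [jacobiP]; field_simp
    have hp : jpoly α β 0 = 1 := by simp [jpoly, jcoef]
    rw [one_mul, trigP, jq, hP, hp, mul_one, mul_one, Polynomial.eval_C, cJ, jc, jL_apply, hp]
    simp [hP]

lemma trigP_succ (n : ℕ) (θ : ℝ) : trigP (α + 1) (β + 1) n θ = (jq (α + 1) (β + 1) n).eval (Real.sin (θ / 2) ^ 2) := by
  have h1 := hα.out; have h2 := hβ.out
  rcases Nat.eq_zero_or_pos n with rfl | h
  · obtain ⟨ε, _, _, he, h⟩ := trigP_zero (α := α + 1) (β := β + 1)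
    rw [h, he (by linarith), one_mul]
  · exact trigP_eq n h.ne' θ

lemma sinsq_mem (θ : ℝ) : Real.sin θ ^ 2 ∈ Icc (0:ℝ) 1 := ⟨by positivity, Real.sin_sq_le_one _⟩

/-- frequencies -/
def jv (α β : ℝ) (n : ℕ) : ℝ := Real.sqrt (jLam α β ((n + 1) / 2))

lemma jv_eq {α β : ℝ} (n : ℕ) : jv α β n = |(((n + 1) / 2 : ℕ):ℝ) + (α + β + 1) / 2| := by
  rw [jv, jLam, Real.sqrt_sq_eq_abs]

lemma jv_ge {α β : ℝ} [hα : Fact (-1 < α)] [hβ : Fact (-1 < β)] (n : ℕ) : (n:ℝ) / 2 - 1 / 2 ≤ jv α β n := by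
  have h1 := hα.out; have h2 := hβ.out
  rw [jv_eq]
  refine le_trans ?_ (le_abs_self _)
  have : n ≤ 2 * ((n + 1) / 2) := by omega
  have : (n:ℝ) ≤ 2 * (((n + 1) / 2 : ℕ):ℝ) := by exact_mod_cast this
  linarith

lemma symPhi_growth {s : ℝ} (hs : 0 < s) : ∃ M : ℝ, 0 < M ∧ ∀ (n : ℕ) (θ : ℝ), |symPhi α β n θ| ≤ M * Real.exp (s * jv α β n) := by
  obtain ⟨M1, hM1, h1⟩ := jq_growth (α := α) (β := β) hs
  obtain ⟨M2, hM2, h2⟩ := jq_growth (α := α + 1) (β := β + 1) hs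
  obtain ⟨ε, e0, e1, _, he⟩ := trigP_zero (α := α) (β := β)
  have hs2 : |(Real.sqrt 2)⁻¹| ≤ 1 := by
    rw [abs_of_nonneg (by positivity)]
    exact inv_le_one_of_one_le₀ (by rw [Real.one_le_sqrt]; norm_num)
  refine ⟨M1 + M2, by positivity, fun n θ => ?_⟩
  unfold symPhi
  split_ifs with hn
  · obtain ⟨k, hk⟩ := hn
    have hk2 : n / 2 = k := by omega
    have hk3 : (n + 1) / 2 = k := by omega
    rw [jv_eq, hk2, hk3, abs_mul]
    have t1 : |trigP α β k θ| ≤ M1 * Real.exp (s * (k + (α + β + 1) / 2)) := by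
      refine le_trans ?_ (h1 k _ (sinsq_mem (θ / 2)))
      rcases Nat.eq_zero_or_pos k with rfl | h
      · rw [he, abs_mul, abs_of_nonneg e0]; exact mul_le_of_le_one_left (abs_nonneg _) e1
      · rw [trigP_eq k h.ne']
    calc _ ≤ |trigP α β k θ| := mul_le_of_le_one_left (abs_nonneg _) hs2
      _ ≤ M1 * Real.exp (s * (k + (α + β + 1) / 2)) := t1
      _ ≤ _ := by
        gcongr
        · linarith
        · exact le_abs_self _
  · rw [Nat.not_even_iff_odd] at hn
    obtain ⟨k, hk⟩ := hn
    have hk2 : (n - 1) / 2 = k := by omega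
    have hk3 : (n + 1) / 2 = k + 1 := by omega
    rw [jv_eq, hk2, hk3, abs_mul, abs_mul, trigP_succ]
    have t1 := h2 k _ (sinsq_mem (θ / 2))
    have t2 : |Real.sin θ / 2| ≤ 1 := by
      rw [abs_div, abs_of_pos (two_pos : (0:ℝ) < 2)]; have := Real.abs_sin_le_one θ; linarith
    calc _ ≤ 1 * 1 * (M2 * Real.exp (s * (k + (α + 1 + (β + 1) + 1) / 2))) := by gcongr
      _ ≤ _ := by
        rw [one_mul, one_mul]
        gcongr
        · linarith
        · refine le_trans (le_of_eq ?_) (le_abs_self _); push_cast; ring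

/-- kernel terms -/
def jh (α β t θ φ : ℝ) (n : ℕ) : ℝ := Real.exp (-t * jv α β n) * symPhi α β n φ * symPhi α β n θ

lemma jv_summable {s : ℝ} (hs : 0 < s) : Summable fun n => Real.exp (-s * jv α β n) := by
  have : Summable fun n : ℕ => Real.exp (s / 2) * Real.exp (n * (-(s / 2))) :=
    (Real.summable_exp_nat_mul_iff.2 (by linarith)).mul_left _
  refine Summable.of_nonneg_of_le (fun n => (Real.exp_pos _).le) (fun n => ?_) this
  rw [← Real.exp_add]
  have := jv_ge (α := α) (β := β) n
  refine Real.exp_le_exp.2 ?_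
  nlinarith

lemma jv_nonneg {α β : ℝ} (n : ℕ) : 0 ≤ jv α β n := Real.sqrt_nonneg _

lemma jh_bound {s : ℝ} (hs : 0 < s) : ∃ M : ℝ, 0 < M ∧ ∀ t θ φ n, s ≤ t → |jh α β t θ φ n| ≤ M * Real.exp (-(s / 2) * jv α β n) := by
  obtain ⟨M, hM, h⟩ := symPhi_growth (α := α) (β := β) (s := s / 4) (by linarith)
  refine ⟨M * M, by positivity, fun t θ φ n hst => ?_⟩
  unfold jh
  rw [abs_mul, abs_mul, abs_of_pos (Real.exp_pos _)]
  calc _ ≤ Real.exp (-s * jv α β n) * (M * Real.exp (s / 4 * jv α β n)) * (M * Real.exp (s / 4 * jv α β n)) := by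
        gcongr
        · exact jv_nonneg n
        · exact h n φ
        · exact h n θ
    _ = M * M * (Real.exp (-s * jv α β n) * Real.exp (s / 4 * jv α β n) * Real.exp (s / 4 * jv α β n)) := by ring
    _ = _ := by rw [← Real.exp_add, ← Real.exp_add]; congr 2; ring

lemma jh_summable {t : ℝ} (ht : 0 < t) (θ φ : ℝ) : Summable (jh α β t θ φ) := by
  obtain ⟨M, hM, h⟩ := jh_bound (α := α) (β := β) ht
  exact Summable.of_norm_bounded ((jv_summable (by linarith)).mul_left M) fun n => h t θ φ n le_rfl

/-- the model kernel -/
def jG (α β t a b : ℝ) : ℝ := Real.sinh (t / 2) * ((Real.cosh (t / 2) - a - b)⁻¹ * (Real.cosh (t / 2) - a - b + a) ^ (-α - 1 / 2) *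
        (Real.cosh (t / 2) - a - b + b) ^ (-β - 1 / 2))

lemma jh_large : ∃ C : ℝ, 0 < C ∧ ∀ t θ φ, 1 ≤ t → |∑' n, jh α β t θ φ n| ≤ C := by
  obtain ⟨M, hM, h⟩ := jh_bound (α := α) (β := β) one_pos
  have hs := (jv_summable (α := α) (β := β) (s := 1 / 2) (by norm_num)).mul_left M
  refine ⟨∑' n, M * Real.exp (-(1 / 2) * jv α β n), hs.tsum_pos (fun n => by positivity) 0 (by positivity), fun t θ φ ht => ?_⟩
  exact tsum_of_norm_bounded (f := jh α β t θ φ) hs.hasSum (fun n => h t θ φ n ht)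

lemma ab_facts {θ φ : ℝ} (hθ : θ ∈ Ioo (-π) π) (hφ : φ ∈ Ioo (-π) π) :
    0 ≤ |Real.sin (θ / 2) * Real.sin (φ / 2)| ∧ 0 ≤ Real.cos (θ / 2) * Real.cos (φ / 2) ∧
    |Real.sin (θ / 2) * Real.sin (φ / 2)| + Real.cos (θ / 2) * Real.cos (φ / 2) ≤ 1 := by
  have h1 : 0 < Real.cos (θ / 2) := Real.cos_pos_of_mem_Ioo ⟨by linarith [hθ.1], by linarith [hθ.2]⟩
  have h2 : 0 < Real.cos (φ / 2) := Real.cos_pos_of_mem_Ioo ⟨by linarith [hφ.1], by linarith [hφ.2]⟩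
  refine ⟨abs_nonneg _, by positivity, ?_⟩
  rw [abs_mul]
  have e1 := Real.sin_sq_add_cos_sq (θ / 2)
  have e2 := Real.sin_sq_add_cos_sq (φ / 2)
  rw [← sq_abs] at e1 e2
  nlinarith [sq_nonneg (|Real.sin (θ / 2)| - |Real.sin (φ / 2)|), sq_nonneg (Real.cos (θ / 2) - Real.cos (φ / 2))]

lemma jh_small : ∃ C : ℝ, 0 < C ∧ ∀ t θ φ, 0 < t → t ≤ 1 → θ ∈ Ioo (-π) π → φ ∈ Ioo (-π) π → |∑' n, jh α β t θ φ n| ≤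
    C * (1 + jG α β t (|Real.sin (θ / 2) * Real.sin (φ / 2)|) (Real.cos (θ / 2) * Real.cos (φ / 2))) := by
  have hα' := hα.out; have hβ' := hβ.out
  obtain ⟨K1, hK1, h1⟩ := mercer (α := α) (β := β)
  obtain ⟨K2, hK2, h2⟩ := mercer (α := α + 1) (β := β + 1)
  obtain ⟨ε, e0, e1, _, he⟩ := trigP_zero (α := α) (β := β)
  have q0 : ∃ q : ℝ, ∀ x, (jq α β 0).eval x = q := ⟨jc α β 0, fun x => by
    have hp : jpoly α β 0 = 1 := by simp [jpoly, jcoef]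
    simp [jq, hp]⟩
  obtain ⟨q, hq⟩ := q0
  set κ := (α + β + 1) / 2 with hκ
  set E := Real.exp |κ| * q ^ 2 with hE
  have hE0 : 0 ≤ E := by positivity
  refine ⟨K1 + K2 + E, by positivity, fun t θ φ ht ht1 hθ hφ => ?_⟩
  obtain ⟨ha, hb, hab⟩ := ab_facts hθ hφ
  set a := |Real.sin (θ / 2) * Real.sin (φ / 2)| with hadef
  set b := Real.cos (θ / 2) * Real.cos (φ / 2) with hbdef
  have hc := one_lt_cosh_half ht
  have hδ : 0 < Real.cosh (t / 2) - a - b := by linarith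
  have xy : Real.sin (θ / 2) ^ 2 * Real.sin (φ / 2) ^ 2 = a ^ 2 := by rw [hadef, sq_abs, mul_pow]
  have xy' : (1 - Real.sin (θ / 2) ^ 2) * (1 - Real.sin (φ / 2) ^ 2) = b ^ 2 := by
    rw [hbdef, mul_pow, Real.cos_sq', Real.cos_sq']
  obtain ⟨A1, s1, p1, l1⟩ := h1 t a b _ _ ht ha hb (sinsq_mem (θ / 2)) (sinsq_mem (φ / 2)) xy xy' hδ
  obtain ⟨A2, s2, p2, l2⟩ := h2 t a b _ _ ht ha hb (sinsq_mem (θ / 2)) (sinsq_mem (φ / 2)) xy xy' hδ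
  have hs22 : (Real.sqrt 2)⁻¹ * (Real.sqrt 2)⁻¹ = 1 / 2 := by
    rw [← mul_inv, Real.mul_self_sqrt (by norm_num)]; norm_num
  have ev : HasSum (fun k => jh α β t θ φ (2 * k)) (1 / 2 * (A1 + (ε ^ 2 * Real.exp (-t * |κ|) - Real.exp (-t * κ)) * q ^ 2)) := by
    have hd := (s1.add (hasSum_ite_eq (0:ℕ) ((ε ^ 2 * Real.exp (-t * |κ|) - Real.exp (-t * κ)) * q ^ 2))).mul_left (1 / 2)
    refine hd.congr_fun fun k => ?_
    have hk2 : 2 * k / 2 = k := by omega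
    have hk3 : (2 * k + 1) / 2 = k := by omega
    rw [jh, jv_eq, symPhi, symPhi, if_pos (by simp), if_pos (by simp), hk2, hk3]
    rcases Nat.eq_zero_or_pos k with rfl | h
    · rw [he, he, if_pos rfl, hq, hq]
      simp only [Nat.cast_zero, zero_add]
      linear_combination (ε ^ 2 * Real.exp (-t * |κ|) * q ^ 2) * hs22
    · rw [trigP_eq k h.ne', trigP_eq k h.ne', if_neg h.ne', abs_of_nonneg]
      · linear_combination (Real.exp (-t * (k + κ)) * (jq α β k).eval (Real.sin (θ / 2) ^ 2) * (jq α β k).eval (Real.sin (φ / 2) ^ 2)) * hs22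
      · have : (1:ℝ) ≤ k := by exact_mod_cast h
        linarith
  have od : HasSum (fun k => jh α β t θ φ (2 * k + 1)) (1 / 8 * (Real.sin θ * Real.sin φ) * A2) := by
    refine (s2.mul_left (1 / 8 * (Real.sin θ * Real.sin φ))).congr_fun fun k => ?_
    have hk2 : (2 * k + 1 - 1) / 2 = k := by omega
    have hk3 : (2 * k + 1 + 1) / 2 = k + 1 := by omega
    have hodd : ¬ Even (2 * k + 1) := by simp
    rw [jh, jv_eq, symPhi, symPhi, if_neg hodd, if_neg hodd, hk2, hk3, trigP_succ, trigP_succ, abs_of_nonneg]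
    · rw [show (((k + 1 : ℕ):ℝ) + (α + β + 1) / 2) = k + (α + 1 + (β + 1) + 1) / 2 by push_cast; ring]
      linear_combination (Real.exp (-t * (k + (α + 1 + (β + 1) + 1) / 2)) * (Real.sin φ / 2) * (jq (α + 1) (β + 1) k).eval (Real.sin (φ / 2) ^ 2) * (Real.sin θ / 2) * (jq (α + 1) (β + 1) k).eval (Real.sin (θ / 2) ^ 2)) * hs22
    · push_cast; have := k.cast_nonneg (α := ℝ); linarith
  rw [(ev.even_add_odd od).tsum_eq]
  have hG : 0 < jG α β t a b := by
    have : 0 < Real.sinh (t / 2) := Real.sinh_pos_iff.2 (by linarith)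
    have : 0 < Real.cosh (t / 2) - a - b + a := by linarith
    have : 0 < Real.cosh (t / 2) - a - b + b := by linarith
    unfold jG; positivity
  have l1' : A1 ≤ K1 * jG α β t a b := l1
  have l3 : |(ε ^ 2 * Real.exp (-t * |κ|) - Real.exp (-t * κ)) * q ^ 2| ≤ E := by
    rw [abs_mul, abs_of_nonneg (sq_nonneg q), hE]
    refine mul_le_mul_of_nonneg_right ?_ (sq_nonneg q)
    have f1 : Real.exp (-t * |κ|) ≤ Real.exp |κ| := Real.exp_le_exp.2 (by nlinarith [abs_nonneg κ])
    have f2 : Real.exp (-t * κ) ≤ Real.exp |κ| := Real.exp_le_exp.2 (by nlinarith [neg_abs_le κ, abs_nonneg κ])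
    have f3 := Real.exp_pos (-t * |κ|)
    have f4 := Real.exp_pos (-t * κ)
    have f5 : ε ^ 2 ≤ 1 := by nlinarith
    have f6 : ε ^ 2 * Real.exp (-t * |κ|) ≤ Real.exp (-t * |κ|) := mul_le_of_le_one_left f3.le f5
    have f7 : 0 ≤ ε ^ 2 * Real.exp (-t * |κ|) := by positivity
    rw [abs_le]; constructor <;> linarith
  have hsin : |Real.sin θ * Real.sin φ| = 4 * (a * b) := by
    have r1 : Real.sin θ = 2 * Real.sin (θ / 2) * Real.cos (θ / 2) := by rw [← Real.sin_two_mul]; congr 1; ring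
    have r2 : Real.sin φ = 2 * Real.sin (φ / 2) * Real.cos (φ / 2) := by rw [← Real.sin_two_mul]; congr 1; ring
    rw [r1, r2, show 2 * Real.sin (θ / 2) * Real.cos (θ / 2) * (2 * Real.sin (φ / 2) * Real.cos (φ / 2)) = 4 * ((Real.sin (θ / 2) * Real.sin (φ / 2)) * b) by rw [hbdef]; ring,
      abs_mul, abs_mul, abs_of_nonneg hb, abs_of_nonneg (by norm_num : (0:ℝ) ≤ 4)]
  have l4 : a * b * A2 ≤ K2 * jG α β t a b := by
    set δ := Real.cosh (t / 2) - a - b with hdel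
    have u1 : 0 < δ + a := by linarith
    have u2 : 0 < δ + b := by linarith
    have hS : 0 < Real.sinh (t / 2) := Real.sinh_pos_iff.2 (by linarith)
    have m1 : a * b ≤ (δ + a) * (δ + b) := by gcongr <;> linarith
    calc a * b * A2 ≤ (δ + a) * (δ + b) * (K2 * (Real.sinh (t / 2) * (δ⁻¹ * (δ + a) ^ (-(α + 1) - 1 / 2) * (δ + b) ^ (-(β + 1) - 1 / 2)))) := by
          gcongr
      _ = _ := by
          rw [jG, ← hdel, show -α - 1 / 2 = (-(α + 1) - 1 / 2) + 1 by ring, show -β - 1 / 2 = (-(β + 1) - 1 / 2) + 1 by ring, Real.rpow_add_one u1.ne', Real.rpow_add_one u2.ne']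
          ring
  have l5 : |1 / 8 * (Real.sin θ * Real.sin φ) * A2| = 1 / 2 * (a * b * A2) := by
    rw [abs_mul, abs_mul, hsin, abs_of_nonneg p2, abs_of_nonneg (by norm_num : (0:ℝ) ≤ 1 / 8)]; ring
  have hX := abs_le.1 l3
  have hY := abs_le.1 l5.le
  have : 0 ≤ a * b * A2 := by positivity
  have hEG : 0 ≤ E * jG α β t a b := by positivity
  have g1 := mul_pos hK1 hG
  have g2 := mul_pos hK2 hG
  have ex : (K1 + K2 + E) * (1 + jG α β t a b) = K1 + K2 + E + (K1 * jG α β t a b + K2 * jG α β t a b + E * jG α β t a b) := by ring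
  rw [abs_le, ex]
  constructor <;> linarith

end p8
end

section

lemma rpow_ratio {u v c d e : ℝ} (hc : 0 < c) (hv : 0 < v) (h1 : c * v ≤ u) (h2 : u ≤ d * v) : u ^ e ≤ (c ^ e + d ^ e) * v ^ e := by
  have hcv : 0 < c * v := by positivity
  have hd : 0 < d := by
    by_contra h
    have : d * v ≤ 0 := mul_nonpos_of_nonpos_of_nonneg (not_lt.1 h) hv.le
    linarith
  have := rpow_between (e := e) hcv h1 h2
  rw [Real.mul_rpow hc.le hv.le, Real.mul_rpow hd.le hv.le] at this
  linarith

lemma lint_rpow {e c : ℝ} (he : -1 < e) (hc : 0 < c) : ∫⁻ φ in Ioo 0 c, ENNReal.ofReal (φ ^ e) = ENNReal.ofReal (c ^ (e + 1) / (e + 1)) := by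
  have hi : IntervalIntegrable (fun φ : ℝ => φ ^ e) volume 0 c := intervalIntegral.intervalIntegrable_rpow' he
  rw [intervalIntegrable_iff_integrableOn_Ioo_of_le hc.le] at hi
  rw [← ofReal_integral_eq_lintegral_ofReal hi, ← integral_Ioc_eq_integral_Ioo, ← intervalIntegral.integral_of_le hc.le, integral_rpow (Or.inl he),
    Real.zero_rpow (by linarith), sub_zero]
  filter_upwards [self_mem_ae_restrict measurableSet_Ioo] with φ hφ
  exact Real.rpow_nonneg hφ.1.le _

lemma vol1 {e : ℝ} (he : -1 < e) : ∃ C : ℝ, 0 < C ∧ ∀ θ R : ℝ, 0 < θ → 0 < R →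
    ∫⁻ φ in Ioo (θ - R) (θ + R) ∩ Ioi 0, ENNReal.ofReal (φ ^ e) ≤ ENNReal.ofReal (C * (R * (R + θ) ^ e)) := by
  have he1 : 0 < e + 1 := by linarith
  refine ⟨((1 / 3) ^ e + 1 ^ e) * 2 + (1 ^ e + 3 ^ e) * 3 / (e + 1), by positivity, fun θ R hθ hR => ?_⟩
  have hv : 0 < R + θ := by positivity
  rcases le_total (2 * R) θ with h | h
  · calc _ ≤ ∫⁻ φ in Ioo (θ - R) (θ + R) ∩ Ioi 0, ENNReal.ofReal (((1 / 3) ^ e + 1 ^ e) * (R + θ) ^ e) := by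
          refine setLIntegral_mono (by fun_prop) fun φ hφ => ENNReal.ofReal_le_ofReal ?_
          exact rpow_ratio (by norm_num) hv (by linarith [hφ.1.1]) (by linarith [hφ.1.2])
      _ ≤ ∫⁻ φ in Ioo (θ - R) (θ + R), ENNReal.ofReal (((1 / 3) ^ e + 1 ^ e) * (R + θ) ^ e) := lintegral_mono_set inter_subset_left
      _ = ENNReal.ofReal ((((1 / 3) ^ e + 1 ^ e) * (R + θ) ^ e) * (2 * R)) := by
          rw [setLIntegral_const, Real.volume_Ioo, ← ENNReal.ofReal_mul (by positivity)]; congr 2; ring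
      _ ≤ _ := by
          refine ENNReal.ofReal_le_ofReal ?_
          have : 0 ≤ (1 ^ e + 3 ^ e) * 3 / (e + 1) * (R * (R + θ) ^ e) := by positivity
          linarith
  · calc _ ≤ ∫⁻ φ in Ioo 0 (3 * R), ENNReal.ofReal (φ ^ e) := lintegral_mono_set fun φ hφ => ⟨hφ.2, by linarith [hφ.1.2]⟩
      _ = ENNReal.ofReal ((3 * R) ^ (e + 1) / (e + 1)) := lint_rpow he (by positivity)
      _ ≤ _ := by
          refine ENNReal.ofReal_le_ofReal ?_
          have := rpow_ratio (u := 3 * R) (v := R + θ) (c := 1) (d := 3) (e := e) one_pos hv (by linarith) (by linarith)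
          rw [Real.rpow_add_one (by positivity)]
          have h0 : 0 ≤ ((1 / 3) ^ e + 1 ^ e) * 2 * (R * (R + θ) ^ e) := by positivity
          calc (3 * R) ^ e * (3 * R) / (e + 1) ≤ (1 ^ e + 3 ^ e) * (R + θ) ^ e * (3 * R) / (e + 1) := by gcongr
            _ = (1 ^ e + 3 ^ e) * 3 / (e + 1) * (R * (R + θ) ^ e) := by ring
            _ ≤ _ := by linarith

lemma sin_half_bounds {θ : ℝ} (h : θ ∈ Ioo 0 π) : 1 / π * θ ≤ Real.sin (θ / 2) ∧ Real.sin (θ / 2) ≤ 1 / 2 * θ := by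
  have := Real.pi_pos
  constructor
  · have := Real.mul_le_sin (x := θ / 2) (by linarith [h.1]) (by linarith [h.2])
    calc _ = 2 / π * (θ / 2) := by ring
      _ ≤ _ := this
  · have := Real.sin_le (x := θ / 2) (by linarith [h.1]); linarith

lemma vol2 {e : ℝ} (he : -1 < e) : ∃ C : ℝ, 0 < C ∧ ∀ θ R : ℝ, θ ∈ Ioo 0 π → 0 < R →
    ∫⁻ φ in Ioo (θ - R) (θ + R) ∩ Ioo 0 π, ENNReal.ofReal (Real.sin (φ / 2) ^ e) ≤ ENNReal.ofReal (C * (R * (R + Real.sin (θ / 2)) ^ e)) := by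
  obtain ⟨C, hC, h⟩ := vol1 he
  have hpi := Real.pi_gt_three
  refine ⟨((1 / π) ^ e + (1 / 2) ^ e) * (C * (1 ^ e + π ^ e)), by positivity, fun θ R hθ hR => ?_⟩
  have hb := sin_half_bounds hθ
  have hθ0 := hθ.1
  have hs : 0 < Real.sin (θ / 2) := lt_of_lt_of_le (by positivity) hb.1
  calc _ ≤ ∫⁻ φ in Ioo (θ - R) (θ + R) ∩ Ioo 0 π, ENNReal.ofReal ((1 / π) ^ e + (1 / 2) ^ e) * ENNReal.ofReal (φ ^ e) := by
        refine setLIntegral_mono (by fun_prop) fun φ hφ => ?_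
        rw [← ENNReal.ofReal_mul (by positivity)]
        have hb := sin_half_bounds hφ.2
        exact ENNReal.ofReal_le_ofReal (rpow_ratio (by positivity) hφ.2.1 hb.1 hb.2)
    _ = ENNReal.ofReal ((1 / π) ^ e + (1 / 2) ^ e) * ∫⁻ φ in Ioo (θ - R) (θ + R) ∩ Ioo 0 π, ENNReal.ofReal (φ ^ e) := by
        rw [lintegral_const_mul _ (by fun_prop)]
    _ ≤ ENNReal.ofReal ((1 / π) ^ e + (1 / 2) ^ e) * ENNReal.ofReal (C * (R * (R + θ) ^ e)) := by
        gcongr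
        exact (lintegral_mono_set (inter_subset_inter_right _ fun φ hφ => hφ.1)).trans (h θ R hθ.1 hR)
    _ ≤ _ := by
        rw [← ENNReal.ofReal_mul (by positivity)]
        refine ENNReal.ofReal_le_ofReal ?_
        have hm : π * Real.sin (θ / 2) ≥ θ := by
          have := mul_le_mul_of_nonneg_left hb.1 Real.pi_pos.le
          rwa [← mul_assoc, mul_one_div_cancel Real.pi_pos.ne', one_mul] at this
        have := rpow_ratio (u := R + θ) (v := R + Real.sin (θ / 2)) (c := 1) (d := π) (e := e) one_pos (by positivity) (by linarith) (by nlinarith)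
        calc _ ≤ ((1 / π) ^ e + (1 / 2) ^ e) * (C * (R * ((1 ^ e + π ^ e) * (R + Real.sin (θ / 2)) ^ e))) := by gcongr
          _ = _ := by ring

lemma vol2' {e : ℝ} (he : -1 < e) : ∃ C : ℝ, 0 < C ∧ ∀ θ R : ℝ, θ ∈ Ioo 0 π → 0 < R →
    ∫⁻ φ in Ioo (θ - R) (θ + R) ∩ Ioo 0 π, ENNReal.ofReal (Real.cos (φ / 2) ^ e) ≤ ENNReal.ofReal (C * (R * (R + Real.cos (θ / 2)) ^ e)) := by
  obtain ⟨C, hC, h⟩ := vol2 he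
  refine ⟨C, hC, fun θ R hθ hR => ?_⟩
  have hr : ∀ x : ℝ, Real.sin ((π - x) / 2) = Real.cos (x / 2) := fun x => by
    rw [← Real.sin_pi_div_two_sub]; congr 1; ring
  have := h (π - θ) R ⟨by linarith [hθ.2], by linarith [hθ.1]⟩ hR
  rw [hr] at this
  refine le_trans (le_of_eq ?_) this
  rw [← lintegral_indicator (measurableSet_Ioo.inter measurableSet_Ioo), ← lintegral_indicator (measurableSet_Ioo.inter measurableSet_Ioo),
    ← lintegral_sub_left_eq_self ((Ioo (π - θ - R) (π - θ + R) ∩ Ioo 0 π).indicator (fun φ => ENNReal.ofReal (Real.sin (φ / 2) ^ e))) π]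
  congr 1
  ext φ
  have hm : (π - φ ∈ Ioo (π - θ - R) (π - θ + R) ∩ Ioo 0 π) ↔ φ ∈ Ioo (θ - R) (θ + R) ∩ Ioo 0 π := by
    simp only [mem_inter_iff, mem_Ioo]
    constructor <;> rintro ⟨⟨a, b⟩, c, d⟩ <;> refine ⟨⟨?_, ?_⟩, ?_, ?_⟩ <;> linarith
  by_cases hx : φ ∈ Ioo (θ - R) (θ + R) ∩ Ioo 0 π
  · rw [indicator_of_mem hx, indicator_of_mem (hm.2 hx), hr]
  · rw [indicator_of_notMem hx, indicator_of_notMem (fun h => hx (hm.1 h))]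

/-- model volume -/
def jV (α β θ R : ℝ) : ℝ := R * (R + Real.sin (θ / 2)) ^ (2 * α + 1) * (R + Real.cos (θ / 2)) ^ (2 * β + 1)

lemma trig_pos {θ : ℝ} (h : θ ∈ Ioo 0 π) : 0 < Real.sin (θ / 2) ∧ 0 < Real.cos (θ / 2) :=
  ⟨Real.sin_pos_of_pos_of_lt_pi (by linarith [h.1]) (by linarith [h.2, Real.pi_pos]),
    Real.cos_pos_of_mem_Ioo ⟨by linarith [h.1, Real.pi_pos], by linarith [h.2]⟩⟩

lemma trig_lip (θ φ : ℝ) : |Real.sin (θ / 2) - Real.sin (φ / 2)| ≤ |θ - φ| / 2 ∧ |Real.cos (θ / 2) - Real.cos (φ / 2)| ≤ |θ - φ| / 2 := by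
  have h1 := Real.abs_sin_sub_sin_le (θ / 2) (φ / 2)
  have h2 := Real.abs_cos_sub_cos_le (θ / 2) (φ / 2)
  rw [show θ / 2 - φ / 2 = (θ - φ) / 2 by ring, abs_div, abs_two] at h1 h2
  exact ⟨h1, h2⟩

lemma volume_bound {α β : ℝ} (hα : -1 < α) (hβ : -1 < β) : ∃ C : ℝ, 0 < C ∧ ∀ θ R : ℝ, θ ∈ Ioo 0 π → 0 < R → R ≤ 2 * π →
    jacobiMeasurePlus α β (Ioo (θ - R) (θ + R)) ≤ ENNReal.ofReal (C * jV α β θ R) := by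
  obtain ⟨C1, hC1, h1⟩ := vol2 (e := 2 * α + 1) (by linarith)
  obtain ⟨C2, hC2, h2⟩ := vol2' (e := 2 * β + 1) (by linarith)
  have hpi := Real.pi_gt_three
  set d : ℝ := (1 / (2 * (2 * π + 1))) with hd
  have hd0 : 0 < d := by positivity
  set D1 := d ^ (2 * α + 1) + 2 ^ (2 * α + 1) with hD1
  set D2 := d ^ (2 * β + 1) + 2 ^ (2 * β + 1) with hD2
  refine ⟨D2 * C1 + D1 * C2, by positivity, fun θ R hθ hR hR2 => ?_⟩
  obtain ⟨sp, cp⟩ := trig_pos hθ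
  have sp1 := Real.sin_le_one (θ / 2)
  have cp1 := Real.cos_le_one (θ / 2)
  rw [jmPlus_eq, withDensity_apply _ measurableSet_Ioo, Measure.restrict_restrict measurableSet_Ioo]
  have key : ∀ v s : ℝ, 1 / 2 ≤ s → s ≤ 1 → 0 < v → v ≤ 1 → |v - s| ≤ R / 2 → d * (R + v) ≤ s ∧ s ≤ 2 * (R + v) := by
    intro v s a1 a2 a3 a4 a5
    rw [abs_le] at a5
    constructor
    · rw [hd, div_mul_eq_mul_div, div_le_iff₀ (by positivity)]
      nlinarith
    · linarith
  calc _ ≤ ∫⁻ φ in Ioo (θ - R) (θ + R) ∩ Ioo 0 π, (ENNReal.ofReal (D2 * (R + Real.cos (θ / 2)) ^ (2 * β + 1)) * ENNReal.ofReal (Real.sin (φ / 2) ^ (2 * α + 1)) +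
      ENNReal.ofReal (D1 * (R + Real.sin (θ / 2)) ^ (2 * α + 1)) * ENNReal.ofReal (Real.cos (φ / 2) ^ (2 * β + 1))) := by
        refine setLIntegral_mono (by fun_prop) fun φ hφ => ?_
        rw [jPsi_sq hφ.2, ← ENNReal.ofReal_mul (by positivity), ← ENNReal.ofReal_mul (by positivity)]
        obtain ⟨sp', cp'⟩ := trig_pos hφ.2
        obtain ⟨l1, l2⟩ := trig_lip θ φ
        have hab : |θ - φ| ≤ R := by rw [abs_le]; constructor <;> linarith [hφ.1.1, hφ.1.2]
        have hsum := Real.sin_sq_add_cos_sq (φ / 2)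
        rcases le_total (1 / 2) (Real.cos (φ / 2)) with hc | hc
        · refine le_trans ?_ le_self_add
          refine ENNReal.ofReal_le_ofReal ?_
          obtain ⟨k1, k2⟩ := key _ _ hc (Real.cos_le_one _) cp cp1 (by linarith)
          have := rpow_ratio (e := 2 * β + 1) hd0 (by positivity) k1 k2
          rw [mul_comm]
          gcongr
        · refine le_trans ?_ le_add_self
          refine ENNReal.ofReal_le_ofReal ?_
          have hs : 1 / 2 ≤ Real.sin (φ / 2) := by nlinarith
          obtain ⟨k1, k2⟩ := key _ _ hs (Real.sin_le_one _) sp sp1 (by linarith)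
          have := rpow_ratio (e := 2 * α + 1) hd0 (by positivity) k1 k2
          gcongr
    _ ≤ ENNReal.ofReal (D2 * (R + Real.cos (θ / 2)) ^ (2 * β + 1)) * ENNReal.ofReal (C1 * (R * (R + Real.sin (θ / 2)) ^ (2 * α + 1))) +
        ENNReal.ofReal (D1 * (R + Real.sin (θ / 2)) ^ (2 * α + 1)) * ENNReal.ofReal (C2 * (R * (R + Real.cos (θ / 2)) ^ (2 * β + 1))) := by
        rw [lintegral_add_left (by fun_prop), lintegral_const_mul _ (by fun_prop), lintegral_const_mul _ (by fun_prop)]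
        exact add_le_add (mul_le_mul_right (h1 θ R hθ hR) _) (mul_le_mul_right (h2 θ R hθ hR) _)
    _ = _ := by
        rw [← ENNReal.ofReal_mul (by positivity), ← ENNReal.ofReal_mul (by positivity), ← ENNReal.ofReal_add (by positivity) (by positivity), jV]
        congr 1; ring
end

section

lemma sinh_half_le {t : ℝ} (h0 : 0 < t) (h1 : t ≤ 1) : Real.sinh (t / 2) ≤ 2 * t := by
  rw [Real.sinh_eq]
  have e1 := Real.abs_exp_sub_one_le (x := t / 2) (by rw [abs_of_pos (by linarith)]; linarith)
  have e2 := Real.add_one_le_exp (-(t / 2))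
  rw [abs_of_pos (show 0 < t / 2 by linarith)] at e1
  have := le_abs_self (Real.exp (t / 2) - 1)
  linarith

lemma cosh_half_bounds {t : ℝ} (h0 : 0 < t) (h1 : t ≤ 1) : t ^ 2 / 8 ≤ Real.cosh (t / 2) - 1 ∧ Real.cosh (t / 2) - 1 ≤ t ^ 2 / 4 := by
  constructor
  · have h := Real.cosh_sq (t / 4)
    have h2 := Real.cosh_two_mul (t / 4)
    rw [show 2 * (t / 4) = t / 2 by ring] at h2
    have h3 : t / 4 ≤ Real.sinh (t / 4) := Real.self_le_sinh_iff.2 (by linarith)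
    nlinarith
  · have h := Real.cosh_le_exp_half_sq (t / 2)
    have e1 := Real.abs_exp_sub_one_le (x := (t / 2) ^ 2 / 2) (by rw [abs_of_pos (by positivity)]; nlinarith)
    rw [abs_of_pos (show 0 < (t / 2) ^ 2 / 2 by positivity)] at e1
    have := le_abs_self (Real.exp ((t / 2) ^ 2 / 2) - 1)
    nlinarith

lemma cos_half_bounds {ψ : ℝ} (h : |ψ| ≤ π) : ψ ^ 2 / (2 * π ^ 2) ≤ 1 - Real.cos (ψ / 2) ∧ 1 - Real.cos (ψ / 2) ≤ ψ ^ 2 / 8 := by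
  have hpi := Real.pi_pos
  constructor
  · have := Real.cos_le_one_sub_mul_cos_sq (x := ψ / 2) (by rw [abs_div, abs_two]; linarith)
    have e : 2 / π ^ 2 * (ψ / 2) ^ 2 = ψ ^ 2 / (2 * π ^ 2) := by field_simp
    rw [e] at this; linarith
  · have := Real.one_sub_sq_div_two_le_cos (x := ψ / 2)
    nlinarith

lemma sandwich {R σ σ' δ : ℝ} (hR : 0 < R) (hσ : 0 < σ) (hσ' : 0 < σ') (hd1 : R ^ 2 / (8 * π ^ 2) ≤ δ) (hd2 : δ ≤ R ^ 2) (hl : |σ - σ'| ≤ R / 2) :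
    1 / (32 * π ^ 2) * (R + σ) ^ 2 ≤ δ + σ * σ' ∧ δ + σ * σ' ≤ 1 * (R + σ) ^ 2 := by
  rw [abs_le] at hl
  have hpi := Real.pi_gt_three
  constructor
  · rw [div_mul_eq_mul_div, one_mul, div_le_iff₀ (by positivity)]
    rw [div_le_iff₀ (by positivity)] at hd1
    have hp2 : 9 ≤ π ^ 2 := by nlinarith
    have hδ : 0 ≤ δ := by
      by_contra h
      have : δ * (8 * π ^ 2) ≤ 0 := mul_nonpos_of_nonpos_of_nonneg (not_le.1 h).le (by positivity)
      nlinarith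
    have h0 : 0 ≤ σ * σ' := by positivity
    rcases le_total R σ with h | h
    · have : σ ^ 2 / 2 ≤ σ * σ' := by nlinarith
      have : (R + σ) ^ 2 ≤ 4 * σ ^ 2 := by nlinarith
      nlinarith
    · have : (R + σ) ^ 2 ≤ 4 * R ^ 2 := by nlinarith
      nlinarith
  · nlinarith

lemma jG_bound (α β : ℝ) : ∃ C : ℝ, 0 < C ∧ ∀ t θ φ R : ℝ, 0 < t → t ≤ 1 → t ≤ R → θ ∈ Ioo 0 π → φ ∈ Ioo 0 π → |θ - φ| < R →
    (R = t ∨ R ≤ 2 * |θ - φ|) →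
    jG α β t (|Real.sin (θ / 2) * Real.sin (φ / 2)|) (Real.cos (θ / 2) * Real.cos (φ / 2)) * jV α β θ R ≤ C * (t / R) := by
  have hpi := Real.pi_gt_three
  set c : ℝ := 1 / (32 * π ^ 2) with hc
  have hc0 : 0 < c := by positivity
  refine ⟨2 * (8 * π ^ 2) * ((c ^ (-α - 1 / 2) + 1 ^ (-α - 1 / 2)) * (c ^ (-β - 1 / 2) + 1 ^ (-β - 1 / 2))), by positivity, fun t θ φ R ht ht1 htR hθ hφ hψ hor => ?_⟩
  obtain ⟨s1, c1⟩ := trig_pos hθ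
  obtain ⟨s2, c2⟩ := trig_pos hφ
  obtain ⟨l1, l2⟩ := trig_lip θ φ
  have hR : 0 < R := by linarith
  have hdef : Real.cosh (t / 2) - Real.sin (θ / 2) * Real.sin (φ / 2) - Real.cos (θ / 2) * Real.cos (φ / 2) = (Real.cosh (t / 2) - 1) + (1 - Real.cos ((θ - φ) / 2)) := by
    rw [show (θ - φ) / 2 = θ / 2 - φ / 2 by ring, Real.cos_sub]; ring
  rw [abs_of_pos (by positivity : 0 < Real.sin (θ / 2) * Real.sin (φ / 2)), jG, hdef]
  obtain ⟨b1, b2⟩ := cosh_half_bounds ht ht1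
  obtain ⟨b3, b4⟩ := cos_half_bounds (ψ := θ - φ) (by rw [abs_le]; constructor <;> linarith [hθ.1, hθ.2, hφ.1, hφ.2])
  set δ := (Real.cosh (t / 2) - 1) + (1 - Real.cos ((θ - φ) / 2)) with hδ
  have hsq : (θ - φ) ^ 2 ≤ R ^ 2 := by rw [← sq_abs]; exact pow_le_pow_left₀ (abs_nonneg _) hψ.le 2
  have htsq : t ^ 2 ≤ R ^ 2 := pow_le_pow_left₀ ht.le htR 2
  have hd2 : δ ≤ R ^ 2 := by nlinarith [sq_nonneg R]
  have hd1 : R ^ 2 / (8 * π ^ 2) ≤ δ := by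
    rcases hor with h | h
    · have : R ^ 2 / (8 * π ^ 2) ≤ t ^ 2 / 8 := by
        rw [h]; apply div_le_div_of_nonneg_left (by positivity) (by norm_num); nlinarith
      have : 0 ≤ (θ - φ) ^ 2 / (2 * π ^ 2) := by positivity
      linarith
    · have h4 : R ^ 2 ≤ 4 * (θ - φ) ^ 2 := by
        rw [← sq_abs (θ - φ)]
        have := pow_le_pow_left₀ hR.le h 2
        linarith
      have : R ^ 2 / (8 * π ^ 2) ≤ (θ - φ) ^ 2 / (2 * π ^ 2) := by
        rw [div_le_div_iff₀ (by positivity) (by positivity)]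
        have : 0 < π ^ 2 := by positivity
        nlinarith
      have : 0 ≤ t ^ 2 / 8 := by positivity
      linarith
  have hδ0 : 0 < δ := lt_of_lt_of_le (by positivity) hd1
  obtain ⟨u1, u2⟩ := sandwich hR s1 s2 hd1 hd2 (by linarith)
  obtain ⟨v1, v2⟩ := sandwich hR c1 c2 hd1 hd2 (by linarith)
  have r1 := rpow_ratio (e := -α - 1 / 2) hc0 (by positivity) u1 u2
  have r2 := rpow_ratio (e := -β - 1 / 2) hc0 (by positivity) v1 v2
  have hinv : δ⁻¹ ≤ 8 * π ^ 2 / R ^ 2 := by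
    rw [inv_le_comm₀ hδ0 (by positivity), inv_div]; exact hd1
  have hS := sinh_half_le ht ht1
  have hS0 : 0 < Real.sinh (t / 2) := Real.sinh_pos_iff.2 (by linarith)
  have hx : 0 < R + Real.sin (θ / 2) := by positivity
  have hy : 0 < R + Real.cos (θ / 2) := by positivity
  have x1 : ((R + Real.sin (θ / 2)) ^ 2) ^ (-α - 1 / 2) = ((R + Real.sin (θ / 2)) ^ (2 * α + 1))⁻¹ := by
    rw [← Real.rpow_two, ← Real.rpow_mul hx.le, ← Real.rpow_neg hx.le]; congr 1; ring
  have y1 : ((R + Real.cos (θ / 2)) ^ 2) ^ (-β - 1 / 2) = ((R + Real.cos (θ / 2)) ^ (2 * β + 1))⁻¹ := by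
    rw [← Real.rpow_two, ← Real.rpow_mul hy.le, ← Real.rpow_neg hy.le]; congr 1; ring
  rw [x1] at r1
  rw [y1] at r2
  have hX : 0 < (R + Real.sin (θ / 2)) ^ (2 * α + 1) := by positivity
  have hY : 0 < (R + Real.cos (θ / 2)) ^ (2 * β + 1) := by positivity
  have hV : 0 < jV α β θ R := by unfold jV; positivity
  calc _ ≤ (2 * t) * (8 * π ^ 2 / R ^ 2 * ((c ^ (-α - 1 / 2) + 1 ^ (-α - 1 / 2)) * ((R + Real.sin (θ / 2)) ^ (2 * α + 1))⁻¹) *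
        ((c ^ (-β - 1 / 2) + 1 ^ (-β - 1 / 2)) * ((R + Real.cos (θ / 2)) ^ (2 * β + 1))⁻¹)) * jV α β θ R := by
        gcongr
    _ = _ := by
        unfold jV
        field_simp
end

section

lemma jV_pos {α β θ R : ℝ} (hθ : θ ∈ Ioo 0 π) (hR : 0 < R) : 0 < jV α β θ R := by
  have h1 := (trig_pos hθ).1
  have h2 := (trig_pos hθ).2
  unfold jV; positivity

/-- dyadic index of a distance. -/
lemma dyadic_exists {t d : ℝ} (ht : 0 < t) (hd : 0 ≤ d) :
    ∃ k : ℕ, d < 2 ^ k * t ∧ (k = 0 ∨ 2 ^ k * t ≤ 2 * d) := by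
  have hex : ∃ k : ℕ, d < 2 ^ k * t := by
    obtain ⟨k, hk⟩ := pow_unbounded_of_one_lt (d / t) (show (1:ℝ) < 2 by norm_num)
    exact ⟨k, by rwa [div_lt_iff₀ ht] at hk⟩
  classical
  refine ⟨Nat.find hex, Nat.find_spec hex, ?_⟩
  rcases h : Nat.find hex with _ | m
  · left; rfl
  · right
    have := Nat.find_min hex (m := m) (by omega)
    push Not at this
    rw [pow_succ]; linarith

lemma jG_max {α β : ℝ} (hα : -1 < α) (hβ : -1 < β) : ∃ C > 0, ∀ (h : ℝ → ℝ≥0∞) (θ t : ℝ) (L : ℝ≥0∞), θ ∈ Ioo 0 π → 0 < t → t ≤ 1 →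
    (∀ r, 0 < r → r ≤ 2 * π → ∫⁻ φ in Ioo (θ - r) (θ + r), h φ ∂(jacobiMeasurePlus α β) ≤ L * jacobiMeasurePlus α β (Ioo (θ - r) (θ + r))) →
    ∫⁻ φ, ENNReal.ofReal (jG α β t |Real.sin (θ / 2) * Real.sin (φ / 2)| (Real.cos (θ / 2) * Real.cos (φ / 2))) * h φ ∂(jacobiMeasurePlus α β) ≤ ENNReal.ofReal C * L := by
  obtain ⟨C1, hC1, H1⟩ := jG_bound α β
  obtain ⟨C2, hC2, H2⟩ := volume_bound hα hβ
  refine ⟨C1 * C2 * 2, by positivity, ?_⟩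
  intro h θ t L hθ ht ht1 hL
  set μ := jacobiMeasurePlus α β with hμ
  set g : ℝ → ℝ≥0∞ := fun φ => ENNReal.ofReal (jG α β t |Real.sin (θ / 2) * Real.sin (φ / 2)| (Real.cos (θ / 2) * Real.cos (φ / 2))) * h φ with hg
  let A : ℕ → Set ℝ := fun k => {φ | φ ∈ Ioo 0 π ∧ |θ - φ| < 2 ^ k * t ∧ (k = 0 ∨ 2 ^ k * t ≤ 2 * |θ - φ|)}
  have hcov : Ioo 0 π ⊆ ⋃ k, A k := by
    intro φ hφ
    obtain ⟨k, h1, h2⟩ := dyadic_exists ht (abs_nonneg (θ - φ))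
    exact mem_iUnion.2 ⟨k, hφ, h1, h2⟩
  have hres : μ.restrict (Ioo 0 π) = μ := by
    rw [hμ, jacobiMeasurePlus, Measure.restrict_restrict measurableSet_Ioo, inter_self]
  have hA : ∀ k, MeasurableSet (A k) := by
    intro k
    have hc : Measurable fun φ : ℝ => |θ - φ| := by fun_prop
    refine measurableSet_Ioo.inter ((measurableSet_lt hc measurable_const).inter ?_)
    exact (MeasurableSet.const (k = 0)).union (measurableSet_le measurable_const (hc.const_mul 2))
  have hk : ∀ k, ∫⁻ φ in A k, g φ ∂μ ≤ ENNReal.ofReal (C1 * C2 * (1 / 2) ^ k) * L := by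
    intro k
    by_cases hne : (A k).Nonempty
    swap
    · rw [Set.not_nonempty_iff_eq_empty] at hne
      rw [hne]; simp
    have hp2 : (1:ℝ) ≤ 2 ^ k := one_le_pow₀ (by norm_num)
    have hR : 0 < 2 ^ k * t := by positivity
    have htR : t ≤ 2 ^ k * t := by nlinarith
    have hR2 : 2 ^ k * t ≤ 2 * π := by
      obtain ⟨φ, hφ, h1, h2⟩ := hne
      have : |θ - φ| < π := by
        rw [abs_lt]; constructor <;> linarith [hθ.1, hθ.2, hφ.1, hφ.2]
      rcases h2 with h2 | h2
      · rw [h2]; linarith [Real.pi_gt_three]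
      · linarith
    have hV := jV_pos (α := α) (β := β) hθ hR
    calc ∫⁻ φ in A k, g φ ∂μ ≤ ∫⁻ φ in A k, ENNReal.ofReal (C1 * (1 / 2) ^ k / jV α β θ (2 ^ k * t)) * h φ ∂μ := by
          refine setLIntegral_mono' (hA k) ?_
          intro φ hφ
          rw [hg]
          refine mul_le_mul_left (ENNReal.ofReal_le_ofReal ?_) _
          rw [le_div_iff₀ hV]
          have := H1 t θ φ (2 ^ k * t) ht ht1 htR hθ hφ.1 hφ.2.1 (by
            rcases hφ.2.2 with h | h
            · left; rw [h]; ring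
            · right; exact h)
          refine this.trans_eq ?_
          congr 1
          rw [one_div, inv_pow]
          field_simp
      _ = ENNReal.ofReal (C1 * (1 / 2) ^ k / jV α β θ (2 ^ k * t)) * ∫⁻ φ in A k, h φ ∂μ := lintegral_const_mul' _ _ ENNReal.ofReal_ne_top
      _ ≤ ENNReal.ofReal (C1 * (1 / 2) ^ k / jV α β θ (2 ^ k * t)) * (L * ENNReal.ofReal (C2 * jV α β θ (2 ^ k * t))) := by
          refine mul_le_mul_right ?_ _
          refine (lintegral_mono_set ?_).trans ((hL (2 ^ k * t) hR hR2).trans (mul_le_mul_right (H2 θ _ hθ hR hR2) _))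
          intro φ hφ
          have := abs_lt.1 hφ.2.1
          constructor <;> linarith
      _ = ENNReal.ofReal (C1 * C2 * (1 / 2) ^ k) * L := by
          rw [mul_comm L, ← mul_assoc, ← ENNReal.ofReal_mul (by positivity)]
          congr 2
          field_simp
  calc ∫⁻ φ, g φ ∂μ = ∫⁻ φ in Ioo 0 π, g φ ∂μ := by rw [hres]
    _ ≤ ∫⁻ φ in ⋃ k, A k, g φ ∂μ := lintegral_mono_set hcov
    _ ≤ ∑' k, ∫⁻ φ in A k, g φ ∂μ := lintegral_iUnion_le _ _
    _ ≤ ∑' k : ℕ, ENNReal.ofReal (C1 * C2 * (1 / 2) ^ k) * L := ENNReal.tsum_le_tsum hk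
    _ = ENNReal.ofReal (C1 * C2 * 2) * L := by
        rw [ENNReal.tsum_mul_right, ← ENNReal.ofReal_tsum_of_nonneg (fun k => by positivity) (summable_geometric_two.mul_left _), tsum_mul_left, tsum_geometric_two]

/-- majorant for the kernel. -/
def jK (α β t θ φ : ℝ) : ℝ := 1 + if t ≤ 1 then jG α β t |Real.sin (θ / 2) * Real.sin (φ / 2)| (Real.cos (θ / 2) * Real.cos (φ / 2)) else 0

lemma jK_max {α β : ℝ} (hα : -1 < α) (hβ : -1 < β) : ∃ C > 0, ∀ (h : ℝ → ℝ≥0∞) (θ t : ℝ) (L : ℝ≥0∞), Measurable h → θ ∈ Ioo 0 π → 0 < t →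
    (∀ r, 0 < r → r ≤ 2 * π → ∫⁻ φ in Ioo (θ - r) (θ + r), h φ ∂(jacobiMeasurePlus α β) ≤ L * jacobiMeasurePlus α β (Ioo (θ - r) (θ + r))) →
    ∫⁻ φ, ENNReal.ofReal (jK α β t θ φ) * h φ ∂(jacobiMeasurePlus α β) ≤ ENNReal.ofReal C * L := by
  have : Fact (-1 < α) := ⟨hα⟩
  have : Fact (-1 < β) := ⟨hβ⟩
  obtain ⟨C, hC, H⟩ := jG_max hα hβ
  set M := ((jacobiMeasurePlus α β) univ).toReal with hM
  have hMe : jacobiMeasurePlus α β univ = ENNReal.ofReal M := (ENNReal.ofReal_toReal (measure_ne_top _ _)).symm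
  refine ⟨M + C, by positivity, ?_⟩
  intro h θ t L hm hθ ht hL
  have hbig : ∫⁻ φ, h φ ∂(jacobiMeasurePlus α β) ≤ ENNReal.ofReal M * L := by
    have h1 := hL (2 * π) (by positivity) le_rfl
    have hres : (jacobiMeasurePlus α β).restrict (Ioo (θ - 2 * π) (θ + 2 * π)) = jacobiMeasurePlus α β := by
      rw [jacobiMeasurePlus, Measure.restrict_restrict measurableSet_Ioo]
      congr 1
      ext x; simp only [mem_inter_iff, mem_Ioo]
      have := hθ.1; have := hθ.2
      constructor
      · tauto
      · rintro ⟨h1, h2⟩; refine ⟨⟨?_, ?_⟩, h1, h2⟩ <;> linarith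
    rw [hres] at h1
    refine h1.trans ?_
    rw [mul_comm, ← hMe]
    exact mul_le_mul_left (measure_mono (subset_univ _)) _
  rw [ENNReal.ofReal_add (by positivity) hC.le, add_mul]
  by_cases ht1 : t ≤ 1
  · calc _ ≤ ∫⁻ φ, (h φ + ENNReal.ofReal (jG α β t |Real.sin (θ / 2) * Real.sin (φ / 2)| (Real.cos (θ / 2) * Real.cos (φ / 2))) * h φ) ∂(jacobiMeasurePlus α β) := by
          refine lintegral_mono fun φ => ?_
          simp only [jK, if_pos ht1]
          refine (mul_le_mul_left ENNReal.ofReal_add_le _).trans ?_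
          rw [add_mul, ENNReal.ofReal_one, one_mul]
      _ = _ := lintegral_add_left hm _
      _ ≤ _ := add_le_add hbig (H h θ t L hθ ht ht1 hL)
  · calc _ = ∫⁻ φ, h φ ∂(jacobiMeasurePlus α β) := by
          refine lintegral_congr fun φ => ?_
          simp [jK, ht1]
      _ ≤ _ := hbig.trans le_self_add

end

section

lemma jPsi_neg (α β θ : ℝ) : jPsi α β (-θ) = jPsi α β θ := by
  unfold jPsi
  rw [neg_div, Real.sin_neg, Real.cos_neg, abs_neg]

lemma jm_neg (α β : ℝ) : MeasurePreserving (fun x : ℝ => -x) (jacobiMeasure α β) (jacobiMeasure α β) := by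
  refine ⟨measurable_neg, ?_⟩
  ext s hs
  rw [Measure.map_apply measurable_neg hs, jacobiMeasure, withDensity_apply _ hs, withDensity_apply _ (measurable_neg hs),
    Measure.restrict_restrict hs, Measure.restrict_restrict (measurable_neg hs)]
  have h := (Measure.measurePreserving_neg (volume : Measure ℝ)).setLIntegral_comp_preimage_emb (MeasurableEquiv.neg ℝ).measurableEmbedding
    (fun θ => ENNReal.ofReal (jPsi α β θ ^ 2)) (s ∩ Ioo (-π) π)
  rw [← h]
  have e : (fun x : ℝ => -x) ⁻¹' s ∩ Ioo (-π) π = Neg.neg ⁻¹' (s ∩ Ioo (-π) π) := by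
    ext x; simp only [mem_inter_iff, mem_preimage, mem_Ioo]
    constructor
    · rintro ⟨h1, h2, h3⟩; exact ⟨h1, by linarith, by linarith⟩
    · rintro ⟨h1, h2, h3⟩; exact ⟨h1, by linarith, by linarith⟩
  rw [e]
  simp only [jPsi_neg]

lemma jm_ae (α β : ℝ) : ∀ᵐ x ∂(jacobiMeasure α β), x ∈ Ioo (-π) π ∧ x ≠ 0 := by
  refine (withDensity_absolutelyContinuous _ _).ae_le ?_
  filter_upwards [ae_restrict_mem (μ := volume) (s := Ioo (-π) π) measurableSet_Ioo,
    ae_restrict_of_ae (Measure.ae_ne volume (0:ℝ))] with x h1 h2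
  exact ⟨h1, h2⟩

lemma jm_restrict_Ioi (α β : ℝ) : (jacobiMeasure α β).restrict (Ioi 0) = jacobiMeasurePlus α β := by
  rw [jacobiMeasurePlus]
  refine Measure.restrict_congr_set ?_
  filter_upwards [jm_ae α β] with x hx
  apply propext
  show x ∈ Ioi 0 ↔ x ∈ Ioo 0 π
  have := hx.1.2
  simp [this]

/-- folding onto the half interval, for arbitrary functions. -/
lemma jm_fold (α β : ℝ) (F : ℝ → ℝ≥0∞) : ∫⁻ x, F x ∂(jacobiMeasure α β) =
    ∫⁻ x, F x ∂(jacobiMeasurePlus α β) + ∫⁻ x, F (-x) ∂(jacobiMeasurePlus α β) := by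
  rw [← lintegral_add_compl F (measurableSet_Ioi (a := (0:ℝ))), ← jm_restrict_Ioi]
  congr 1
  rw [← (jm_neg α β).setLIntegral_comp_preimage_emb (MeasurableEquiv.neg ℝ).measurableEmbedding F]
  congr 1
  refine Measure.restrict_congr_set ?_
  filter_upwards [jm_ae α β] with x hx
  apply propext
  show -x ∈ (Ioi (0:ℝ))ᶜ ↔ x ∈ Ioi (0:ℝ)
  simp only [mem_compl_iff, mem_Ioi, not_lt, Left.neg_nonpos_iff]
  exact ⟨fun h => lt_of_le_of_ne h hx.2.symm, le_of_lt⟩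

lemma symPhi_measurable (α β : ℝ) (n : ℕ) : Measurable (symPhi α β n) := by
  apply Continuous.measurable
  unfold symPhi trigP jacobiP
  split_ifs <;> fun_prop

section
variable {α β : ℝ} [hα : Fact (-1 < α)] [hβ : Fact (-1 < β)]

lemma symH_le (f : ℝ → ℝ) (hf : Integrable f (jacobiMeasure α β)) (t θ : ℝ) (ht : 0 < t) :
    ENNReal.ofReal |symH α β f t θ| ≤ ∫⁻ φ, ENNReal.ofReal |f φ| * ENNReal.ofReal |∑' n, jh α β t θ φ n| ∂(jacobiMeasure α β) := by
  obtain ⟨M, hM, hb⟩ := jh_bound (α := α) (β := β) ht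
  have hmeas : ∀ n, Measurable fun φ => jh α β t θ φ n := by
    intro n; unfold jh
    exact ((symPhi_measurable α β n).const_mul _).mul_const _
  have hbd : ∀ n φ, ‖jh α β t θ φ n‖ ≤ M * Real.exp (-(t / 2) * jv α β n) := fun n φ => hb t θ φ n le_rfl
  have hInt : ∀ n, Integrable (fun φ => f φ * jh α β t θ φ n) (jacobiMeasure α β) := fun n =>
    hf.mul_bdd (c := M * Real.exp (-(t / 2) * jv α β n)) (hmeas n).aestronglyMeasurable (Filter.Eventually.of_forall (hbd n))
  have hsum : Summable fun n => ∫ φ, ‖f φ * jh α β t θ φ n‖ ∂(jacobiMeasure α β) := by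
    refine Summable.of_nonneg_of_le (fun n => integral_nonneg fun _ => norm_nonneg _) (fun n => ?_)
      ((((jv_summable (α := α) (β := β) (show 0 < t / 2 by positivity)).mul_left M).mul_left (∫ φ, ‖f φ‖ ∂(jacobiMeasure α β))))
    rw [← integral_mul_const]
    refine integral_mono (hInt n).norm (hf.norm.mul_const _) fun φ => ?_
    simp only [norm_mul]
    exact mul_le_mul_of_nonneg_left (by simpa using hbd n φ) (norm_nonneg _)
  have key : symH α β f t θ = ∫ φ, ∑' n, f φ * jh α β t θ φ n ∂(jacobiMeasure α β) := by
    rw [← (hasSum_integral_of_summable_integral_norm hInt hsum).tsum_eq, symH]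
    refine tsum_congr fun n => ?_
    have : ∀ φ, f φ * jh α β t θ φ n = (Real.exp (-t * jv α β n) * symPhi α β n θ) * (f φ * symPhi α β n φ) := by
      intro φ; unfold jh; ring
    simp only [this]
    rw [integral_const_mul]
    unfold jv; ring
  rw [key, ← Real.norm_eq_abs, ofReal_norm]
  refine (enorm_integral_le_lintegral_enorm _).trans (lintegral_mono fun φ => ?_)
  simp only []
  rw [tsum_mul_left, enorm_mul, ← ofReal_norm, ← ofReal_norm, Real.norm_eq_abs, Real.norm_eq_abs]

lemma jK_abs (t θ φ : ℝ) : jK α β t |θ| φ = jK α β t θ φ := by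
  unfold jK
  rcases abs_cases θ with h | h
  · rw [h.1]
  · rw [h.1, neg_div, Real.sin_neg, Real.cos_neg, neg_mul, abs_neg]

lemma jK_neg (t θ φ : ℝ) : jK α β t θ (-φ) = jK α β t θ φ := by
  unfold jK
  rw [neg_div, Real.sin_neg, Real.cos_neg, mul_neg, abs_neg]

lemma ker_le : ∃ C : ℝ, 0 < C ∧ ∀ t θ φ, 0 < t → θ ∈ Ioo (-π) π → φ ∈ Ioo (-π) π →
    |∑' n, jh α β t θ φ n| ≤ C * jK α β t θ φ := by
  obtain ⟨C1, hC1, h1⟩ := jh_large (α := α) (β := β)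
  obtain ⟨C2, hC2, h2⟩ := jh_small (α := α) (β := β)
  refine ⟨C1 + C2, by positivity, fun t θ φ ht hθ hφ => ?_⟩
  by_cases h : t ≤ 1
  · have h3 := h2 t θ φ ht h hθ hφ
    have e : jK α β t θ φ = 1 + jG α β t |Real.sin (θ / 2) * Real.sin (φ / 2)| (Real.cos (θ / 2) * Real.cos (φ / 2)) := by
      simp [jK, h]
    rw [← e] at h3
    have : 0 ≤ jK α β t θ φ := by
      by_contra hn
      push Not at hn
      have := abs_nonneg (∑' n, jh α β t θ φ n)
      nlinarith
    nlinarith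
  · have e : jK α β t θ φ = 1 := by simp [jK, h]
    rw [e]; linarith [h1 t θ φ (by linarith)]

lemma symH_fold : ∃ C : ℝ, 0 < C ∧ ∀ (f : ℝ → ℝ), Measurable f → Integrable f (jacobiMeasure α β) → ∀ t θ : ℝ, 0 < t → θ ∈ Ioo (-π) π →
    ENNReal.ofReal |symH α β f t θ| ≤ ENNReal.ofReal C * ∫⁻ φ, ENNReal.ofReal (jK α β t |θ| φ) * (ENNReal.ofReal |f φ| + ENNReal.ofReal |f (-φ)|) ∂(jacobiMeasurePlus α β) := by
  obtain ⟨C, hC, h⟩ := ker_le (α := α) (β := β)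
  refine ⟨C, hC, fun f hfm hf t θ ht hθ => (symH_le f hf t θ ht).trans ?_⟩
  have hKm : Measurable fun φ => jK α β t θ φ := by
    unfold jK jG
    split_ifs <;> fun_prop
  calc _ ≤ ∫⁻ φ, ENNReal.ofReal C * (ENNReal.ofReal (jK α β t θ φ) * ENNReal.ofReal |f φ|) ∂(jacobiMeasure α β) := by
        refine lintegral_mono_ae ?_
        filter_upwards [jm_ae α β] with φ hφ
        rw [← mul_assoc, ← ENNReal.ofReal_mul hC.le, mul_comm (ENNReal.ofReal |f φ|)]
        exact mul_le_mul_left (ENNReal.ofReal_le_ofReal (h t θ φ ht hθ hφ.1)) _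
    _ = ENNReal.ofReal C * ∫⁻ φ, (ENNReal.ofReal (jK α β t θ φ) * ENNReal.ofReal |f φ|) ∂(jacobiMeasure α β) := lintegral_const_mul' _ _ ENNReal.ofReal_ne_top
    _ = _ := by
        rw [jm_fold, ← lintegral_add_left (by fun_prop)]
        simp only [jK_abs, jK_neg, mul_add]

end

end

section

lemma cover_weak : ∃ N : ℕ, ∀ (ν : Measure ℝ) (E : Set ℝ) (r : ℝ → ℝ) (R : ℝ) (F G : ℝ → ℝ≥0∞),
    (∀ x ∈ E, 0 < r x ∧ r x ≤ R ∧ ∫⁻ y in Ioo (x - r x) (x + r x), F y ∂ν ≤ ∫⁻ y in Ioo (x - r x) (x + r x), G y ∂ν) →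
    ∃ U, MeasurableSet U ∧ E ⊆ U ∧ ∫⁻ y in U, F y ∂ν ≤ N * ∫⁻ y, G y ∂ν := by
  obtain ⟨N, τ, hτ, hN⟩ := HasBesicovitchCovering.no_satelliteConfig (α := ℝ)
  refine ⟨N, fun ν E r R F G H => ?_⟩
  let q : Besicovitch.BallPackage E ℝ :=
    { c := fun x => x
      r := fun x => r x
      rpos := fun x => (H x x.2).1
      r_bound := R
      r_le := fun x => (H x x.2).2.1 }
  obtain ⟨s, hs, hcov⟩ := Besicovitch.exist_disjoint_covering_families hτ hN q
  have hcount : ∀ i, (s i).Countable := fun i => by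
    refine (hs i).countable_of_nonempty_interior fun j _ => ?_
    exact (Metric.nonempty_ball.2 (q.rpos j)).mono Metric.ball_subset_interior_closedBall
  have hd : ∀ i, (s i).PairwiseDisjoint fun j => Metric.ball (q.c j) (q.r j) := fun i =>
    (hs i).mono fun j => Metric.ball_subset_closedBall
  refine ⟨⋃ i, ⋃ j ∈ s i, Metric.ball (q.c j) (q.r j), ?_, ?_, ?_⟩
  · exact MeasurableSet.iUnion fun i => MeasurableSet.biUnion (hcount i) fun _ _ => measurableSet_ball
  · intro x hx
    exact hcov ⟨⟨x, hx⟩, rfl⟩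
  · calc _ ≤ ∑' i, ∫⁻ y in ⋃ j ∈ s i, Metric.ball (q.c j) (q.r j), F y ∂ν := lintegral_iUnion_le _ _
      _ ≤ ∑' _ : Fin N, ∫⁻ y, G y ∂ν := by
          refine ENNReal.tsum_le_tsum fun i => ?_
          rw [lintegral_biUnion (hcount i) (fun _ _ => measurableSet_ball) (hd i)]
          refine le_trans ?_ (setLIntegral_le_lintegral (⋃ j ∈ s i, Metric.ball (q.c j) (q.r j)) G)
          rw [lintegral_biUnion (hcount i) (fun _ _ => measurableSet_ball) (hd i)]
          refine ENNReal.tsum_le_tsum fun j => ?_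
          rw [Real.ball_eq_Ioo]
          exact (H j.1 j.1.2).2.2
      _ = _ := by rw [tsum_fintype]; simp

lemma jmPlus_restrict {α β x r : ℝ} :
    (jacobiMeasurePlus α β).restrict (Ioo (x - r) (x + r)) = (jacobiMeasure α β).restrict (Ioo (max (x - r) 0) (min (x + r) π)) := by
  rw [jacobiMeasurePlus, Measure.restrict_restrict measurableSet_Ioo, Ioo_inter_Ioo]

lemma a1_ball {α β A : ℝ} {w : ℝ → ℝ} (hA : ∀ a b : ℝ, -π ≤ a → a ≤ b → b ≤ π →
      ∫⁻ θ in Ioo a b, ENNReal.ofReal (w θ) ∂(jacobiMeasure α β) ≤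
        ENNReal.ofReal A *
          essInf (fun θ => ENNReal.ofReal (w θ)) ((jacobiMeasure α β).restrict (Ioo a b)) *
          jacobiMeasure α β (Ioo a b)) (h : ℝ → ℝ≥0∞) (hh : Measurable h) {x r L : ℝ} (hx : x ∈ Ioo 0 π) (hr : 0 < r)
    (hb : ENNReal.ofReal L * jacobiMeasurePlus α β (Ioo (x - r) (x + r)) ≤ ∫⁻ y in Ioo (x - r) (x + r), h y ∂(jacobiMeasurePlus α β)) :
    ∫⁻ y in Ioo (x - r) (x + r), ENNReal.ofReal L * ENNReal.ofReal (w y) ∂(jacobiMeasurePlus α β) ≤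
    ∫⁻ y in Ioo (x - r) (x + r), ENNReal.ofReal A * (h y * ENNReal.ofReal (w y)) ∂(jacobiMeasurePlus α β) := by
  have hu : jacobiMeasurePlus α β (Ioo (x - r) (x + r)) = jacobiMeasure α β (Ioo (max (x - r) 0) (min (x + r) π)) := by
    rw [← Measure.restrict_apply_univ, jmPlus_restrict, Measure.restrict_apply_univ]
  rw [hu, jmPlus_restrict] at hb
  rw [jmPlus_restrict, lintegral_const_mul' _ _ ENNReal.ofReal_ne_top, lintegral_const_mul' _ _ ENNReal.ofReal_ne_top]
  have hx1 := hx.1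
  have hx2 := hx.2
  have h1 := hA (max (x - r) 0) (min (x + r) π) (le_max_of_le_right (by linarith [Real.pi_pos]))
    (max_le (le_min (by linarith) (by linarith)) (le_min (by linarith) (by linarith))) (min_le_right _ _)
  set I := Ioo (max (x - r) 0) (min (x + r) π)
  set e := essInf (fun θ => ENNReal.ofReal (w θ)) ((jacobiMeasure α β).restrict I) with he
  calc _ ≤ ENNReal.ofReal L * (ENNReal.ofReal A * e * jacobiMeasure α β I) := mul_le_mul_right h1 _
    _ = ENNReal.ofReal A * (e * (ENNReal.ofReal L * jacobiMeasure α β I)) := by ring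
    _ ≤ ENNReal.ofReal A * (e * ∫⁻ y in I, h y ∂(jacobiMeasure α β)) := mul_le_mul_right (mul_le_mul_right hb _) _
    _ ≤ _ := by
        refine mul_le_mul_right ?_ _
        rw [← lintegral_const_mul _ hh]
        refine lintegral_mono_ae ?_
        filter_upwards [ae_essInf_le (μ := (jacobiMeasure α β).restrict I) (f := fun θ => ENNReal.ofReal (w θ))] with y hy
        rw [mul_comm]
        exact mul_le_mul_right hy _

lemma fold_hw {α β : ℝ} {w f : ℝ → ℝ} (hweven : ∀ θ, w (-θ) = w θ) (hf : Measurable f) :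
    ∫⁻ y, (ENNReal.ofReal |f y| + ENNReal.ofReal |f (-y)|) * ENNReal.ofReal (w y) ∂(jacobiMeasurePlus α β) ≤
      2 * ∫⁻ y, ENNReal.ofReal |f y| * ENNReal.ofReal (w y) ∂(jacobiMeasure α β) := by
  have hm : MeasurableSet {y | |f (-y)| ≤ |f y|} := measurableSet_le (by fun_prop) (by fun_prop)
  rw [jm_fold, mul_add, ← lintegral_add_compl _ hm]
  simp only [hweven]
  refine add_le_add ?_ ?_
  · rw [← lintegral_const_mul' _ _ ENNReal.ofNat_ne_top]
    refine (setLIntegral_mono' hm ?_).trans (setLIntegral_le_lintegral _ _)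
    intro y hy
    rw [← mul_assoc, two_mul]
    exact mul_le_mul_left (add_le_add le_rfl (ENNReal.ofReal_le_ofReal hy)) _
  · rw [← lintegral_const_mul' _ _ ENNReal.ofNat_ne_top]
    refine (setLIntegral_mono' hm.compl ?_).trans (setLIntegral_le_lintegral _ _)
    intro y hy
    rw [← mul_assoc, two_mul]
    simp only [mem_compl_iff, mem_ofPred_eq, not_le] at hy
    exact mul_le_mul_left (add_le_add (ENNReal.ofReal_le_ofReal hy.le) le_rfl) _

lemma fold_set {α β : ℝ} {w : ℝ → ℝ} (hweven : ∀ θ, w (-θ) = w θ) {U : Set ℝ} (hU : MeasurableSet U) :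
    ∫⁻ y in {θ | |θ| ∈ U}, ENNReal.ofReal (w y) ∂(jacobiMeasure α β) = 2 * ∫⁻ y in U, ENNReal.ofReal (w y) ∂(jacobiMeasurePlus α β) := by
  have hV : MeasurableSet {θ : ℝ | |θ| ∈ U} := measurable_abs hU
  have hae : ∀ᵐ x ∂(jacobiMeasurePlus α β), x ∈ Ioo 0 π := ae_restrict_mem measurableSet_Ioo
  rw [← lintegral_indicator hV, jm_fold, ← lintegral_indicator hU, two_mul]
  congr 1
  · refine lintegral_congr_ae ?_
    filter_upwards [hae] with x hx
    have e : x ∈ {θ : ℝ | |θ| ∈ U} ↔ x ∈ U := by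
      change |x| ∈ U ↔ x ∈ U
      rw [abs_of_pos hx.1]
    by_cases hx' : x ∈ U
    · rw [indicator_of_mem hx', indicator_of_mem (e.2 hx')]
    · rw [indicator_of_notMem hx', indicator_of_notMem (fun h => hx' (e.1 h))]
  · refine lintegral_congr_ae ?_
    filter_upwards [hae] with x hx
    have e : -x ∈ {θ : ℝ | |θ| ∈ U} ↔ x ∈ U := by
      change |-x| ∈ U ↔ x ∈ U
      rw [abs_neg, abs_of_pos hx.1]
    by_cases hx' : x ∈ U
    · rw [indicator_of_mem hx', indicator_of_mem (e.2 hx'), hweven]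
    · rw [indicator_of_notMem hx', indicator_of_notMem (fun h => hx' (e.1 h))]

end

section

theorem symHStar_weak11' (α β : ℝ) (hα : -1 < α) (hβ : -1 < β)
    (w : ℝ → ℝ) (hweven : ∀ θ, w (-θ) = w θ) (hw : IsA1Weight α β w) :
    ∃ C : ℝ, 0 < C ∧ ∀ f : ℝ → ℝ, Measurable f →
      (∫⁻ θ, ENNReal.ofReal |f θ| * ENNReal.ofReal (w θ) ∂(jacobiMeasure α β)) < ∞ →
      ∀ l : ℝ, 0 < l →
        ∫⁻ θ in {θ | ENNReal.ofReal l < symHStar α β f θ},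
            ENNReal.ofReal (w θ) ∂(jacobiMeasure α β) ≤
          ENNReal.ofReal C / ENNReal.ofReal l *
            ∫⁻ θ, ENNReal.ofReal |f θ| * ENNReal.ofReal (w θ) ∂(jacobiMeasure α β) := by
  have : Fact (-1 < α) := ⟨hα⟩
  have : Fact (-1 < β) := ⟨hβ⟩
  obtain ⟨-, A, hA⟩ := hw
  obtain ⟨C1, hC1, h1⟩ := symH_fold (α := α) (β := β)
  obtain ⟨C2, hC2, h2⟩ := jK_max hα hβ
  obtain ⟨N, hN⟩ := cover_weak
  have hres : (jacobiMeasure α β).restrict (Ioo (-π) π) = jacobiMeasure α β := by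
    refine Measure.restrict_eq_self_of_ae_mem ?_
    filter_upwards [jm_ae α β] with x hx using hx.1
  have hfull := hA (-π) π le_rfl (by linarith [Real.pi_pos]) le_rfl
  rw [hres] at hfull
  refine ⟨4 * N * |A| * C1 * C2 + 1, by positivity, fun f hf hfw l hl => ?_⟩
  set e := essInf (fun θ => ENNReal.ofReal (w θ)) (jacobiMeasure α β) with he
  by_cases he0 : e = 0
  · rw [he0, mul_zero, zero_mul] at hfull
    exact ((setLIntegral_le_lintegral _ _).trans hfull).trans zero_le
  have hInt : Integrable f (jacobiMeasure α β) := by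
    refine ⟨hf.aestronglyMeasurable, ?_⟩
    have h3 : e * ∫⁻ θ, ENNReal.ofReal |f θ| ∂(jacobiMeasure α β) < ∞ := by
      refine lt_of_le_of_lt ?_ hfw
      rw [← lintegral_const_mul _ (by fun_prop)]
      refine lintegral_mono_ae ?_
      filter_upwards [ae_essInf_le (μ := jacobiMeasure α β) (f := fun θ => ENNReal.ofReal (w θ))] with y hy
      rw [mul_comm]
      exact mul_le_mul_right hy _
    rw [hasFiniteIntegral_iff_norm]
    simp only [Real.norm_eq_abs]
    exact ENNReal.lt_top_of_mul_ne_top_right h3.ne he0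
  set h : ℝ → ℝ≥0∞ := fun φ => ENNReal.ofReal |f φ| + ENNReal.ofReal |f (-φ)| with hh
  have hhm : Measurable h := by fun_prop
  set L : ℝ := l / (C1 * C2) with hLdef
  have hLpos : 0 < L := by positivity
  let E : Set ℝ := {x | x ∈ Ioo 0 π ∧ ∃ r, 0 < r ∧ r ≤ 2 * π ∧
    ENNReal.ofReal L * jacobiMeasurePlus α β (Ioo (x - r) (x + r)) ≤ ∫⁻ y in Ioo (x - r) (x + r), h y ∂(jacobiMeasurePlus α β)}
  have hr : ∀ x, ∃ r, x ∈ E → (0 < r ∧ r ≤ 2 * π ∧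
    ENNReal.ofReal L * jacobiMeasurePlus α β (Ioo (x - r) (x + r)) ≤ ∫⁻ y in Ioo (x - r) (x + r), h y ∂(jacobiMeasurePlus α β)) := by
    intro x
    by_cases hx : x ∈ E
    · obtain ⟨r, hr⟩ := hx.2
      exact ⟨r, fun _ => hr⟩
    · exact ⟨0, fun h => absurd h hx⟩
  choose r hr using hr
  obtain ⟨U, hUm, hEU, hU⟩ := hN (jacobiMeasurePlus α β) E r (2 * π) (fun y => ENNReal.ofReal L * ENNReal.ofReal (w y))
    (fun y => ENNReal.ofReal A * (h y * ENNReal.ofReal (w y))) (fun x hx =>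
      ⟨(hr x hx).1, (hr x hx).2.1, a1_ball hA h hhm hx.1 (hr x hx).1 (hr x hx).2.2⟩)
  rw [lintegral_const_mul' _ _ ENNReal.ofReal_ne_top, lintegral_const_mul' _ _ ENNReal.ofReal_ne_top] at hU
  have hhw := fold_hw (α := α) (β := β) hweven hf
  have hsub : {θ | ENNReal.ofReal l < symHStar α β f θ} ≤ᵐ[jacobiMeasure α β] {θ | |θ| ∈ U} := by
    filter_upwards [jm_ae α β] with θ hθ hl'
    change |θ| ∈ U
    apply hEU
    have hθ0 : |θ| ∈ Ioo 0 π := ⟨abs_pos.2 hθ.2, abs_lt.2 ⟨hθ.1.1, hθ.1.2⟩⟩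
    refine ⟨hθ0, ?_⟩
    by_contra hcon
    push Not at hcon
    have hl2 : ENNReal.ofReal l < symHStar α β f θ := hl'
    simp only [symHStar, lt_iSup_iff] at hl2
    obtain ⟨t, ht, hlt⟩ := hl2
    have h3 := h1 f hf hInt t θ ht hθ.1
    have h4 := h2 h |θ| t (ENNReal.ofReal L) hhm hθ0 ht (fun r hr hr2 => (hcon r hr hr2).le)
    have h5 := hlt.trans_le (h3.trans (mul_le_mul_right h4 _))
    rw [← ENNReal.ofReal_mul hC2.le, ← ENNReal.ofReal_mul hC1.le] at h5
    have : C1 * (C2 * L) = l := by rw [hLdef]; field_simp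
    rw [this] at h5
    exact lt_irrefl _ h5
  set J := ∫⁻ θ, ENNReal.ofReal |f θ| * ENNReal.ofReal (w θ) ∂(jacobiMeasure α β) with hJ
  have hW : ∫⁻ y in U, ENNReal.ofReal (w y) ∂(jacobiMeasurePlus α β) ≤ (ENNReal.ofReal L)⁻¹ * (N * (ENNReal.ofReal |A| * (2 * J))) := by
    have hL0 : ENNReal.ofReal L ≠ 0 := by simpa using hLpos
    rw [← ENNReal.mul_le_iff_le_inv hL0 ENNReal.ofReal_ne_top]
    exact hU.trans (mul_le_mul_right (mul_le_mul' (ENNReal.ofReal_le_ofReal (le_abs_self A)) hhw) _)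
  calc _ ≤ ∫⁻ θ in {θ | |θ| ∈ U}, ENNReal.ofReal (w θ) ∂(jacobiMeasure α β) := lintegral_mono_set' hsub
    _ = 2 * ∫⁻ y in U, ENNReal.ofReal (w y) ∂(jacobiMeasurePlus α β) := fold_set hweven hUm
    _ ≤ 2 * ((ENNReal.ofReal L)⁻¹ * (N * (ENNReal.ofReal |A| * (2 * J)))) := mul_le_mul_right hW _
    _ = ENNReal.ofReal (4 * N * |A| * C1 * C2) / ENNReal.ofReal l * J := by
        have e2 : (2 : ℝ≥0∞) = ENNReal.ofReal 2 := by simp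
        have e3 : (N : ℝ≥0∞) = ENNReal.ofReal N := by simp
        rw [← ENNReal.ofReal_inv_of_pos hLpos, e3, e2, ← mul_assoc (ENNReal.ofReal |A|), ← mul_assoc, ← mul_assoc, ← mul_assoc,
          ← ENNReal.ofReal_mul (abs_nonneg A), ← ENNReal.ofReal_mul (by norm_num), ← ENNReal.ofReal_mul (by positivity),
          ← ENNReal.ofReal_mul (by positivity), ← ENNReal.ofReal_div_of_pos hl]
        congr 2
        rw [hLdef]
        field_simp
        ring
    _ ≤ _ := by
        refine mul_le_mul_left (ENNReal.div_le_div_right (ENNReal.ofReal_le_ofReal (by linarith)) _) _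

end

/-- Theorem (weighted weak type (1,1) of the symmetrized Jacobi–Poisson maximal operator). -/
theorem symHStar_weak11 (α β : ℝ) (hα : -1 < α) (hβ : -1 < β)
    (w : ℝ → ℝ) (hweven : ∀ θ, w (-θ) = w θ) (hw : IsA1Weight α β w) :
    ∃ C : ℝ, 0 < C ∧ ∀ f : ℝ → ℝ, Measurable f →
      (∫⁻ θ, ENNReal.ofReal |f θ| * ENNReal.ofReal (w θ) ∂(jacobiMeasure α β)) < ∞ →
      ∀ l : ℝ, 0 < l →
        ∫⁻ θ in {θ | ENNReal.ofReal l < symHStar α β f θ},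
            ENNReal.ofReal (w θ) ∂(jacobiMeasure α β) ≤
          ENNReal.ofReal C / ENNReal.ofReal l *
            ∫⁻ θ, ENNReal.ofReal |f θ| * ENNReal.ofReal (w θ) ∂(jacobiMeasure α β) := by
  exact symHStar_weak11' α β hα hβ w hweven hw
end
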